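/- arXiv:2406.04544 — 3 statements merged into one kernel-verified Lean document; each statement's English description precedes it below -/
import Mathlib

section
/- Let f(x,y) = y² − sin(e^{1/x} π) e^{−1/x²} for x ≠ 0 and f(0,y) = y². Then f is smooth near the origin in ℝ², vanishes to second order at the origin, and 1/ln|f| belongs to W^{1,1} in a neighborhood of the origin. -/
open MeasureTheory

/-!
Write `f = y² - u(x)`. Off `f = 0` the gradient of `1 / log |f|` is `∇f` times the derivative of
`1 / log |t|` at `f`; it is the weak gradient as soon as it is integrable, because smooth functions
of `1 / log |f|` vanishing near `0` are classically differentiable and approximate it.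

Integrability is checked on vertical slices. There `1 / log |t|` has bounded variation near `0`,
which takes care of `∂f/∂y`, and the factorization `y² - u = (y - √u)(y + √u)` bounds the slice
integral of the other component by a constant times `|u'| / √|u|`. Substituting `t = e^{1/x} π`,
the integrability of this ratio reduces to that of `1 / ((1 + t²) √|sin t|)` on the line: the
factor `1 + t²` lost in the substitution is absorbed by `e^{-1/(2x²)}`.
-/

open Set Filter
open scoped Topology ContDiff ENNReal

section FlatFunctions

/-- The algebra of functions of at most exponential growth in `1 / |x|`: these are the functions
that become flat at the origin after multiplication by `e^{-1/x²}`. -/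
def expInvGrowth : Subalgebra ℝ (ℝ → ℝ) where
  carrier := {q | ∃ C N : ℝ, ∀ x, |q x| ≤ C * Real.exp (N * |x|⁻¹)}
  mul_mem' := by
    rintro p q ⟨C, N, hp⟩ ⟨C', N', hq⟩
    refine ⟨C * C', N + N', fun x ↦ ?_⟩
    calc |p x * q x| = |p x| * |q x| := abs_mul _ _
      _ ≤ C * Real.exp (N * |x|⁻¹) * (C' * Real.exp (N' * |x|⁻¹)) :=
        mul_le_mul (hp x) (hq x) (abs_nonneg _) ((abs_nonneg _).trans (hp x))
      _ = C * C' * Real.exp ((N + N') * |x|⁻¹) := by rw [add_mul, Real.exp_add]; ring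
  add_mem' := by
    rintro p q ⟨C, N, hp⟩ ⟨C', N', hq⟩
    have hC : 0 ≤ C := by simpa using (abs_nonneg _).trans (hp 0)
    have hC' : 0 ≤ C' := by simpa using (abs_nonneg _).trans (hq 0)
    refine ⟨C + C', max N N', fun x ↦ ?_⟩
    calc |p x + q x| ≤ |p x| + |q x| := abs_add_le _ _
      _ ≤ C * Real.exp (N * |x|⁻¹) + C' * Real.exp (N' * |x|⁻¹) := add_le_add (hp x) (hq x)
      _ ≤ C * Real.exp (max N N' * |x|⁻¹) + C' * Real.exp (max N N' * |x|⁻¹) := by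
        gcongr
        exacts [le_max_left _ _, le_max_right _ _]
      _ = (C + C') * Real.exp (max N N' * |x|⁻¹) := by ring
  algebraMap_mem' c := ⟨|c|, 0, fun x ↦ by simp⟩

lemma exists_abs_mul_exp_neg_le {q : ℝ → ℝ} (hq : q ∈ expInvGrowth) {ε : ℝ} (hε : 0 < ε) :
    ∃ C, ∀ x, |q x| * Real.exp (-(ε * (x⁻¹) ^ 2)) ≤ C := by
  obtain ⟨C, N, hb⟩ := hq
  have hC : 0 ≤ C := by simpa using (abs_nonneg _).trans (hb 0)
  refine ⟨C * Real.exp (N ^ 2 / (4 * ε)), fun x ↦ ?_⟩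
  have hquad : N * |x|⁻¹ + -(ε * (x⁻¹) ^ 2) ≤ N ^ 2 / (4 * ε) := by
    rw [le_div_iff₀ (by positivity), ← sq_abs x⁻¹, abs_inv]
    nlinarith [sq_nonneg (N - 2 * ε * |x|⁻¹)]
  calc |q x| * Real.exp (-(ε * (x⁻¹) ^ 2))
      ≤ C * Real.exp (N * |x|⁻¹) * Real.exp (-(ε * (x⁻¹) ^ 2)) := by gcongr; exact hb x
    _ = C * Real.exp (N * |x|⁻¹ + -(ε * (x⁻¹) ^ 2)) := by rw [mul_assoc, Real.exp_add]
    _ ≤ C * Real.exp (N ^ 2 / (4 * ε)) := by gcongr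

lemma expNegInvGlue_sq_of_ne_zero {x : ℝ} (hx : x ≠ 0) :
    expNegInvGlue (x ^ 2) = Real.exp (-(x⁻¹) ^ 2) := by
  rw [expNegInvGlue, if_neg (not_le.2 (by positivity)), inv_pow]

lemma hasDerivAt_mul_expNegInvGlue_sq {q : ℝ → ℝ} {q' x : ℝ} (hx : x ≠ 0)
    (hq : HasDerivAt q q' x) :
    HasDerivAt (fun x ↦ q x * expNegInvGlue (x ^ 2))
      ((q' + q x * (2 * x⁻¹ ^ 3)) * expNegInvGlue (x ^ 2)) x := by
  have hexp : HasDerivAt (fun x : ℝ ↦ Real.exp (-(x⁻¹) ^ 2))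
      (Real.exp (-(x⁻¹) ^ 2) * (2 * x⁻¹ ^ 3)) x := by
    refine ((hasDerivAt_inv hx).fun_pow 2).fun_neg.exp.congr_deriv ?_
    push_cast
    ring
  have hglue : (fun x : ℝ ↦ expNegInvGlue (x ^ 2)) =ᶠ[𝓝 x] fun x ↦ Real.exp (-(x⁻¹) ^ 2) :=
    (eventually_ne_nhds hx).mono fun _ ↦ expNegInvGlue_sq_of_ne_zero
  refine (hq.mul (hexp.congr_of_eventuallyEq hglue)).congr_deriv ?_
  rw [expNegInvGlue_sq_of_ne_zero hx]
  ring

lemma hasDerivAt_mul_expNegInvGlue_sq_zero {q : ℝ → ℝ}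
    (hq : (fun x ↦ x⁻¹ * (x⁻¹ * q x)) ∈ expInvGrowth) :
    HasDerivAt (fun x ↦ q x * expNegInvGlue (x ^ 2)) 0 0 := by
  obtain ⟨C, hC⟩ := exists_abs_mul_exp_neg_le hq one_pos
  have hbound (x : ℝ) : ‖q x * expNegInvGlue (x ^ 2)‖ ≤ C * ‖x ^ 2‖ := by
    rcases eq_or_ne x 0 with rfl | hx
    · simp
    calc ‖q x * expNegInvGlue (x ^ 2)‖
        = |x⁻¹ * (x⁻¹ * q x)| * Real.exp (-(1 * (x⁻¹) ^ 2)) * ‖x ^ 2‖ := by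
          rw [expNegInvGlue_sq_of_ne_zero hx, ← Real.norm_eq_abs, norm_mul, norm_mul, norm_mul,
            norm_inv, norm_pow, one_mul, Real.norm_of_nonneg (Real.exp_nonneg _)]
          field_simp
      _ ≤ C * ‖x ^ 2‖ := by gcongr; exact hC x
  have hsq : (fun x ↦ q x * expNegInvGlue (x ^ 2)) =O[𝓝 0] fun x ↦ x ^ 2 :=
    .of_bound C (.of_forall hbound)
  simpa [hasDerivAt_iff_isLittleO] using
    hsq.trans_isLittleO (Asymptotics.isLittleO_pow_id one_lt_two)

theorem contDiff_mul_expNegInvGlue_sq {A : Subalgebra ℝ (ℝ → ℝ)} (hA : A ≤ expInvGrowth)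
    (hinv : (fun x ↦ x⁻¹) ∈ A)
    (hderiv : ∀ q ∈ A, ∃ q' ∈ A, ∀ x ≠ 0, HasDerivAt q (q' x) x) {q : ℝ → ℝ} (hq : q ∈ A) :
    ContDiff ℝ ∞ fun x ↦ q x * expNegInvGlue (x ^ 2) := by
  have hclosed : ∀ q ∈ A, ∃ r ∈ A, ∀ x,
      HasDerivAt (fun x ↦ q x * expNegInvGlue (x ^ 2)) (r x * expNegInvGlue (x ^ 2)) x := by
    intro q hq
    obtain ⟨q', hq', hd⟩ := hderiv q hq
    refine ⟨_, A.add_mem hq' (A.mul_mem hq (A.smul_mem (A.pow_mem hinv 3) 2)), fun x ↦ ?_⟩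
    rcases eq_or_ne x 0 with rfl | hx
    · simpa using
        hasDerivAt_mul_expNegInvGlue_sq_zero (hA (A.mul_mem hinv (A.mul_mem hinv hq)))
    · exact hasDerivAt_mul_expNegInvGlue_sq hx (hd x hx)
  refine contDiff_infty.2 fun n ↦ ?_
  induction n generalizing q with
  | zero =>
    obtain ⟨r, -, hd⟩ := hclosed q hq
    exact contDiff_zero.2 (continuous_iff_continuousAt.2 fun x ↦ (hd x).continuousAt)
  | succ n ih =>
    obtain ⟨r, hr, hd⟩ := hclosed q hq
    push_cast
    refine contDiff_succ_iff_deriv.2 ⟨fun x ↦ (hd x).differentiableAt, by simp, ?_⟩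
    rw [funext fun x ↦ (hd x).deriv]
    exact ih hr

lemma exists_hasDerivAt_of_mem_adjoin {𝕜 : Type*} [NontriviallyNormedField 𝕜] {s : Set (𝕜 → 𝕜)}
    {U : Set 𝕜} (hs : ∀ q ∈ s, ∃ q' ∈ Algebra.adjoin 𝕜 s, ∀ x ∈ U, HasDerivAt q (q' x) x)
    {q : 𝕜 → 𝕜} (hq : q ∈ Algebra.adjoin 𝕜 s) :
    ∃ q' ∈ Algebra.adjoin 𝕜 s, ∀ x ∈ U, HasDerivAt q (q' x) x := by
  induction hq using Algebra.adjoin_induction with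
  | mem q hq => exact hs q hq
  | algebraMap c => exact ⟨0, zero_mem _, fun x _ ↦ hasDerivAt_const x c⟩
  | add p q _ _ ihp ihq =>
    obtain ⟨p', hp', hdp⟩ := ihp
    obtain ⟨q', hq', hdq⟩ := ihq
    exact ⟨p' + q', add_mem hp' hq', fun x hx ↦ (hdp x hx).add (hdq x hx)⟩
  | mul p q hp hq ihp ihq =>
    obtain ⟨p', hp', hdp⟩ := ihp
    obtain ⟨q', hq', hdq⟩ := ihq
    exact ⟨p' * q + p * q', add_mem (mul_mem hp' hq) (mul_mem hp hq'),
      fun x hx ↦ (hdp x hx).mul (hdq x hx)⟩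

end FlatFunctions

section FlatSine

/-- The phase `e^{1/x} π` of the oscillation. -/
noncomputable def phase (x : ℝ) : ℝ := Real.exp x⁻¹ * Real.pi

/-- The flat oscillation `sin (e^{1/x} π) e^{-1/x²}`, extended by `0` to the origin; this is built
into `expNegInvGlue`, which vanishes at `0`. -/
noncomputable def flatSine (x : ℝ) : ℝ := Real.sin (phase x) * expNegInvGlue (x ^ 2)

/-- The algebra generated by the functions occurring in the iterated derivatives of
`sin (e^{1/x} π)`. -/
noncomputable def phaseAlgebra : Subalgebra ℝ (ℝ → ℝ) :=
  Algebra.adjoin ℝ {fun x ↦ x⁻¹, phase, fun x ↦ Real.sin (phase x), fun x ↦ Real.cos (phase x)}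

lemma inv_mem_phaseAlgebra : (fun x ↦ x⁻¹) ∈ phaseAlgebra :=
  Algebra.subset_adjoin (.inl rfl)

lemma phase_mem_phaseAlgebra : phase ∈ phaseAlgebra :=
  Algebra.subset_adjoin (.inr (.inl rfl))

lemma sin_phase_mem_phaseAlgebra : (fun x ↦ Real.sin (phase x)) ∈ phaseAlgebra :=
  Algebra.subset_adjoin (.inr (.inr (.inl rfl)))

lemma cos_phase_mem_phaseAlgebra : (fun x ↦ Real.cos (phase x)) ∈ phaseAlgebra :=
  Algebra.subset_adjoin (.inr (.inr (.inr rfl)))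

lemma phase_pos (x : ℝ) : 0 < phase x := mul_pos (Real.exp_pos _) Real.pi_pos

lemma phaseAlgebra_le_expInvGrowth : phaseAlgebra ≤ expInvGrowth := by
  refine Algebra.adjoin_le ?_
  rintro _ (rfl | rfl | rfl | rfl)
  · refine ⟨1, 1, fun x ↦ ?_⟩
    rw [abs_inv, one_mul, one_mul]
    linarith [Real.add_one_le_exp |x|⁻¹]
  · refine ⟨Real.pi, 1, fun x ↦ ?_⟩
    rw [abs_of_pos (phase_pos x), phase, mul_comm, one_mul, ← abs_inv]
    gcongr
    exact le_abs_self _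
  · exact ⟨1, 0, fun x ↦ by simpa using Real.abs_sin_le_one _⟩
  · exact ⟨1, 0, fun x ↦ by simpa using Real.abs_cos_le_one _⟩

lemma hasDerivAt_phase {x : ℝ} (hx : x ≠ 0) : HasDerivAt phase (-(phase x * x⁻¹ ^ 2)) x := by
  refine ((hasDerivAt_inv hx).exp.mul_const Real.pi).congr_deriv ?_
  rw [phase]
  ring

lemma exists_hasDerivAt_of_mem_phaseAlgebra {q : ℝ → ℝ} (hq : q ∈ phaseAlgebra) :
    ∃ q' ∈ phaseAlgebra, ∀ x ≠ 0, HasDerivAt q (q' x) x := by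
  have hphase' : (fun x ↦ -(phase x * x⁻¹ ^ 2)) ∈ phaseAlgebra :=
    neg_mem (mul_mem phase_mem_phaseAlgebra (pow_mem inv_mem_phaseAlgebra 2))
  refine exists_hasDerivAt_of_mem_adjoin (U := {0}ᶜ) ?_ hq
  rintro _ (rfl | rfl | rfl | rfl)
  · exact ⟨_, neg_mem (pow_mem inv_mem_phaseAlgebra 2), fun x hx ↦
      (hasDerivAt_inv hx).congr_deriv (by simp)⟩
  · exact ⟨_, hphase', fun x hx ↦ hasDerivAt_phase hx⟩
  · exact ⟨_, mul_mem cos_phase_mem_phaseAlgebra hphase', fun x hx ↦ (hasDerivAt_phase hx).sin⟩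
  · exact ⟨_, mul_mem (neg_mem sin_phase_mem_phaseAlgebra) hphase', fun x hx ↦
      (hasDerivAt_phase hx).cos⟩

lemma contDiff_flatSine : ContDiff ℝ ∞ flatSine :=
  contDiff_mul_expNegInvGlue_sq phaseAlgebra_le_expInvGrowth inv_mem_phaseAlgebra
    (fun _ ↦ exists_hasDerivAt_of_mem_phaseAlgebra) sin_phase_mem_phaseAlgebra

lemma deriv_flatSine_zero : deriv flatSine 0 = 0 :=
  (hasDerivAt_mul_expNegInvGlue_sq_zero (phaseAlgebra_le_expInvGrowth
    (mul_mem inv_mem_phaseAlgebra (mul_mem inv_mem_phaseAlgebra sin_phase_mem_phaseAlgebra)))).deriv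

lemma deriv_flatSine {x : ℝ} (hx : x ≠ 0) :
    deriv flatSine x = (Real.cos (phase x) * -(phase x * x⁻¹ ^ 2) +
      Real.sin (phase x) * (2 * x⁻¹ ^ 3)) * expNegInvGlue (x ^ 2) :=
  (hasDerivAt_mul_expNegInvGlue_sq hx (hasDerivAt_phase hx).sin).deriv

lemma flatSine_eq_ite (x : ℝ) : flatSine x = if x = 0 then 0 else
    Real.sin (Real.exp (1 / x) * Real.pi) * Real.exp (-(1 / x ^ 2)) := by
  split_ifs with hx
  · simp [flatSine, hx]
  · rw [flatSine, phase, expNegInvGlue_sq_of_ne_zero hx, inv_pow, one_div, one_div]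

lemma abs_flatSine_le {x : ℝ} (hx : |x| ≤ 1 / 4) : |flatSine x| ≤ 1 / 16 := by
  rcases eq_or_ne x 0 with rfl | h0
  · simp [flatSine]
  have hinv : 4 ≤ |x|⁻¹ := by
    rw [le_inv_comm₀ (by norm_num) (abs_pos.2 h0)]
    linarith
  have hsq : 16 ≤ (x⁻¹) ^ 2 := by
    rw [← sq_abs, abs_inv]
    nlinarith
  calc |flatSine x| = |Real.sin (phase x)| * Real.exp (-(x⁻¹) ^ 2) := by
        rw [flatSine, expNegInvGlue_sq_of_ne_zero h0, abs_mul, Real.abs_exp]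
    _ ≤ 1 * (16 : ℝ)⁻¹ := by
      rw [Real.exp_neg]
      gcongr
      · exact Real.abs_sin_le_one _
      · linarith [Real.add_one_le_exp ((x⁻¹) ^ 2)]
    _ = 1 / 16 := by norm_num

lemma phase_injective : Function.Injective phase := fun _ _ h ↦
  inv_injective (Real.exp_injective (mul_right_cancel₀ Real.pi_ne_zero h))

lemma ae_sin_phase_ne_zero : ∀ᵐ x, Real.sin (phase x) ≠ 0 := by
  have hcountable : {x | Real.sin (phase x) = 0}.Countable :=
    ((countable_range fun n : ℤ ↦ n * Real.pi).preimage_of_injOn phase_injective.injOn).mono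
      fun x hx ↦ Real.sin_eq_zero_iff.1 hx
  exact hcountable.ae_notMem volume

lemma ae_flatSine_ne_zero : ∀ᵐ x, flatSine x ≠ 0 := by
  filter_upwards [ae_sin_phase_ne_zero, Measure.ae_ne volume 0] with x hsin hx
  exact mul_ne_zero hsin (expNegInvGlue.pos_of_pos (by positivity)).ne'

end FlatSine

section WeakDerivative

lemma hasDerivAt_mul_one_sub_comp_mul {b : ℝ → ℝ} {c t : ℝ} (hc : c ≠ 0)
    (hb : DifferentiableAt ℝ (fun s ↦ s * b s) (c * t)) :
    HasDerivAt (fun s ↦ s * (1 - b (c * s))) (1 - deriv (fun s ↦ s * b s) (c * t)) t := by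
  have hscaled := hb.hasDerivAt.comp t (hasDerivAt_const_mul c)
  refine (((hasDerivAt_id t).sub (hscaled.const_mul c⁻¹)).congr_of_eventuallyEq
    (.of_forall fun s ↦ ?_)).congr_deriv ?_
  · simp only [id_eq, Function.comp_apply, Pi.sub_apply]
    field_simp
  · field_simp

lemma exists_smooth_truncation : ∃ S : ℕ → ℝ → ℝ, (∀ n, ContDiff ℝ 1 (S n)) ∧
    (∀ n, S n =ᶠ[𝓝 0] 0) ∧ (∀ t ≠ 0, ∀ᶠ n in atTop, S n =ᶠ[𝓝 t] id) ∧
    (∀ n t, |S n t| ≤ |t|) ∧ ∃ C, ∀ n t, |deriv (S n) t| ≤ C := by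
  let b : ContDiffBump (0 : ℝ) := ⟨1, 2, one_pos, one_lt_two⟩
  let k (t : ℝ) : ℝ := t * b t
  have hk : ContDiff ℝ 1 k := contDiff_id.mul b.contDiff
  obtain ⟨C, hC⟩ := (b.hasCompactSupport.mul_left (f := id)).deriv.exists_bound_of_continuous
    (hk.continuous_deriv le_rfl)
  have hscale (n : ℕ) (t : ℝ) : Tendsto (fun s : ℝ ↦ (n + 1) * s) (𝓝 t) (𝓝 ((n + 1) * t)) :=
    (continuous_const_mul (n + 1 : ℝ)).tendsto t
  have hderiv (n : ℕ) (t : ℝ) : deriv (fun s ↦ s * (1 - b ((n + 1) * s))) t =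
      1 - deriv k ((n + 1) * t) :=
    (hasDerivAt_mul_one_sub_comp_mul (by positivity)
      (hk.differentiable one_ne_zero ((n + 1) * t))).deriv
  refine ⟨fun n t ↦ t * (1 - b ((n + 1) * t)), fun n ↦ ?_, fun n ↦ ?_, fun t ht ↦ ?_,
    fun n t ↦ ?_, 1 + C, fun n t ↦ ?_⟩
  · exact contDiff_id.mul (contDiff_const.sub (b.contDiff.comp (contDiff_const.mul contDiff_id)))
  · have hb : ∀ᶠ t in 𝓝 ((n + 1 : ℝ) * 0), b t = 1 := by
      rw [mul_zero]
      exact b.eventuallyEq_one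
    filter_upwards [(hscale n 0).eventually hb] with s hs
    simp [hs]
  · have hlarge : Tendsto (fun n : ℕ ↦ |(n + 1 : ℝ) * t|) atTop atTop := by
      simp_rw [abs_mul]
      exact (tendsto_abs_atTop_atTop.comp (tendsto_atTop_add_const_right _ _
        tendsto_natCast_atTop_atTop)).atTop_mul_const (abs_pos.2 ht)
    filter_upwards [hlarge.eventually_gt_atTop 2] with n hn
    filter_upwards [(hscale n t).abs.eventually_const_lt hn] with s hs
    simp [b.zero_of_le_dist (x := (n + 1) * s) (by simpa using hs.le)]
  · rw [abs_mul]
    exact mul_le_of_le_one_right (abs_nonneg t) (abs_le.2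
      ⟨by linarith [b.le_one (x := (n + 1) * t)], by linarith [b.nonneg (x := (n + 1) * t)]⟩)
  · rw [hderiv n t]
    calc |1 - deriv k ((n + 1) * t)| ≤ |1| + |deriv k ((n + 1) * t)| := abs_sub _ _
      _ ≤ 1 + C := by rw [abs_one]; gcongr; exact hC _

lemma integrable_mul_of_tsupport_subset {X : Type*} [TopologicalSpace X] [MeasurableSpace X]
    [OpensMeasurableSpace X] {μ : Measure X} {η g : X → ℝ} {V : Set X} (hη : Continuous η)
    (hc : HasCompactSupport η) (hηV : tsupport η ⊆ V) (hg : IntegrableOn g V μ) :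
    Integrable (fun p ↦ η p * g p) μ := by
  obtain ⟨M, hM⟩ := hc.exists_bound_of_continuous hη
  have hon : IntegrableOn (fun p ↦ η p * g p) V μ :=
    hg.bdd_mul hη.aestronglyMeasurable (.of_forall hM)
  exact (integrableOn_iff_integrable_of_support_subset
    ((Function.support_mul_subset_left η g).trans ((subset_tsupport η).trans hηV))).1 hon

lemma setIntegral_mul_eq_integral_of_tsupport_subset {X : Type*} [TopologicalSpace X]
    [MeasurableSpace X] {μ : Measure X} {η g : X → ℝ} {V : Set X} (hηV : tsupport η ⊆ V) :
    ∫ p in V, η p * g p ∂μ = ∫ p, η p * g p ∂μ :=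
  setIntegral_eq_integral_of_forall_compl_eq_zero fun p hp ↦ by
    rw [image_eq_zero_of_notMem_tsupport fun h ↦ hp (hηV h), zero_mul]

lemma hasFDerivAt_comp_of_eventuallyEq_zero {E : Type*} [NormedAddCommGroup E] [NormedSpace ℝ E]
    {T : ℝ → ℝ} {v : E → ℝ} {p : E} (hT : Differentiable ℝ T) (hT0 : T =ᶠ[𝓝 0] 0)
    (hv : ContinuousAt v p) (hd : v p ≠ 0 → DifferentiableAt ℝ v p) :
    HasFDerivAt (fun q ↦ T (v q)) (deriv T (v p) • fderiv ℝ v p) p := by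
  rcases eq_or_ne (v p) 0 with h0 | h0
  · have hcomp : (fun q ↦ T (v q)) =ᶠ[𝓝 p] fun _ ↦ 0 := (h0 ▸ hv.tendsto).eventually hT0
    refine ((hasFDerivAt_const 0 p).congr_of_eventuallyEq hcomp).congr_fderiv ?_
    simp [h0, hT0.deriv_eq]
  · exact hT.differentiableAt.hasDerivAt.comp_hasFDerivAt p (hd h0).hasFDerivAt

variable {E : Type*} [NormedAddCommGroup E] [NormedSpace ℝ E] [MeasurableSpace E]

/-- `g` is a weak derivative of `v` on `V` in the direction `e`: the two are related by integration
by parts against all smooth functions with compact support in `V`. -/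
def HasWeakDirDerivOn (v g : E → ℝ) (e : E) (V : Set E) (μ : Measure E) : Prop :=
  ∀ η : E → ℝ, ContDiff ℝ ∞ η → HasCompactSupport η → tsupport η ⊆ V →
    ∫ p in V, v p * fderiv ℝ η p e ∂μ = -∫ p in V, η p * g p ∂μ

variable {v g : E → ℝ} {e : E} {V : Set E} {μ : Measure E}

lemma hasWeakDirDerivOn_of_differentiableAt [BorelSpace E] [FiniteDimensional ℝ E]
    [μ.IsAddHaarMeasure] (hd : ∀ p ∈ V, DifferentiableAt ℝ v p)
    (hg : ∀ p ∈ V, fderiv ℝ v p e = g p) (hvi : IntegrableOn v V μ) (hgi : IntegrableOn g V μ) :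
    HasWeakDirDerivOn v g e V μ := by
  intro η hη hc hηV
  have hη' : Continuous fun p ↦ fderiv ℝ η p e :=
    (hη.continuous_fderiv (by simp)).clm_apply continuous_const
  have hη'V : tsupport (fun p ↦ fderiv ℝ η p e) ⊆ V :=
    (tsupport_fderiv_apply_subset ℝ e).trans hηV
  have hηg : (fun p ↦ η p * fderiv ℝ v p e) = fun p ↦ η p * g p := by
    funext p
    by_cases hp : p ∈ V
    · rw [hg p hp]
    · rw [image_eq_zero_of_notMem_tsupport fun h ↦ hp (hηV h), zero_mul, zero_mul]
  have hint := integrable_mul_of_tsupport_subset hη.continuous hc hηV hgi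
  have hparts := integral_mul_fderiv_eq_neg_fderiv_mul_of_integrable (𝕜 := ℝ) (f := η) (g := v)
    (integrable_mul_of_tsupport_subset hη' (hc.fderiv_apply ℝ e) hη'V hvi) (hηg ▸ hint)
    (integrable_mul_of_tsupport_subset hη.continuous hc hηV hvi)
    (fun p _ ↦ (hη.differentiable (by simp)).differentiableAt) fun p hp ↦ hd p (hηV hp)
  simp_rw [mul_comm (v _)]
  rw [setIntegral_mul_eq_integral_of_tsupport_subset hη'V,
    setIntegral_mul_eq_integral_of_tsupport_subset hηV, ← hηg, hparts, neg_neg]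

lemma hasWeakDirDerivOn_of_tendsto [BorelSpace E] {ι : Type*} {l : Filter ι} [l.NeBot]
    [l.IsCountablyGenerated] {v' g' : ι → E → ℝ} {B D : E → ℝ} (hV : MeasurableSet V)
    (hw : ∀ i, HasWeakDirDerivOn (v' i) (g' i) e V μ)
    (hvm : ∀ i, AEStronglyMeasurable (v' i) (μ.restrict V))
    (hgm : ∀ i, AEStronglyMeasurable (g' i) (μ.restrict V))
    (hB : IntegrableOn B V μ) (hD : IntegrableOn D V μ)
    (hvB : ∀ i, ∀ p ∈ V, ‖v' i p‖ ≤ B p) (hgD : ∀ i, ∀ p ∈ V, ‖g' i p‖ ≤ D p)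
    (hv : ∀ p ∈ V, Tendsto (v' · p) l (𝓝 (v p))) (hg : ∀ p ∈ V, Tendsto (g' · p) l (𝓝 (g p))) :
    HasWeakDirDerivOn v g e V μ := by
  intro η hη hc hηV
  have hη' : Continuous fun p ↦ fderiv ℝ η p e :=
    (hη.continuous_fderiv (by simp)).clm_apply continuous_const
  obtain ⟨M, hM⟩ := hc.exists_bound_of_continuous hη.continuous
  obtain ⟨M', hM'⟩ := (hc.fderiv_apply ℝ e).exists_bound_of_continuous hη'
  have hleft : Tendsto (fun i ↦ ∫ p in V, v' i p * fderiv ℝ η p e ∂μ) l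
      (𝓝 (∫ p in V, v p * fderiv ℝ η p e ∂μ)) := by
    refine tendsto_integral_filter_of_dominated_convergence (fun p ↦ B p * M')
      (.of_forall fun i ↦ (hvm i).mul hη'.aestronglyMeasurable) (.of_forall fun i ↦ ?_)
      (hB.mul_const M') ?_
    · filter_upwards [ae_restrict_mem hV] with p hp
      exact (norm_mul_le _ _).trans (mul_le_mul (hvB i p hp) (hM' p) (norm_nonneg _)
        ((norm_nonneg _).trans (hvB i p hp)))
    · filter_upwards [ae_restrict_mem hV] with p hp using (hv p hp).mul_const _
  have hright : Tendsto (fun i ↦ -∫ p in V, η p * g' i p ∂μ) l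
      (𝓝 (-∫ p in V, η p * g p ∂μ)) := by
    refine (tendsto_integral_filter_of_dominated_convergence (fun p ↦ M * D p)
      (.of_forall fun i ↦ hη.continuous.aestronglyMeasurable.mul (hgm i)) (.of_forall fun i ↦ ?_)
      (hD.const_mul M) ?_).neg
    · filter_upwards [ae_restrict_mem hV] with p hp
      exact (norm_mul_le _ _).trans (mul_le_mul (hM p) (hgD i p hp) (norm_nonneg _)
        ((norm_nonneg _).trans (hM p)))
    · filter_upwards [ae_restrict_mem hV] with p hp using (hg p hp).const_mul _
  exact tendsto_nhds_unique hleft (hright.congr fun i ↦ (hw i η hη hc hηV).symm)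

theorem hasWeakDirDerivOn_of_differentiableAt_of_ne_zero [BorelSpace E] [FiniteDimensional ℝ E]
    [μ.IsAddHaarMeasure] (hV : IsOpen V) (hv : ContinuousOn v V)
    (hd : ∀ p ∈ V, v p ≠ 0 → DifferentiableAt ℝ v p)
    (hg : ∀ p ∈ V, v p ≠ 0 → fderiv ℝ v p e = g p) (hg0 : ∀ p ∈ V, v p = 0 → g p = 0)
    (hvi : IntegrableOn v V μ) (hgi : IntegrableOn g V μ) : HasWeakDirDerivOn v g e V μ := by
  obtain ⟨S, hS, hS0, hSid, hSle, C, hC⟩ := exists_smooth_truncation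
  have hgS (n : ℕ) : AEStronglyMeasurable (fun p ↦ deriv (S n) (v p) * g p) (μ.restrict V) :=
    (((hS n).continuous_deriv le_rfl).comp_aestronglyMeasurable hvi.1).mul hgi.1
  have hgC (n : ℕ) (p : E) : ‖deriv (S n) (v p) * g p‖ ≤ C * ‖g p‖ := by
    rw [norm_mul]
    gcongr
    exact hC n _
  have hSd (n : ℕ) {p : E} (hp : p ∈ V) : HasFDerivAt (fun q ↦ S n (v q))
      (deriv (S n) (v p) • fderiv ℝ v p) p :=
    hasFDerivAt_comp_of_eventuallyEq_zero ((hS n).differentiable one_ne_zero) (hS0 n)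
      (hv.continuousAt (hV.mem_nhds hp)) (hd p hp)
  have hSg (n : ℕ) {p : E} (hp : p ∈ V) :
      fderiv ℝ (fun q ↦ S n (v q)) p e = deriv (S n) (v p) * g p := by
    rw [(hSd n hp).fderiv, smul_apply, smul_eq_mul]
    rcases eq_or_ne (v p) 0 with h0 | h0
    · simp [h0, (hS0 n).deriv_eq]
    · rw [hg p hp h0]
  have hSv (n : ℕ) : AEStronglyMeasurable (fun p ↦ S n (v p)) (μ.restrict V) :=
    (hS n).continuous.comp_aestronglyMeasurable hvi.1
  refine hasWeakDirDerivOn_of_tendsto (l := atTop) (v' := fun n p ↦ S n (v p))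
    (g' := fun n p ↦ deriv (S n) (v p) * g p) hV.measurableSet (fun n ↦ ?_) hSv hgS hvi.norm
    (hgi.norm.const_mul C) (fun n p _ ↦ hSle n (v p)) (fun n p _ ↦ hgC n p) (fun p _ ↦ ?_)
    fun p hp ↦ ?_
  · exact hasWeakDirDerivOn_of_differentiableAt (fun _ hp ↦ (hSd n hp).differentiableAt)
      (fun _ hp ↦ hSg n hp) (Integrable.mono hvi (hSv n) (.of_forall fun p ↦ hSle n (v p)))
      ((hgi.norm.const_mul C).mono' (hgS n) (.of_forall fun p ↦ hgC n p))
  · rcases eq_or_ne (v p) 0 with h0 | h0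
    · simp [h0, (hS0 _).eq_of_nhds]
    · exact tendsto_const_nhds.congr' ((hSid _ h0).mono fun n hn ↦ hn.eq_of_nhds.symm)
  · rcases eq_or_ne (v p) 0 with h0 | h0
    · simp [hg0 p hp h0]
    · exact tendsto_const_nhds.congr' ((hSid _ h0).mono fun n hn ↦ by simp [hn.deriv_eq])

end WeakDerivative

section InvLog

/-- The function `1 / log |t|`. Since `Real.log` is even and `Real.log 0 = 0`, it is extended by `0`
to the origin. -/
noncomputable def invLog (t : ℝ) : ℝ := (Real.log t)⁻¹

lemma invLog_eq_ite (t : ℝ) : invLog t = if t = 0 then 0 else 1 / Real.log |t| := by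
  rw [invLog, Real.log_abs, one_div]
  exact (ite_eq_right_iff.2 fun h ↦ by simp [h]).symm

lemma invLog_eq_zero_iff {t : ℝ} (ht : |t| < 1) : invLog t = 0 ↔ t = 0 := by
  refine ⟨fun h ↦ by_contra fun h0 ↦ ?_, fun h ↦ by simp [invLog, h]⟩
  rw [invLog, inv_eq_zero, ← Real.log_abs] at h
  exact (Real.log_neg (abs_pos.2 h0) ht).ne h

lemma deriv_invLog (t : ℝ) : deriv invLog t = -t⁻¹ / Real.log t ^ 2 := Real.deriv_inv_log_apply

lemma differentiableAt_invLog {t : ℝ} (ht : |t| < 1) (h0 : t ≠ 0) :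
    DifferentiableAt ℝ invLog t :=
  Real.differentiableAt_inv_log h0 (abs_lt.1 ht).2.ne (abs_lt.1 ht).1.ne'

lemma continuousAt_invLog {t : ℝ} (ht : |t| < 1) : ContinuousAt invLog t := by
  rcases eq_or_ne t 0 with rfl | h0
  · rw [continuousAt_iff_punctured_nhds]
    rw [invLog, Real.log_zero, inv_zero]
    exact Real.tendsto_log_nhdsNE_zero.inv_tendsto_atBot
  · exact (differentiableAt_invLog ht h0).continuousAt

theorem hasWeakDirDerivOn_invLog_comp {E : Type*} [NormedAddCommGroup E] [NormedSpace ℝ E]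
    [MeasurableSpace E] [BorelSpace E] [FiniteDimensional ℝ E] {μ : Measure E} [μ.IsAddHaarMeasure]
    {f : E → ℝ} {e : E} {V : Set E} (hV : IsOpen V) (hf : ∀ p ∈ V, DifferentiableAt ℝ f p)
    (hfV : ∀ p ∈ V, |f p| < 1) (hvi : IntegrableOn (fun p ↦ invLog (f p)) V μ)
    (hgi : IntegrableOn (fun p ↦ fderiv ℝ f p e * deriv invLog (f p)) V μ) :
    HasWeakDirDerivOn (fun p ↦ invLog (f p)) (fun p ↦ fderiv ℝ f p e * deriv invLog (f p)) e V
      μ := by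
  have hd {p : E} (hp : p ∈ V) (h0 : invLog (f p) ≠ 0) : HasFDerivAt (fun p ↦ invLog (f p))
      (deriv invLog (f p) • fderiv ℝ f p) p :=
    (differentiableAt_invLog (hfV p hp) (mt (invLog_eq_zero_iff (hfV p hp)).2
      h0)).hasDerivAt.comp_hasFDerivAt p (hf p hp).hasFDerivAt
  refine hasWeakDirDerivOn_of_differentiableAt_of_ne_zero hV (fun p hp ↦ ?_)
    (fun p hp h0 ↦ (hd hp h0).differentiableAt) (fun p hp h0 ↦ ?_) (fun p hp h0 ↦ ?_) hvi hgi
  · exact ((continuousAt_invLog (hfV p hp)).comp (hf p hp).continuousAt).continuousWithinAt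
  · rw [(hd hp h0).fderiv, smul_apply, smul_eq_mul, mul_comm]
  · simp [(invLog_eq_zero_iff (hfV p hp)).1 h0, deriv_invLog]

end InvLog

section SliceIntegrals

lemma setLIntegral_enorm_deriv_mul_comp_le {h h' : ℝ → ℝ} {s S : Set ℝ} (F : ℝ → ℝ≥0∞)
    (hs : MeasurableSet s) (hh : ∀ x ∈ s, HasDerivWithinAt h (h' x) s x) (hinj : InjOn h s)
    (hmaps : MapsTo h s S) : ∫⁻ x in s, ‖h' x‖ₑ * F (h x) ≤ ∫⁻ t in S, F t := by
  simp_rw [Real.enorm_eq_ofReal_abs]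
  rw [← lintegral_image_eq_lintegral_abs_deriv_mul hs hh hinj]
  exact lintegral_mono_set hmaps.image_subset

lemma intervalIntegrable_deriv_invLog {b : ℝ} (hb : |b| < 1) :
    IntervalIntegrable (deriv invLog) volume 0 b := by
  have hlt {t : ℝ} (ht : t ∈ uIcc 0 b) : |t| < 1 := by
    simpa using (abs_sub_left_of_mem_uIcc ht).trans_lt (by simpa using hb)
  have hcont : ContinuousOn invLog (uIcc 0 b) := fun t ht ↦
    (continuousAt_invLog (hlt ht)).continuousWithinAt
  have hderiv {t : ℝ} (ht : t ∈ uIoo 0 b) : HasDerivAt invLog (deriv invLog t) t :=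
    (differentiableAt_invLog (hlt (uIoo_subset_uIcc_self ht))
      (by rintro rfl; simp at ht)).hasDerivAt
  rcases le_total 0 b with h0 | h0
  · rw [← neg_neg (deriv invLog)]
    refine (intervalIntegral.intervalIntegrable_deriv_of_nonneg hcont.neg
      (fun t ht ↦ (hderiv ht).neg) fun t ht ↦ ?_).neg
    have ht0 : 0 < t := by simpa [h0] using ht.1
    rw [deriv_invLog, neg_div, neg_neg]
    positivity
  · refine intervalIntegral.intervalIntegrable_deriv_of_nonneg hcont
      (fun t ht ↦ hderiv ht) fun t ht ↦ ?_
    have ht0 : t < 0 := by simpa [h0] using ht.2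
    rw [deriv_invLog]
    exact div_nonneg (neg_nonneg.2 (inv_nonpos.2 ht0.le)) (sq_nonneg _)

lemma integrableOn_deriv_invLog {a b : ℝ} (ha : |a| < 1) (hb : |b| < 1) :
    IntegrableOn (deriv invLog) (Icc a b) := by
  rcases le_or_gt a b with h | h
  · exact (intervalIntegrable_iff_integrableOn_Icc_of_le h).1
      ((intervalIntegrable_deriv_invLog ha).symm.trans (intervalIntegrable_deriv_invLog hb))
  · simp [h]

lemma monotoneOn_mul_log_sq :
    MonotoneOn (fun t ↦ t * Real.log t ^ 2) (Ioc 0 (Real.exp (-2))) := by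
  intro s hs t ht hst
  have hmem {r : ℝ} (hr : r ∈ Ioc 0 (Real.exp (-2))) : r⁻¹ ∈ Ici (Real.exp 2) := by
    rw [mem_Ici, ← inv_inv (Real.exp 2), ← Real.exp_neg]
    exact inv_anti₀ hr.1 hr.2
  have hsq {r : ℝ} (hr : r ∈ Ioc 0 (Real.exp (-2))) :
      r * Real.log r ^ 2 = (Real.log r⁻¹ / √r⁻¹) ^ 2 := by
    rw [div_pow, Real.sq_sqrt (inv_nonneg.2 hr.1.le), Real.log_inv, neg_sq, div_inv_eq_mul,
      mul_comm]
  have hnonneg {r : ℝ} (hr : r ∈ Ioc 0 (Real.exp (-2))) : 0 ≤ Real.log r⁻¹ / √r⁻¹ :=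
    div_nonneg (Real.log_nonneg ((Real.one_le_exp zero_le_two).trans (hmem hr)))
      (Real.sqrt_nonneg _)
  simp only [hsq hs, hsq ht]
  exact pow_le_pow_left₀ (hnonneg hs)
    (Real.log_div_sqrt_antitoneOn (hmem ht) (hmem hs) (inv_anti₀ hs.1 hst)) 2

lemma abs_deriv_invLog (t : ℝ) : |deriv invLog t| = (|t| * Real.log |t| ^ 2)⁻¹ := by
  rw [deriv_invLog, abs_div, abs_neg, abs_inv, abs_pow, sq_abs, Real.log_abs, mul_inv,
    div_eq_mul_inv]

lemma abs_deriv_invLog_le {a r t : ℝ} (ha : 0 < a) (ha1 : a ≤ 1) (hr0 : r ≠ 0) (hr : |r| < 1)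
    (hrt : a * |r| ≤ |t|) (ht : |t| ≤ Real.exp (-2)) :
    |deriv invLog t| ≤ a⁻¹ * |deriv invLog r| := by
  have hr_pos : 0 < |r| := abs_pos.2 hr0
  have har : 0 < a * |r| := by positivity
  have hlog : Real.log |r| < 0 := Real.log_neg hr_pos hr
  have hlog_le : Real.log (a * |r|) ≤ Real.log |r| :=
    Real.log_le_log har (mul_le_of_le_one_left hr_pos.le ha1)
  have hmono : a * (|r| * Real.log |r| ^ 2) ≤ |t| * Real.log |t| ^ 2 :=
    calc a * (|r| * Real.log |r| ^ 2) ≤ a * |r| * Real.log (a * |r|) ^ 2 := by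
          rw [← mul_assoc]
          gcongr a * |r| * ?_
          nlinarith
      _ ≤ |t| * Real.log |t| ^ 2 :=
        monotoneOn_mul_log_sq ⟨har, hrt.trans ht⟩ ⟨har.trans_le hrt, ht⟩ hrt
  rw [abs_deriv_invLog, abs_deriv_invLog, ← mul_inv]
  exact inv_anti₀ (by have := sq_pos_of_neg hlog; positivity) hmono

lemma sqrt_abs_mul_min_le_abs_sq_sub (c y : ℝ) :
    √|c| * min |y - √c| |y + √c| ≤ |y ^ 2 - c| := by
  rcases le_total 0 c with hc | hc
  · have hfactor : |y ^ 2 - c| = |y - √c| * |y + √c| := by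
      rw [← abs_mul]
      congr 1
      nlinarith [Real.sq_sqrt hc]
    have hmax : √c ≤ max |y - √c| |y + √c| := by
      rw [le_max_iff, le_abs, le_abs]
      grind
    rw [abs_of_nonneg hc, hfactor, ← max_mul_min |y - √c|]
    exact mul_le_mul_of_nonneg_right hmax (le_min (abs_nonneg _) (abs_nonneg _))
  · rw [Real.sqrt_eq_zero_of_nonpos hc, sub_zero, add_zero, min_self, abs_of_nonpos hc]
    calc √(-c) * |y| ≤ y ^ 2 - c := by
          nlinarith [sq_nonneg (√(-c) - |y|), Real.sq_sqrt (neg_nonneg.2 hc), sq_abs y, sq_nonneg y]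
      _ ≤ |y ^ 2 - c| := le_abs_self _

lemma abs_sq_sub_le {c y : ℝ} (hy : |y| ≤ 1 / 4) (hc : |c| ≤ 1 / 16) : |y ^ 2 - c| ≤ 1 / 8 :=
  calc |y ^ 2 - c| ≤ |y| ^ 2 + |c| := by rw [← abs_pow]; exact abs_sub _ _
    _ ≤ (1 / 4) ^ 2 + 1 / 16 := by gcongr
    _ = 1 / 8 := by norm_num

lemma enorm_deriv_invLog_sq_sub_le {c y : ℝ} (hc0 : c ≠ 0) (hc : |c| ≤ 1 / 16) (hy : |y| ≤ 1 / 4)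
    (hne : y ≠ √c) (hne' : y ≠ -√c) : ‖deriv invLog (y ^ 2 - c)‖ₑ ≤
      ‖(√|c|)⁻¹‖ₑ * (‖deriv invLog (y - √c)‖ₑ + ‖deriv invLog (y + √c)‖ₑ) := by
  have hsqrt {d : ℝ} (hd : d ≤ 1 / 16) : √d ≤ 1 / 4 := Real.sqrt_le_iff.2 ⟨by norm_num, by linarith⟩
  have hsmall : |y ^ 2 - c| ≤ Real.exp (-2) := by
    have hexp : Real.exp 2 ≤ 8 := by
      rw [show (2 : ℝ) = 1 + 1 by norm_num, Real.exp_add]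
      nlinarith [Real.exp_one_lt_d9, Real.exp_pos 1]
    calc |y ^ 2 - c| ≤ 1 / 8 := abs_sq_sub_le hy hc
      _ = (8 : ℝ)⁻¹ := by norm_num
      _ ≤ Real.exp (-2) := by rw [Real.exp_neg]; gcongr
  have hroot {r : ℝ} (hr0 : r ≠ 0) (hr : |r| ≤ 1 / 2) (h : √|c| * |r| ≤ |y ^ 2 - c|) :
      ‖deriv invLog (y ^ 2 - c)‖ₑ ≤ ‖(√|c|)⁻¹‖ₑ * ‖deriv invLog r‖ₑ := by
    rw [← enorm_mul, Real.enorm_eq_ofReal_abs, Real.enorm_eq_ofReal_abs, abs_mul, abs_inv,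
      abs_of_nonneg (Real.sqrt_nonneg _)]
    exact ENNReal.ofReal_le_ofReal (abs_deriv_invLog_le (Real.sqrt_pos.2 (abs_pos.2 hc0))
      ((hsqrt hc).trans (by norm_num)) hr0 (hr.trans_lt (by norm_num)) h hsmall)
  have hmin := sqrt_abs_mul_min_le_abs_sq_sub c y
  have hsc : |√c| ≤ 1 / 4 := by
    rw [abs_of_nonneg (Real.sqrt_nonneg _)]
    exact hsqrt ((le_abs_self c).trans hc)
  rw [mul_add]
  rcases min_choice |y - √c| |y + √c| with h | h <;> rw [h] at hmin
  · exact (hroot (sub_ne_zero.2 hne) ((abs_sub _ _).trans (by linarith)) hmin).trans le_self_add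
  · exact (hroot (by rwa [ne_eq, add_eq_zero_iff_eq_neg])
      ((abs_add_le _ _).trans (by linarith)) hmin).trans le_add_self

/-- The total variation of `1 / log |t|` on `[-1/2, 1/2]`. It controls the gradient of
`1 / log |y² - u x|` on every vertical slice of `[-1/4, 1/4]²`. -/
noncomputable def invLogVariation : ℝ≥0∞ :=
  ∫⁻ t in Icc (-1 / 2 : ℝ) (1 / 2), ‖deriv invLog t‖ₑ

lemma invLogVariation_lt_top : invLogVariation < ⊤ :=
  (integrableOn_deriv_invLog (by norm_num [abs_div]) (by norm_num [abs_div])).2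

lemma lintegral_deriv_invLog_sq_sub_le {c : ℝ} (hc0 : c ≠ 0) (hc : |c| ≤ 1 / 16) :
    ∫⁻ y in Icc (-1 / 4 : ℝ) (1 / 4), ‖deriv invLog (y ^ 2 - c)‖ₑ ≤
      ‖(√|c|)⁻¹‖ₑ * (2 * invLogVariation) := by
  have hsqrt : √c ≤ 1 / 4 := Real.sqrt_le_iff.2 ⟨by norm_num, by linarith [le_abs_self c]⟩
  have hshift {d : ℝ} (hd : |d| ≤ 1 / 4) : ∫⁻ y in Icc (-1 / 4 : ℝ) (1 / 4),
      ‖deriv invLog (y + d)‖ₑ ≤ invLogVariation := by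
    obtain ⟨hd1, hd2⟩ := abs_le.1 hd
    simpa only [enorm_one, one_mul, invLogVariation] using setLIntegral_enorm_deriv_mul_comp_le
      (S := Icc (-1 / 2) (1 / 2)) (h := fun y ↦ y + d) (h' := fun _ ↦ 1) (fun t ↦ ‖deriv invLog t‖ₑ)
      measurableSet_Icc (fun y _ ↦ ((hasDerivAt_id' y).add_const d).hasDerivWithinAt)
      (add_left_injective d).injOn fun y hy ↦ ⟨by linarith [hy.1], by linarith [hy.2]⟩
  calc ∫⁻ y in Icc (-1 / 4 : ℝ) (1 / 4), ‖deriv invLog (y ^ 2 - c)‖ₑ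
      ≤ ∫⁻ y in Icc (-1 / 4 : ℝ) (1 / 4),
          ‖(√|c|)⁻¹‖ₑ * (‖deriv invLog (y - √c)‖ₑ + ‖deriv invLog (y + √c)‖ₑ) := by
        refine lintegral_mono_ae ?_
        filter_upwards [ae_restrict_mem measurableSet_Icc, Measure.ae_ne _ (√c),
          Measure.ae_ne _ (-√c)] with y hy hne hne'
        exact enorm_deriv_invLog_sq_sub_le hc0 hc
          (abs_le.2 ⟨by linarith [hy.1], by linarith [hy.2]⟩) hne hne'
    _ = ‖(√|c|)⁻¹‖ₑ * ((∫⁻ y in Icc (-1 / 4 : ℝ) (1 / 4), ‖deriv invLog (y - √c)‖ₑ) +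
          ∫⁻ y in Icc (-1 / 4 : ℝ) (1 / 4), ‖deriv invLog (y + √c)‖ₑ) := by
        rw [lintegral_const_mul _ (by fun_prop), lintegral_add_left (by fun_prop)]
    _ ≤ ‖(√|c|)⁻¹‖ₑ * (2 * invLogVariation) := by
        have hsc : |√c| ≤ 1 / 4 := by rwa [abs_of_nonneg (Real.sqrt_nonneg _)]
        rw [two_mul]
        refine mul_le_mul' le_rfl (add_le_add ?_ (hshift hsc))
        simpa only [sub_eq_add_neg] using hshift (d := -√c) (by rwa [abs_neg])

lemma lintegral_two_mul_deriv_invLog_sq_sub_le {c : ℝ} (hc : |c| ≤ 1 / 16) :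
    ∫⁻ y in Icc (-1 / 4 : ℝ) (1 / 4), ‖2 * y * deriv invLog (y ^ 2 - c)‖ₑ ≤
      2 * invLogVariation := by
  have hhalf {s : Set ℝ} (hs : MeasurableSet s) (hsub : s ⊆ Icc (-1 / 4) (1 / 4))
      (hinj : InjOn (fun y : ℝ ↦ y ^ 2) s) : ∫⁻ y in s, ‖2 * y * deriv invLog (y ^ 2 - c)‖ₑ ≤
        invLogVariation := by
    obtain ⟨hc1, hc2⟩ := abs_le.1 hc
    have hmul (y : ℝ) : ‖2 * y * deriv invLog (y ^ 2 - c)‖ₑ =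
        ‖2 * y‖ₑ * ‖deriv invLog (y ^ 2 - c)‖ₑ := enorm_mul _ _
    simp only [hmul]
    refine setLIntegral_enorm_deriv_mul_comp_le (h := fun y ↦ y ^ 2 - c) (h' := fun y ↦ 2 * y)
      (fun t ↦ ‖deriv invLog t‖ₑ) hs (fun y _ ↦ ?_)
      (fun y hy z hz h ↦ hinj hy hz (sub_left_injective h)) fun y hy ↦ ?_
    · simpa using ((hasDerivAt_pow 2 y).sub_const c).hasDerivWithinAt
    · obtain ⟨hy1, hy2⟩ := hsub hy
      constructor <;> nlinarith
  calc ∫⁻ y in Icc (-1 / 4 : ℝ) (1 / 4), ‖2 * y * deriv invLog (y ^ 2 - c)‖ₑ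
      ≤ (∫⁻ y in Icc (-1 / 4 : ℝ) 0, ‖2 * y * deriv invLog (y ^ 2 - c)‖ₑ) +
          ∫⁻ y in Icc (0 : ℝ) (1 / 4), ‖2 * y * deriv invLog (y ^ 2 - c)‖ₑ := by
        rw [← Icc_union_Icc_eq_Icc (by norm_num) (by norm_num : (0 : ℝ) ≤ 1 / 4)]
        exact lintegral_union_le _ _ _
    _ ≤ 2 * invLogVariation := by
        rw [two_mul]
        refine add_le_add (hhalf measurableSet_Icc (Icc_subset_Icc_right (by norm_num)) ?_)
          (hhalf measurableSet_Icc (Icc_subset_Icc_left (by norm_num)) ?_)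
        · exact fun y hy z hz h ↦ neg_injective
            ((sq_eq_sq₀ (neg_nonneg.2 hy.2) (neg_nonneg.2 hz.2)).1 (by simpa using h))
        · exact fun y hy z hz h ↦ (sq_eq_sq₀ hy.1 hz.1).1 h

theorem integrableOn_deriv_mul_deriv_invLog_sq_sub {u : ℝ → ℝ} (hu : Measurable u)
    (hle : ∀ x, |x| ≤ 1 / 4 → |u x| ≤ 1 / 16) (hne : ∀ᵐ x, u x ≠ 0)
    (hratio : IntegrableOn (fun x ↦ deriv u x * (√|u x|)⁻¹) (Icc (-1 / 4) (1 / 4))) :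
    IntegrableOn (fun p : ℝ × ℝ ↦ deriv u p.1 * deriv invLog (p.2 ^ 2 - u p.1))
      (Icc (-1 / 4) (1 / 4) ×ˢ Icc (-1 / 4) (1 / 4)) := by
  have hmeas : Measurable fun p : ℝ × ℝ ↦ deriv u p.1 * deriv invLog (p.2 ^ 2 - u p.1) := by
    fun_prop
  refine ⟨hmeas.aestronglyMeasurable, ?_⟩
  rw [hasFiniteIntegral_iff_enorm, Measure.volume_eq_prod, ← Measure.prod_restrict,
    lintegral_prod _ hmeas.enorm.aemeasurable]
  have hK : 2 * invLogVariation < ⊤ := ENNReal.mul_lt_top (by simp) invLogVariation_lt_top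
  calc ∫⁻ x in Icc (-1 / 4 : ℝ) (1 / 4), ∫⁻ y in Icc (-1 / 4 : ℝ) (1 / 4),
        ‖deriv u x * deriv invLog (y ^ 2 - u x)‖ₑ
      ≤ ∫⁻ x in Icc (-1 / 4 : ℝ) (1 / 4), ‖deriv u x * (√|u x|)⁻¹‖ₑ *
          (2 * invLogVariation) := by
        refine lintegral_mono_ae ?_
        filter_upwards [ae_restrict_mem measurableSet_Icc, ae_restrict_of_ae hne] with x hx hux
        simp_rw [enorm_mul]
        rw [lintegral_const_mul _ (by fun_prop), mul_assoc]
        gcongr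
        have hx4 : |x| ≤ 1 / 4 := abs_le.2 ⟨by linarith [hx.1], hx.2⟩
        exact lintegral_deriv_invLog_sq_sub_le hux (hle x hx4)
    _ = (∫⁻ x in Icc (-1 / 4 : ℝ) (1 / 4), ‖deriv u x * (√|u x|)⁻¹‖ₑ) *
          (2 * invLogVariation) :=
        lintegral_mul_const' _ _ hK.ne
    _ < ⊤ := ENNReal.mul_lt_top hratio.2 hK

theorem integrableOn_two_mul_deriv_invLog_sq_sub {u : ℝ → ℝ} (hu : Measurable u)
    (hle : ∀ x, |x| ≤ 1 / 4 → |u x| ≤ 1 / 16) :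
    IntegrableOn (fun p : ℝ × ℝ ↦ 2 * p.2 * deriv invLog (p.2 ^ 2 - u p.1))
      (Icc (-1 / 4) (1 / 4) ×ˢ Icc (-1 / 4) (1 / 4)) := by
  have hmeas : Measurable fun p : ℝ × ℝ ↦ 2 * p.2 * deriv invLog (p.2 ^ 2 - u p.1) := by
    fun_prop
  refine ⟨hmeas.aestronglyMeasurable, ?_⟩
  rw [hasFiniteIntegral_iff_enorm, Measure.volume_eq_prod, ← Measure.prod_restrict,
    lintegral_prod _ hmeas.enorm.aemeasurable]
  have hK : 2 * invLogVariation < ⊤ := ENNReal.mul_lt_top (by simp) invLogVariation_lt_top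
  calc ∫⁻ x in Icc (-1 / 4 : ℝ) (1 / 4), ∫⁻ y in Icc (-1 / 4 : ℝ) (1 / 4),
        ‖2 * y * deriv invLog (y ^ 2 - u x)‖ₑ
      ≤ ∫⁻ _ in Icc (-1 / 4 : ℝ) (1 / 4), 2 * invLogVariation :=
        setLIntegral_mono measurable_const fun x hx ↦
          lintegral_two_mul_deriv_invLog_sq_sub_le
            (hle x (abs_le.2 ⟨by linarith [hx.1], hx.2⟩))
    _ < ⊤ := by
      rw [setLIntegral_const]
      exact ENNReal.mul_lt_top hK measure_Icc_lt_top

end SliceIntegrals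

section PeriodicWeight

lemma one_add_sq_le_of_mem_zmultiples {g T t : ℝ} (hg : g ∈ AddSubgroup.zmultiples T)
    (ht : t ∈ Ioc (-(T / 2)) (-(T / 2) + T)) : 1 + g ^ 2 ≤ 4 * (1 + (g + t) ^ 2) := by
  obtain ⟨n, rfl⟩ := AddSubgroup.mem_zmultiples_iff.1 hg
  rw [zsmul_eq_mul]
  have hT : |t| ≤ T / 2 := abs_le.2 ⟨ht.1.le, by linarith [ht.2]⟩
  rcases eq_or_ne n 0 with rfl | hn
  · simp only [Int.cast_zero, zero_mul, zero_add]
    nlinarith [sq_nonneg t]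
  have hnT : T ≤ |n * T| := by
    rw [abs_mul]
    refine (le_abs_self T).trans (le_mul_of_one_le_left (abs_nonneg T) ?_)
    exact_mod_cast Int.one_le_abs hn
  have habs : |n * T| ≤ 2 * |n * T + t| := by
    have := abs_sub_abs_le_abs_add (n * T) t
    linarith
  nlinarith [sq_abs (n * T), sq_abs (n * T + t), abs_nonneg (n * T)]

lemma summable_inv_one_add_zsmul_sq {T : ℝ} (hT : T ≠ 0) :
    Summable fun n : ℤ ↦ (1 + (n • T) ^ 2)⁻¹ := by
  have hsum := (Real.summable_one_div_int_pow.2 one_lt_two).mul_left (T ^ 2)⁻¹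
  refine hsum.of_norm_bounded_eventually ?_
  filter_upwards [Filter.eventually_cofinite_ne 0] with n hn
  have : (n : ℝ) ≠ 0 := Int.cast_ne_zero.2 hn
  rw [Real.norm_of_nonneg (by positivity), one_div, ← mul_inv, zsmul_eq_mul, mul_pow, mul_comm]
  gcongr
  linarith

theorem lintegral_inv_one_add_sq_mul_lt_top {F : ℝ → ℝ≥0∞} {T : ℝ} (hT : 0 < T)
    (hF : F.Periodic T) (hfin : ∫⁻ t in Ioc (-(T / 2)) (-(T / 2) + T), F t < ⊤) :
    ∫⁻ t, ‖(1 + t ^ 2)⁻¹‖ₑ * F t < ⊤ := by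
  set I := Ioc (-(T / 2)) (-(T / 2) + T)
  have hbound (n : ℤ) : ∫⁻ t in I, ‖(1 + (n • T + t) ^ 2)⁻¹‖ₑ * F (n • T + t) ≤
      ‖4 * (1 + (n • T) ^ 2)⁻¹‖ₑ * ∫⁻ t in I, F t := by
    rw [← lintegral_const_mul' _ _ enorm_ne_top]
    refine setLIntegral_mono' measurableSet_Ioc fun t ht ↦ ?_
    rw [add_comm (n • T) t, hF.zsmul n t, add_comm t]
    gcongr
    rw [enorm_le_iff_norm_le, Real.norm_of_nonneg (by positivity),
      Real.norm_of_nonneg (by positivity), ← div_eq_mul_inv,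
      inv_le_comm₀ (by positivity) (by positivity), inv_div]
    linarith [one_add_sq_le_of_mem_zmultiples (AddSubgroup.zsmul_mem_zmultiples T n) ht]
  have hsum : ∑' n : ℤ, ‖4 * (1 + (n • T) ^ 2)⁻¹‖ₑ < ⊤ := by
    simpa only [Real.enorm_eq_ofReal_abs] using
      ((summable_inv_one_add_zsmul_sq hT.ne').mul_left 4).abs.tsum_ofReal_lt_top
  have hsurj : Function.Surjective fun n : ℤ ↦
      (⟨n • T, AddSubgroup.zsmul_mem_zmultiples T n⟩ : AddSubgroup.zmultiples T) := by
    rintro ⟨g, hg⟩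
    obtain ⟨n, rfl⟩ := AddSubgroup.mem_zmultiples_iff.1 hg
    exact ⟨n, rfl⟩
  calc ∫⁻ t, ‖(1 + t ^ 2)⁻¹‖ₑ * F t
      = ∑' g : AddSubgroup.zmultiples T, ∫⁻ t in I, ‖(1 + (g + t) ^ 2)⁻¹‖ₑ * F (g + t) :=
        (isAddFundamentalDomain_Ioc hT (-(T / 2))).lintegral_eq_tsum'' _
    _ ≤ ∑' n : ℤ, ∫⁻ t in I, ‖(1 + (n • T + t) ^ 2)⁻¹‖ₑ * F (n • T + t) :=
        ENNReal.tsum_le_tsum_comp_of_surjective hsurj _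
    _ ≤ ∑' n : ℤ, ‖4 * (1 + (n • T) ^ 2)⁻¹‖ₑ * ∫⁻ t in I, F t := ENNReal.tsum_le_tsum hbound
    _ = (∑' n : ℤ, ‖4 * (1 + (n • T) ^ 2)⁻¹‖ₑ) * ∫⁻ t in I, F t := ENNReal.tsum_mul_right
    _ < ⊤ := ENNReal.mul_lt_top hsum hfin

lemma intervalIntegrable_abs_rpow {r : ℝ} (hr : -1 < r) (a b : ℝ) :
    IntervalIntegrable (fun t ↦ |t| ^ r) volume a b := by
  refine intervalIntegrable_of_even (fun t ↦ by rw [abs_neg]) fun c hc ↦ ?_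
  refine (intervalIntegral.intervalIntegrable_rpow' hr).congr fun t ht ↦ ?_
  rw [uIoc_of_le hc.le] at ht
  exact congrArg (· ^ r) (abs_of_pos ht.1).symm

lemma integrableOn_abs_sin_rpow {r : ℝ} (hr : -1 < r) (hr0 : r ≤ 0) :
    IntegrableOn (fun t ↦ |Real.sin t| ^ r) (Icc (-(Real.pi / 2)) (Real.pi / 2)) := by
  have hpow := (intervalIntegrable_iff_integrableOn_Icc_of_le (by linarith [Real.pi_pos])).1
    (intervalIntegrable_abs_rpow hr (-(Real.pi / 2)) (Real.pi / 2))
  refine (hpow.const_mul ((2 / Real.pi) ^ r)).mono'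
    (Measurable.aestronglyMeasurable (by fun_prop)) ?_
  filter_upwards [ae_restrict_mem measurableSet_Icc, Measure.ae_ne _ 0] with t ht ht0
  have := abs_pos.2 ht0
  rw [Real.norm_of_nonneg (by positivity), ← Real.mul_rpow (by positivity) (by positivity)]
  exact Real.rpow_le_rpow_of_nonpos (by positivity) (Real.mul_abs_le_abs_sin (abs_le.2 ht)) hr0

theorem integrable_inv_one_add_sq_mul_abs_sin_rpow {r : ℝ} (hr : -1 < r) (hr0 : r ≤ 0) :
    Integrable fun t ↦ (1 + t ^ 2)⁻¹ * |Real.sin t| ^ r := by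
  refine ⟨by fun_prop, ?_⟩
  simp only [hasFiniteIntegral_iff_enorm, enorm_mul]
  refine lintegral_inv_one_add_sq_mul_lt_top Real.pi_pos
    (fun t ↦ by rw [Real.sin_add_pi, abs_neg]) ?_
  refine (lintegral_mono_set fun t ht ↦ ?_).trans_lt (integrableOn_abs_sin_rpow hr hr0).2
  exact ⟨ht.1.le, by linarith [ht.2]⟩

end PeriodicWeight

section FlatSineRatio

lemma expNegInvGlue_sq_eq_exp_sq {x : ℝ} (hx : x ≠ 0) :
    expNegInvGlue (x ^ 2) = Real.exp (-(1 / 2 * x⁻¹ ^ 2)) ^ 2 := by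
  rw [expNegInvGlue_sq_of_ne_zero hx, ← Real.exp_nat_mul]
  ring_nf

lemma sqrt_abs_flatSine {x : ℝ} (hx : x ≠ 0) :
    √|flatSine x| = √|Real.sin (phase x)| * Real.exp (-(1 / 2 * x⁻¹ ^ 2)) := by
  rw [flatSine, expNegInvGlue_sq_eq_exp_sq hx, abs_mul, abs_sq, Real.sqrt_mul (abs_nonneg _),
    Real.sqrt_sq (Real.exp_nonneg _)]

lemma exists_abs_deriv_flatSine_mul_inv_sqrt_le :
    ∃ C C' : ℝ, ∀ x ≠ 0, Real.sin (phase x) ≠ 0 → |deriv flatSine x * (√|flatSine x|)⁻¹| ≤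
      C * (|-(phase x * x⁻¹ ^ 2)| *
        ((1 + phase x ^ 2)⁻¹ * |Real.sin (phase x)| ^ (-(1 / 2) : ℝ))) + C' := by
  obtain ⟨C, hC⟩ := exists_abs_mul_exp_neg_le (phaseAlgebra_le_expInvGrowth
    (add_mem (one_mem phaseAlgebra) (pow_mem phase_mem_phaseAlgebra 2))) one_half_pos
  obtain ⟨C', hC'⟩ := exists_abs_mul_exp_neg_le (phaseAlgebra_le_expInvGrowth
    (phaseAlgebra.smul_mem (pow_mem inv_mem_phaseAlgebra 3) 2)) one_half_pos
  refine ⟨C, C', fun x hx hsin ↦ ?_⟩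
  set d := -(phase x * x⁻¹ ^ 2)
  set q := 2 * x⁻¹ ^ 3
  set S := Real.sin (phase x)
  set w := Real.exp (-(1 / 2 * x⁻¹ ^ 2))
  have hw : 0 < w := Real.exp_pos _
  have hr : 0 < √|S| := Real.sqrt_pos.2 (abs_pos.2 hsin)
  have hcancel : w ^ 2 * (√|S| * w)⁻¹ = w * (√|S|)⁻¹ := by field_simp
  have hnum : |Real.cos (phase x) * d + S * q| ≤ |d| + √|S| * |q| := by
    have hS : |S| ≤ √|S| := Real.le_sqrt_of_sq_le (by
      nlinarith [Real.abs_sin_le_one (phase x), abs_nonneg S])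
    refine (abs_add_le _ _).trans ?_
    rw [abs_mul, abs_mul]
    gcongr
    exact mul_le_of_le_one_left (abs_nonneg d) (Real.abs_cos_le_one _)
  have hrpow : |S| ^ (-(1 / 2) : ℝ) = (√|S|)⁻¹ := by
    rw [Real.rpow_neg (abs_nonneg S), Real.sqrt_eq_rpow]
  calc |deriv flatSine x * (√|flatSine x|)⁻¹|
      = |Real.cos (phase x) * d + S * q| * w * (√|S|)⁻¹ := by
        rw [deriv_flatSine hx, sqrt_abs_flatSine hx, expNegInvGlue_sq_eq_exp_sq hx, abs_mul,
          abs_mul, abs_sq, abs_of_pos (inv_pos.2 (mul_pos hr hw)), mul_assoc, mul_assoc, hcancel]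
    _ ≤ (|d| + √|S| * |q|) * w * (√|S|)⁻¹ := by gcongr
    _ = (1 + phase x ^ 2) * w * (|d| * ((1 + phase x ^ 2)⁻¹ * (√|S|)⁻¹)) + |q| * w := by
        field_simp
    _ ≤ C * (|d| * ((1 + phase x ^ 2)⁻¹ * |S| ^ (-(1 / 2) : ℝ))) + C' := by
        rw [hrpow]
        gcongr
        · exact (mul_le_mul_of_nonneg_right (le_abs_self _) hw.le).trans (hC x)
        · exact hC' x

theorem integrableOn_deriv_flatSine_mul_inv_sqrt {s : Set ℝ}
    (hs : volume s ≠ ⊤) : IntegrableOn (fun x ↦ deriv flatSine x * (√|flatSine x|)⁻¹) s := by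
  obtain ⟨C, C', hbound⟩ := exists_abs_deriv_flatSine_mul_inv_sqrt_le
  have hsubst : IntegrableOn (fun x ↦ |-(phase x * x⁻¹ ^ 2)| *
      ((1 + phase x ^ 2)⁻¹ * |Real.sin (phase x)| ^ (-(1 / 2) : ℝ))) {0}ᶜ :=
    (integrableOn_image_iff_integrableOn_abs_deriv_smul (measurableSet_singleton 0).compl
      (fun x hx ↦ (hasDerivAt_phase hx).hasDerivWithinAt) phase_injective.injOn _).1
      (integrable_inv_one_add_sq_mul_abs_sin_rpow (by norm_num) (by norm_num)).integrableOn
  rw [integrableOn_congr_set_ae (ae_eq_univ.2 (by simp)), integrableOn_univ] at hsubst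
  have hmeas : AEStronglyMeasurable (fun x ↦ deriv flatSine x * (√|flatSine x|)⁻¹) := by
    have := contDiff_flatSine.continuous.measurable
    fun_prop
  refine ((hsubst.integrableOn.const_mul C).add (integrableOn_const (C := C') hs)).mono'
    hmeas.restrict ?_
  filter_upwards [ae_restrict_of_ae ae_sin_phase_ne_zero, Measure.ae_ne _ 0] with x hsin hx
  exact hbound x hx hsin

end FlatSineRatio

section SquareSub

variable {u : ℝ → ℝ}

lemma fderiv_sq_sub_apply {p : ℝ × ℝ} (hu : DifferentiableAt ℝ u p.1) (e : ℝ × ℝ) :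
    fderiv ℝ (fun p : ℝ × ℝ ↦ p.2 ^ 2 - u p.1) p e = 2 * p.2 * e.2 - deriv u p.1 * e.1 := by
  have hd : HasFDerivAt (fun p : ℝ × ℝ ↦ p.2 ^ 2 - u p.1) _ p :=
    (HasFDerivAt.pow hasFDerivAt_snd 2).sub
      (hu.hasDerivAt.comp_hasFDerivAt p (ContinuousLinearMap.fst ℝ ℝ ℝ).hasFDerivAt)
  rw [hd.fderiv]
  simp

lemma closedBall_zero_eq_prod_Icc :
    Metric.closedBall (0 : ℝ × ℝ) (1 / 4) = Icc (-1 / 4) (1 / 4) ×ˢ Icc (-1 / 4) (1 / 4) := by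
  rw [← Prod.mk_zero_zero, ← closedBall_prod_same, Real.closedBall_eq_Icc]
  norm_num [neg_div]

lemma abs_sq_sub_le_of_mem_closedBall (hle : ∀ x, |x| ≤ 1 / 4 → |u x| ≤ 1 / 16) {p : ℝ × ℝ}
    (hp : p ∈ Metric.closedBall 0 (1 / 4)) : |p.2 ^ 2 - u p.1| ≤ 1 / 8 := by
  rw [mem_closedBall_zero_iff] at hp
  exact abs_sq_sub_le ((norm_snd_le p).trans hp) (hle _ ((norm_fst_le p).trans hp))

lemma integrableOn_invLog_sq_sub (hu : Continuous u) (hle : ∀ x, |x| ≤ 1 / 4 → |u x| ≤ 1 / 16) :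
    IntegrableOn (fun p : ℝ × ℝ ↦ invLog (p.2 ^ 2 - u p.1)) (Metric.closedBall 0 (1 / 4)) := by
  refine ContinuousOn.integrableOn_compact (isCompact_closedBall _ _) fun p hp ↦ ?_
  have hcont : Continuous fun p : ℝ × ℝ ↦ p.2 ^ 2 - u p.1 := by fun_prop
  exact (ContinuousAt.comp (f := fun p : ℝ × ℝ ↦ p.2 ^ 2 - u p.1) (continuousAt_invLog
    ((abs_sq_sub_le_of_mem_closedBall hle hp).trans_lt (by norm_num)))
    hcont.continuousAt).continuousWithinAt

theorem integrableOn_fderiv_sq_sub_mul_deriv_invLog (hu : Differentiable ℝ u)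
    (hle : ∀ x, |x| ≤ 1 / 4 → |u x| ≤ 1 / 16) (hne : ∀ᵐ x, u x ≠ 0)
    (hratio : IntegrableOn (fun x ↦ deriv u x * (√|u x|)⁻¹) (Icc (-1 / 4) (1 / 4))) (e : ℝ × ℝ) :
    IntegrableOn (fun p ↦ fderiv ℝ (fun p : ℝ × ℝ ↦ p.2 ^ 2 - u p.1) p e *
      deriv invLog (p.2 ^ 2 - u p.1)) (Metric.closedBall 0 (1 / 4)) := by
  have hmeas : Measurable u := hu.continuous.measurable
  rw [closedBall_zero_eq_prod_Icc]
  refine (((integrableOn_two_mul_deriv_invLog_sq_sub hmeas hle).const_mul e.2).sub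
    ((integrableOn_deriv_mul_deriv_invLog_sq_sub hmeas hle hne hratio).const_mul e.1)).congr ?_
  refine .of_forall fun p ↦ ?_
  simp only [Pi.sub_apply, fderiv_sq_sub_apply (hu p.1)]
  ring

end SquareSub

/-- For `f(x,y) = y² - sin(e^{1/x} π) e^{-1/x²}` (and `f(0,y) = y²`): `f` is smooth near the
origin of `ℝ²`, vanishes to second order at the origin, and `1/ln|f|` (extended by `0` on
`f⁻¹(0)`) belongs to `W^{1,1}` near the origin. -/
theorem stmt13 (f : ℝ × ℝ → ℝ)
    (hf : ∀ p : ℝ × ℝ, f p = if p.1 = 0 then p.2 ^ 2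
      else p.2 ^ 2 - Real.sin (Real.exp (1 / p.1) * Real.pi) * Real.exp (-(1 / p.1 ^ 2)))
    (v : ℝ × ℝ → ℝ)
    (hv : ∀ p, v p = if f p = 0 then 0 else 1 / Real.log |f p|) :
    ∃ V : Set (ℝ × ℝ), IsOpen V ∧ (0, 0) ∈ V ∧
      ContDiffOn ℝ (⊤ : ℕ∞) f V ∧
      f (0, 0) = 0 ∧ fderiv ℝ f (0, 0) = 0 ∧
      (∀ p ∈ V, |f p| < 1/2) ∧
      IntegrableOn v V volume ∧
      ∃ g₁ g₂ : ℝ × ℝ → ℝ, IntegrableOn g₁ V volume ∧ IntegrableOn g₂ V volume ∧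
        ∀ η : ℝ × ℝ → ℝ, ContDiff ℝ (⊤ : ℕ∞) η → HasCompactSupport η → tsupport η ⊆ V →
          (∫ p in V, v p * fderiv ℝ η p (1, 0) = - ∫ p in V, η p * g₁ p) ∧
          (∫ p in V, v p * fderiv ℝ η p (0, 1) = - ∫ p in V, η p * g₂ p) := by
  obtain rfl : f = fun p ↦ p.2 ^ 2 - flatSine p.1 := funext fun p ↦ by
    rw [hf, flatSine_eq_ite, sub_ite, sub_zero]
  obtain rfl : v = fun p ↦ invLog (p.2 ^ 2 - flatSine p.1) := funext fun p ↦ by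
    rw [hv, invLog_eq_ite]
  have hsmooth : ContDiff ℝ ∞ fun p : ℝ × ℝ ↦ p.2 ^ 2 - flatSine p.1 :=
    (contDiff_snd.pow 2).sub (contDiff_flatSine.comp contDiff_fst)
  have hdiff : Differentiable ℝ flatSine := contDiff_flatSine.differentiable (by simp)
  have hle (x : ℝ) (hx : |x| ≤ 1 / 4) : |flatSine x| ≤ 1 / 16 := abs_flatSine_le hx
  have hsmall (p : ℝ × ℝ) (hp : p ∈ Metric.ball 0 (1 / 4)) : |p.2 ^ 2 - flatSine p.1| < 1 / 2 :=
    (abs_sq_sub_le_of_mem_closedBall hle (Metric.ball_subset_closedBall hp)).trans_lt (by norm_num)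
  have hint := (integrableOn_invLog_sq_sub hdiff.continuous hle).mono_set
    Metric.ball_subset_closedBall
  have hgrad (e) := (integrableOn_fderiv_sq_sub_mul_deriv_invLog hdiff hle ae_flatSine_ne_zero
    (integrableOn_deriv_flatSine_mul_inv_sqrt measure_Icc_lt_top.ne) e).mono_set
      Metric.ball_subset_closedBall
  have hweak (e) := hasWeakDirDerivOn_invLog_comp Metric.isOpen_ball
    (fun p _ ↦ hsmooth.differentiable (by simp) p) (fun p hp ↦ (hsmall p hp).trans (by norm_num))
    hint (hgrad e)
  refine ⟨Metric.ball 0 (1 / 4), Metric.isOpen_ball, Metric.mem_ball_self (by norm_num),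
    hsmooth.contDiffOn, by simp [flatSine], ?_, hsmall, hint, _, _, hgrad (1, 0), hgrad (0, 1),
    fun η hη hc hηV ↦ ⟨hweak _ η hη hc hηV, hweak _ η hη hc hηV⟩⟩
  exact ContinuousLinearMap.ext fun e ↦ by
    simp [fderiv_sq_sub_apply (p := (0, 0)) (hdiff 0), deriv_flatSine_zero]
end

section
/- If f is a real-valued C¹ function on a domain U ⊂ ℝⁿ with |f| < 1/2, f(x₀) = 0, and ∇f(x₀) ≠ 0 at some point x₀, then 1/ln|f| ∉ W^{1,p}_loc near x₀ for any p > 1; in fact ∫_V |∇f|/(|f|^p |ln|f||^{2p}) dV = ∞ for every neighborhood V of x₀. -/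
open MeasureTheory

/-!
Fix a direction `v` with `∇f(x₀) · v > 0`. There is an `a > 0` such that, for every `x` close to
`x₀`, `f` is strictly increasing along the segment `x + t v`, `|t| ≤ a`, and takes the value `f x₀`
in its interior. The substitution `u = f (x + t v)` then turns `∫ |∂ᵥf| h(f) dt` into the integral
of `h` over a neighbourhood of `f x₀`. If the latter is always infinite, averaging over `x` with
Tonelli and translation invariance of the measure gives `∫ |∇f| h(f) = ∞` near `x₀`, without the
coarea formula. For `h(u) = 1 / (|u|^p |ln|u||^q)` with `p > 1`, the one-dimensional integral
diverges at `0` because `|u|^p |ln|u||^q = o(|u|)`.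
-/

open Set Filter Topology Asymptotics
open scoped ENNReal

/-- `DivergesAt μ h x` says that the integral of the nonnegative function `h` is infinite over every
neighbourhood of `x`; for measurable `h` this is the failure of local integrability at `x`. -/
def DivergesAt {α : Type*} [TopologicalSpace α] [MeasurableSpace α] (μ : Measure α)
    (h : α → ℝ≥0∞) (x : α) : Prop :=
  ∀ s ∈ 𝓝 x, ∫⁻ y in s, h y ∂μ = ⊤

lemma divergesAt_ofReal_of_sub_inv_isBigO {w : ℝ → ℝ} {c : ℝ} (hw : 0 ≤ w) (hmeas : Measurable w)
    (hbigO : (fun t => (t - c)⁻¹) =O[𝓝[≠] c] w) :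
    DivergesAt volume (fun t => ENNReal.ofReal (w t)) c := by
  intro s hs
  obtain ⟨ε, hε, hεs⟩ := Metric.nhds_basis_closedBall.mem_iff.1 hs
  rw [Real.closedBall_eq_Icc] at hεs
  have hnot : ¬IntegrableOn w (Icc (c - ε) (c + ε)) := by
    rw [← intervalIntegrable_iff_integrableOn_Icc_of_le (by linarith)]
    exact not_intervalIntegrable_of_sub_inv_isBigO_punctured hbigO (by linarith)
      (by rw [uIcc_of_le (by linarith)]; constructor <;> linarith)
  have htop : ∫⁻ t in Icc (c - ε) (c + ε), ENNReal.ofReal (w t) = ⊤ := by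
    by_contra hfin
    exact hnot ⟨hmeas.aestronglyMeasurable,
      (hasFiniteIntegral_iff_ofReal (.of_forall hw)).2 (lt_top_iff_ne_top.2 hfin)⟩
  exact top_unique (htop.ge.trans (lintegral_mono_set hεs))

section PowerLogWeight

variable {p : ℝ}

lemma isLittleO_abs_rpow_mul_abs_log_rpow (hp : 1 < p) (q : ℝ) :
    (fun t : ℝ => |t| ^ p * |Real.log t| ^ q) =o[𝓝[≠] 0] fun t => t := by
  have hright : (fun u : ℝ => u ^ p * |Real.log u| ^ q) =o[𝓝[>] 0] fun u => u := by
    refine ((isBigO_refl (fun u : ℝ => u ^ p) _).mul_isLittleO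
      (isLittleO_abs_log_rpow_rpow_nhdsGT_zero q (sub_neg.2 hp))).congr' .rfl ?_
    filter_upwards [self_mem_nhdsWithin] with u (hu : 0 < u)
    rw [← Real.rpow_add hu, add_sub_cancel, Real.rpow_one]
  have habs := (hright.comp_tendsto tendsto_abs_nhdsNE_zero).of_abs_right
  simpa only [Function.comp_def, Real.log_abs] using habs

lemma divergesAt_inv_abs_rpow_mul_abs_log_rpow (hp : 1 < p) (q : ℝ) :
    DivergesAt volume (fun t : ℝ => ENNReal.ofReal (|t| ^ p * |Real.log t| ^ q)⁻¹) 0 := by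
  have hweight_ne : ∀ᶠ t : ℝ in 𝓝[≠] 0, |t| ^ p * |Real.log t| ^ q ≠ 0 := by
    filter_upwards [self_mem_nhdsWithin, Real.tendsto_log_nhdsNE_zero.eventually_lt_atBot 0]
      with t (ht : t ≠ 0) hlog
    have : 0 < |Real.log t| := abs_pos.2 hlog.ne
    positivity
  refine divergesAt_ofReal_of_sub_inv_isBigO (fun t => by positivity) (by fun_prop) ?_
  simpa only [sub_zero] using (isLittleO_abs_rpow_mul_abs_log_rpow hp q).isBigO.inv_rev
    (hweight_ne.mono fun t ht h => absurd h ht)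

end PowerLogWeight

section Translates

variable {G T : Type*} [AddGroup G] [MeasurableSpace G] [MeasurableAdd₂ G] [MeasurableSpace T]
  {μ : Measure G} [SFinite μ] [μ.IsAddRightInvariant] {ν : Measure T} {c : T → G} {g : G → ℝ≥0∞}

lemma lintegral_lintegral_add_right [SFinite ν] (hc : Measurable c) (hg : Measurable g) :
    ∫⁻ x, ∫⁻ t, g (x + c t) ∂ν ∂μ = (∫⁻ x, g x ∂μ) * ν univ := by
  rw [lintegral_lintegral_swap (by fun_prop)]
  simp only [lintegral_add_right_eq_self, lintegral_const]

lemma lintegral_eq_top_of_eventually_lintegral_add_right [TopologicalSpace G]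
    [μ.IsOpenPosMeasure] [IsFiniteMeasure ν] (hc : Measurable c) (hg : Measurable g) {x₀ : G}
    (htop : ∀ᶠ x in 𝓝 x₀, ∫⁻ t, g (x + c t) ∂ν = ⊤) :
    ∫⁻ x, g x ∂μ = ⊤ := by
  have hdouble : ∫⁻ x, ∫⁻ t, g (x + c t) ∂ν ∂μ = ⊤ :=
    lintegral_eq_top_of_measure_eq_top_ne_zero
      (Measurable.lintegral_prod_right' (f := fun z : G × T => g (z.1 + c z.2))
        (by fun_prop)).aemeasurable
      (Measure.measure_pos_of_mem_nhds μ htop).ne'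
  rw [lintegral_lintegral_add_right hc hg] at hdouble
  by_contra hfin
  exact ENNReal.mul_ne_top hfin (measure_ne_top ν univ) hdouble

end Translates

lemma strictMonoOn_Icc_of_deriv_pos {φ : ℝ → ℝ} {a b : ℝ} (hpos : ∀ t ∈ Icc a b, 0 < deriv φ t) :
    StrictMonoOn φ (Icc a b) :=
  strictMonoOn_of_deriv_pos (convex_Icc a b)
    (fun t ht =>
      (differentiableAt_of_deriv_ne_zero (hpos t ht).ne').continuousAt.continuousWithinAt)
    fun t ht => hpos t (interior_subset ht)

lemma setLIntegral_enorm_deriv_mul_comp_eq_top {φ : ℝ → ℝ} {h : ℝ → ℝ≥0∞} {a b c : ℝ} (hab : a ≤ b)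
    (hpos : ∀ t ∈ Icc a b, 0 < deriv φ t) (hc : c ∈ Ioo (φ a) (φ b)) (hh : DivergesAt volume h c) :
    ∫⁻ t in Icc a b, ‖deriv φ t‖ₑ * h (φ t) = ⊤ := by
  have hderiv : ∀ t ∈ Icc a b, HasDerivAt φ (deriv φ t) t := fun t ht =>
    (differentiableAt_of_deriv_ne_zero (hpos t ht).ne').hasDerivAt
  have hcont : ContinuousOn φ (Icc a b) := HasDerivAt.continuousOn hderiv
  have himage : φ '' Icc a b ∈ 𝓝 c :=
    mem_of_superset (Icc_mem_nhds hc.1 hc.2) (intermediate_value_Icc hab hcont)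
  simp only [← ofReal_norm, Real.norm_eq_abs]
  rw [← lintegral_image_eq_lintegral_abs_deriv_mul measurableSet_Icc
    (fun t ht => (hderiv t ht).hasDerivWithinAt)
    (strictMonoOn_Icc_of_deriv_pos hpos).injOn]
  exact hh _ himage

section DirectionalDerivative

variable {𝕜 E F : Type*} [NontriviallyNormedField 𝕜] [NormedAddCommGroup E] [NormedSpace 𝕜 E]
  [NormedAddCommGroup F] [NormedSpace 𝕜 F] {f : E → F} {x v : E}

lemma differentiableAt_of_fderiv_apply_ne_zero (hv : fderiv 𝕜 f x v ≠ 0) :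
    DifferentiableAt 𝕜 f x := by
  by_contra hf
  exact hv (by rw [fderiv_zero_of_not_differentiableAt hf, zero_apply])

lemma deriv_comp_add_smul {t : 𝕜} (hf : DifferentiableAt 𝕜 f (x + t • v)) :
    deriv (fun s : 𝕜 => f (x + s • v)) t = fderiv 𝕜 f (x + t • v) v := by
  have hline : HasDerivAt (fun s : 𝕜 => x + s • v) v t := by
    simpa using ((hasDerivAt_id t).smul_const v).const_add x
  exact (hf.hasFDerivAt.comp_hasDerivAt t hline).deriv

end DirectionalDerivative

lemma exists_pos_eventually_forall_add_smul_mem {E : Type*} [AddCommGroup E] [Module ℝ E]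
    [TopologicalSpace E] [ContinuousAdd E] [ContinuousSMul ℝ E] {W : Set E} {x₀ : E}
    (hW : W ∈ 𝓝 x₀) (v : E) :
    ∃ a : ℝ, 0 < a ∧ ∀ᶠ x in 𝓝 x₀, ∀ t ∈ Icc (-a) a, x + t • v ∈ W := by
  have hcont : Tendsto (fun z : E × ℝ => z.1 + z.2 • v) (𝓝 x₀ ×ˢ 𝓝 0) (𝓝 x₀) := by
    rw [← nhds_prod_eq]
    exact Continuous.tendsto' (by fun_prop) _ _ (by simp)
  obtain ⟨B, hB, S, hS, hBS⟩ := mem_prod_iff.1 (hcont hW)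
  obtain ⟨a, ha, haS⟩ := Metric.nhds_basis_closedBall.mem_iff.1 hS
  rw [Real.closedBall_eq_Icc, zero_sub, zero_add] at haS
  exact ⟨a, ha, mem_of_superset hB fun x hx t ht => hBS (mk_mem_prod hx (haS ht))⟩

section Line

variable {E : Type*} [NormedAddCommGroup E] [NormedSpace ℝ E] {f : E → ℝ} {h : ℝ → ℝ≥0∞}

lemma setLIntegral_line_eq_top {x v : E} {a b c : ℝ} (hab : a ≤ b)
    (hpos : ∀ t ∈ Icc a b, 0 < fderiv ℝ f (x + t • v) v)
    (hc : c ∈ Ioo (f (x + a • v)) (f (x + b • v))) (hh : DivergesAt volume h c) :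
    ∫⁻ t in Icc a b, ‖fderiv ℝ f (x + t • v)‖ₑ * h (f (x + t • v)) = ⊤ := by
  set φ : ℝ → ℝ := fun t => f (x + t • v)
  have hφ : ∀ t ∈ Icc a b, deriv φ t = fderiv ℝ f (x + t • v) v := fun t ht =>
    deriv_comp_add_smul (differentiableAt_of_fderiv_apply_ne_zero (hpos t ht).ne')
  have htop : ∫⁻ t in Icc a b, ‖deriv φ t‖ₑ * h (φ t) = ⊤ :=
    setLIntegral_enorm_deriv_mul_comp_eq_top hab
      (fun t ht => (hpos t ht).trans_eq (hφ t ht).symm) hc hh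
  have hle : ∫⁻ t in Icc a b, ‖deriv φ t‖ₑ * h (φ t) ≤
      ‖v‖ₑ * ∫⁻ t in Icc a b, ‖fderiv ℝ f (x + t • v)‖ₑ * h (φ t) := by
    rw [← lintegral_const_mul' _ _ enorm_ne_top]
    refine setLIntegral_mono' measurableSet_Icc fun t ht => ?_
    calc ‖deriv φ t‖ₑ * h (φ t) = ‖fderiv ℝ f (x + t • v) v‖ₑ * h (φ t) := by rw [hφ t ht]
      _ ≤ ‖fderiv ℝ f (x + t • v)‖ₑ * ‖v‖ₑ * h (φ t) := by
        gcongr; exact ContinuousLinearMap.le_opENorm _ _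
      _ = ‖v‖ₑ * (‖fderiv ℝ f (x + t • v)‖ₑ * h (φ t)) := by ring
  by_contra hfin
  exact ENNReal.mul_ne_top enorm_ne_top hfin (top_unique (htop.ge.trans hle))

lemma exists_eventually_setLIntegral_line_eq_top {W : Set E} {x₀ v : E} (hW : W ∈ 𝓝 x₀)
    (hpos : ∀ x ∈ W, 0 < fderiv ℝ f x v) (hh : DivergesAt volume h (f x₀)) :
    ∃ a : ℝ, ∀ᶠ x in 𝓝 x₀, ∫⁻ t in Icc (-a) a,
      W.indicator (fun y => ‖fderiv ℝ f y‖ₑ * h (f y)) (x + t • v) = ⊤ := by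
  have hdiff : ∀ x ∈ W, DifferentiableAt ℝ f x := fun x hx =>
    differentiableAt_of_fderiv_apply_ne_zero (hpos x hx).ne'
  obtain ⟨a, ha, hseg⟩ := exists_pos_eventually_forall_add_smul_mem hW v
  have hseg₀ : ∀ t ∈ Icc (-a) a, x₀ + t • v ∈ W := hseg.self_of_nhds
  have hmono : StrictMonoOn (fun t : ℝ => f (x₀ + t • v)) (Icc (-a) a) :=
    strictMonoOn_Icc_of_deriv_pos fun t ht =>
      (hpos _ (hseg₀ t ht)).trans_eq (deriv_comp_add_smul (hdiff _ (hseg₀ t ht))).symm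
  have hends : ∀ t ∈ Icc (-a) a, ContinuousAt (fun x => f (x + t • v)) x₀ := fun t ht =>
    (hdiff _ (hseg₀ t ht)).continuousAt.comp (f := fun x => x + t • v) (by fun_prop)
  have hleft : -a ∈ Icc (-a) a := left_mem_Icc.2 (by linarith)
  have hright : a ∈ Icc (-a) a := right_mem_Icc.2 (by linarith)
  have hzero : (0 : ℝ) ∈ Icc (-a) a := ⟨by linarith, ha.le⟩
  have hlt_left : f (x₀ + (-a) • v) < f x₀ := by
    simpa using hmono hleft hzero (neg_neg_of_pos ha)
  have hlt_right : f x₀ < f (x₀ + a • v) := by simpa using hmono hzero hright ha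
  refine ⟨a, ?_⟩
  filter_upwards [hseg, (hends _ hleft).eventually_lt_const hlt_left,
    (hends _ hright).eventually_const_lt hlt_right] with x hx hxl hxr
  rw [← setLIntegral_line_eq_top (by linarith) (fun t ht => hpos _ (hx t ht)) ⟨hxl, hxr⟩ hh]
  exact setLIntegral_congr_fun measurableSet_Icc fun t ht => indicator_of_mem (hx t ht) _

lemma exists_isOpen_fderiv_apply_pos {x₀ v : E} (hf : ContDiffAt ℝ 1 f x₀)
    (hv : 0 < fderiv ℝ f x₀ v) {V : Set E} (hV : V ∈ 𝓝 x₀) :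
    ∃ W ⊆ V, IsOpen W ∧ x₀ ∈ W ∧ ∀ x ∈ W, 0 < fderiv ℝ f x v := by
  have hpos : ∀ᶠ x in 𝓝 x₀, 0 < fderiv ℝ f x v :=
    ((hf.continuousAt_fderiv one_ne_zero).clm_apply continuousAt_const).eventually_const_lt hv
  obtain ⟨W, hW, hWo, hxW⟩ := mem_nhds_iff.1 (inter_mem hV hpos)
  exact ⟨W, fun x hx => (hW hx).1, hWo, hxW, fun x hx => (hW hx).2⟩

end Line

lemma measurable_indicator_enorm_fderiv_mul_comp {E F : Type*} [NormedAddCommGroup E]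
    [NormedSpace ℝ E] [MeasurableSpace E] [OpensMeasurableSpace E] [NormedAddCommGroup F]
    [NormedSpace ℝ F] [CompleteSpace F] [MeasurableSpace F] [BorelSpace F] {f : E → F}
    {h : F → ℝ≥0∞} (hh : Measurable h) {W : Set E} (hW : MeasurableSet W) (hf : ContinuousOn f W) :
    Measurable (W.indicator fun y => ‖fderiv ℝ f y‖ₑ * h (f y)) := by
  classical
  have hfW : Measurable (W.piecewise f 0) := hf.measurable_piecewise continuousOn_const hW
  have heq : (W.indicator fun y => ‖fderiv ℝ f y‖ₑ * h (f y)) =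
      W.indicator fun y => ‖fderiv ℝ f y‖ₑ * h (W.piecewise f 0 y) :=
    indicator_congr fun y hy => by rw [piecewise_eq_of_mem _ _ _ hy]
  rw [heq]
  exact ((measurable_fderiv ℝ f).enorm.mul (hh.comp hfW)).indicator hW

section Haar

variable {E : Type*} [NormedAddCommGroup E] [NormedSpace ℝ E] [FiniteDimensional ℝ E]
  [MeasurableSpace E] [BorelSpace E] {μ : Measure E} [μ.IsAddHaarMeasure]

theorem DivergesAt.enorm_fderiv_mul_comp {f : E → ℝ} {x₀ : E} {h : ℝ → ℝ≥0∞}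
    (hh : DivergesAt volume h (f x₀)) (hmeas : Measurable h) (hf : ContDiffAt ℝ 1 f x₀)
    (hdf : fderiv ℝ f x₀ ≠ 0) :
    DivergesAt μ (fun x => ‖fderiv ℝ f x‖ₑ * h (f x)) x₀ := by
  intro V hV
  obtain ⟨v, hv⟩ : ∃ v, 0 < fderiv ℝ f x₀ v := by
    obtain ⟨w, hw⟩ := DFunLike.ne_iff.1 hdf
    rcases lt_or_gt_of_ne hw with hneg | hpos
    · exact ⟨-w, by simpa using hneg⟩
    · exact ⟨w, hpos⟩
  obtain ⟨W, hWV, hWo, hxW, hW⟩ := exists_isOpen_fderiv_apply_pos hf hv hV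
  obtain ⟨a, hlines⟩ := exists_eventually_setLIntegral_line_eq_top (hWo.mem_nhds hxW) hW hh
  have hcont : ContinuousOn f W := fun x hx =>
    (differentiableAt_of_fderiv_apply_ne_zero (hW x hx).ne').continuousAt.continuousWithinAt
  have htop : ∫⁻ x in W, ‖fderiv ℝ f x‖ₑ * h (f x) ∂μ = ⊤ := by
    rw [← lintegral_indicator hWo.measurableSet]
    exact lintegral_eq_top_of_eventually_lintegral_add_right (by fun_prop)
      (measurable_indicator_enorm_fderiv_mul_comp hmeas hWo.measurableSet hcont) hlines
  exact top_unique (htop.ge.trans (lintegral_mono_set hWV))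

theorem stmt18_general {f : E → ℝ} {x₀ : E} (hf : ContDiffAt ℝ 1 f x₀) (hfx₀ : f x₀ = 0)
    (hdf : fderiv ℝ f x₀ ≠ 0) {p : ℝ} (hp : 1 < p) (q : ℝ) :
    DivergesAt μ
      (fun x => ENNReal.ofReal (‖fderiv ℝ f x‖ / (|f x| ^ p * |Real.log (|f x|)| ^ q))) x₀ := by
  have hweight := hfx₀ ▸ divergesAt_inv_abs_rpow_mul_abs_log_rpow hp q
  simpa only [div_eq_mul_inv, ENNReal.ofReal_mul (norm_nonneg _), ofReal_norm, Real.log_abs]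
    using hweight.enorm_fderiv_mul_comp (μ := μ) (by fun_prop) hf hdf

end Haar

/-- If `f` is `C¹` on a domain `U ⊆ ℝⁿ` with `|f| < 1/2`, `f(x₀) = 0` and `∇f(x₀) ≠ 0`, then
for every `p > 1` and every neighborhood `V ⊆ U` of `x₀`,
`∫_V |∇f|/(|f|^p |ln|f||^{2p}) dV = ∞`; in particular `1/ln|f| ∉ W^{1,p}_loc` near `x₀`. -/
theorem stmt18 {n : ℕ} (hn : 1 ≤ n) (U : Set (EuclideanSpace ℝ (Fin n))) (hU : IsOpen U)
    (hUconn : IsConnected U) (f : EuclideanSpace ℝ (Fin n) → ℝ)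
    (hf : ContDiffOn ℝ 1 f U) (hfsmall : ∀ x ∈ U, |f x| < 1/2)
    (x₀ : EuclideanSpace ℝ (Fin n)) (hx₀ : x₀ ∈ U)
    (hfx₀ : f x₀ = 0) (hdf : fderiv ℝ f x₀ ≠ 0) :
    ∀ p : ℝ, 1 < p → ∀ V : Set (EuclideanSpace ℝ (Fin n)),
      IsOpen V → x₀ ∈ V → V ⊆ U →
      ∫⁻ x in V, ENNReal.ofReal
        (‖fderiv ℝ f x‖ / (|f x| ^ p * (abs (Real.log (abs (f x)))) ^ (2 * p))) = ⊤ := by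
  intro p hp V hV hxV _
  exact stmt18_general (hf.contDiffAt (hU.mem_nhds hx₀)) hfx₀ hdf hp (2 * p) V (hV.mem_nhds hxV)
end

section
/- Let f be real-analytic on a neighborhood of 0 in ℝⁿ with f(0) = 0. Then there exist a neighborhood V of 0 and constants C > 0 and β ∈ (0,1) such that |∇f(x)| ≥ C|f(x)|^β for all x ∈ V (Łojasiewicz gradient inequality), and consequently for p > 1, |∇f(x)|^{p} ≥ C^{p−1}|f(x)|^{(p−1)β} |∇f(x)| on V. -/
/-!
If `g` is a monomial `y ^ α` times a unit, Euler's identity `Dg(y)(yᵢ eᵢ) = αᵢ g + o(g)` gives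
`g = O(yᵢ ‖Dg‖)`; multiplying these estimates over `i` yields `g ^ k = O(g ‖Dg‖ ^ k)` with
`k = ∑ αᵢ`, hence `|g| ^ β ≤ ‖Dg‖` for a suitable `β < 1`. By the chain rule such an estimate
descends from `f ∘ φ` to `f`, so it is enough to resolve `f` locally. This is done along an
ultrafilter `U ≤ 𝓝 0`, which plays the role of a valuation: it selects one chart of every blow-up
and one point over `0` in that chart. By induction on the dimension, after a Tschirnhausen shift and
monomialization of the coefficients, a weighted blow-up either makes the germ a monomial times a
unit or lowers its order. The sets `{|f| ≤ 1, |f| ^ β ≤ ‖Df‖}` increase with `β < 1`, and every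
ultrafilter `U ≤ 𝓝 0` contains one of them; by compactness of the space of ultrafilters, one of
them is a neighbourhood of `0`.
-/

open Filter Topology Asymptotics

namespace Lojasiewicz

section Division

variable {E F G : Type*} [NormedAddCommGroup E] [NormedSpace ℝ E] [NormedAddCommGroup F]
  [NormedSpace ℝ F] [NormedAddCommGroup G] [NormedSpace ℝ G]

theorem norm_compContinuousLinearMap_le_of_norm_le_one {k : ℕ} (M : F [×k]→L[ℝ] G)
    {A : E →L[ℝ] F} (hA : ‖A‖ ≤ 1) : ‖M.compContinuousLinearMap fun _ => A‖ ≤ ‖M‖ := by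
  refine (M.norm_compContinuousLinearMap_le _).trans ?_
  simpa using mul_le_of_le_one_right (norm_nonneg M) (pow_le_one₀ (norm_nonneg A) hA)

variable [CompleteSpace G]

/-- The series `∑ k, ∫₀¹ p k ∘ L s` represents the integral: since each `L s` is a contraction,
its radius of convergence is at least that of `p`. -/
theorem analyticAt_intervalIntegral_comp {h : F → G} (hh : AnalyticAt ℝ h 0)
    {L : ℝ → E →L[ℝ] F} (hLc : Continuous L) (hL : ∀ s ∈ Set.Ioc (0 : ℝ) 1, ‖L s‖ ≤ 1) :
    AnalyticAt ℝ (fun x => ∫ s in (0 : ℝ)..1, h (L s x)) 0 := by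
  obtain ⟨p, r, hp⟩ := hh
  have hcont (k : ℕ) : Continuous fun s => (p k).compContinuousLinearMap fun _ => L s :=
    (ContinuousMultilinearMap.compContinuousLinearMapContinuousMultilinear ℝ (fun _ : Fin k => E)
      (fun _ => F) G).cont.comp (continuous_pi fun _ => hLc) |>.clm_apply continuous_const
  have hnorm (k : ℕ) : ‖∫ s in (0 : ℝ)..1, (p k).compContinuousLinearMap fun _ => L s‖ ≤ ‖p k‖ := by
    simpa using intervalIntegral.norm_integral_le_of_norm_le_const (a := 0) (b := 1)
      fun s hs => norm_compContinuousLinearMap_le_of_norm_le_one (p k)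
        (hL s (by rwa [Set.uIoc_of_le zero_le_one] at hs))
  refine ⟨fun k => ∫ s in (0 : ℝ)..1, (p k).compContinuousLinearMap fun _ => L s, r,
    hp.r_le.trans (FormalMultilinearSeries.radius_le_of_le hnorm), hp.r_pos, fun {y} hy => ?_⟩
  rw [zero_add, Metric.mem_eball, edist_zero_right] at *
  have heval (k : ℕ) : (∫ s in (0 : ℝ)..1, (p k).compContinuousLinearMap fun _ => L s) (fun _ => y)
      = ∫ s in (0 : ℝ)..1, p k fun _ => L s y :=
    ((ContinuousMultilinearMap.apply ℝ (fun _ : Fin k => E) G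
      fun _ => y).intervalIntegral_comp_comm ((hcont k).intervalIntegrable 0 1)).symm
  simp only [heval]
  have hle {s : ℝ} (hs : s ∈ Set.uIoc (0 : ℝ) 1) : ‖L s y‖ ≤ ‖y‖ := by
    rw [Set.uIoc_of_le zero_le_one] at hs
    exact ((L s).le_of_opNorm_le (hL s hs) y).trans_eq (one_mul _)
  refine intervalIntegral.hasSum_integral_of_dominated_convergence
    (fun k _ => ‖p k‖ * ‖y‖ ^ k) (fun k => ?_) (fun k => .of_forall fun s hs => ?_)
    (.of_forall fun _ _ => ?_) intervalIntegrable_const (.of_forall fun s hs => ?_)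
  · exact ((p k).cont.comp (continuous_pi fun _ =>
      hLc.clm_apply continuous_const)).aestronglyMeasurable
  · refine ((p k).le_opNorm _).trans ?_
    simpa using by gcongr; exact hle hs
  · exact p.summable_norm_mul_pow (r := ‖y‖₊) (hy.trans_le hp.r_le)
  · simpa using hp.hasSum (y := L s y) (by
      rw [Metric.mem_eball, edist_zero_right]
      exact (enorm_le_iff_norm_le.2 (hle hs)).trans_lt hy)

theorem exists_analyticAt_eq_add_smul {g : E × ℝ → G} (hg : AnalyticAt ℝ g 0) :
    ∃ u : E × ℝ → G, AnalyticAt ℝ u 0 ∧ ∀ᶠ q in 𝓝 0, g q = g (q.1, 0) + q.2 • u q := by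
  set L : ℝ → E × ℝ →L[ℝ] E × ℝ := fun s =>
    .inl ℝ E ℝ ∘L .fst ℝ E ℝ + s • .inr ℝ E ℝ ∘L .snd ℝ E ℝ with hL
  have hL1 : ∀ s ∈ Set.Icc (0 : ℝ) 1, ‖L s‖ ≤ 1 := fun s hs =>
    ContinuousLinearMap.opNorm_le_bound _ zero_le_one fun q => by
      have : |s| * ‖q.2‖ ≤ ‖q.2‖ :=
        mul_le_of_le_one_left (norm_nonneg _) (by rw [abs_of_nonneg hs.1]; exact hs.2)
      simpa [hL, Prod.norm_def] using max_le_max le_rfl this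
  have hLc : Continuous L := by fun_prop
  have hpartial : AnalyticAt ℝ (fun q => fderiv ℝ g q (0, 1)) 0 :=
    ((ContinuousLinearMap.apply ℝ G ((0, 1) : E × ℝ)).analyticAt _).comp hg.fderiv
  refine ⟨fun q => ∫ s in (0 : ℝ)..1, fderiv ℝ g (L s q) (0, 1),
    analyticAt_intervalIntegral_comp hpartial hLc fun s hs => hL1 s ⟨hs.1.le, hs.2⟩, ?_⟩
  obtain ⟨r, hr, hball⟩ := Metric.eventually_nhds_iff_ball.1 hg.eventually_analyticAt
  filter_upwards [Metric.ball_mem_nhds _ hr] with q hq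
  have han (s : ℝ) (hs : s ∈ Set.uIcc (0 : ℝ) 1) : AnalyticAt ℝ g (L s q) := by
    rw [Set.uIcc_of_le zero_le_one] at hs
    refine hball _ (mem_ball_zero_iff.2 ?_)
    exact ((L s).le_of_opNorm_le (hL1 s hs) q).trans_lt (by simpa using hq)
  have hderiv (s : ℝ) (hs : s ∈ Set.uIcc (0 : ℝ) 1) :
      HasDerivAt (fun s => g (L s q)) (q.2 • fderiv ℝ g (L s q) (0, 1)) s := by
    have hline : HasDerivAt (fun s => L s q) (0, q.2) s := by
      simpa [hL] using (hasDerivAt_const s q.1).prodMk ((hasDerivAt_id s).mul_const q.2)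
    have := (han s hs).differentiableAt.hasFDerivAt.comp_hasDerivAt s hline
    rwa [show ((0, q.2) : E × ℝ) = q.2 • (0, 1) by simp, map_smul] at this
  have hcont : ContinuousOn (fun s => fderiv ℝ g (L s q) (0, 1)) (Set.uIcc 0 1) := fun s hs =>
    ((han s hs).fderiv.continuousAt.comp (f := fun s => L s q)
      (hLc.clm_apply continuous_const).continuousAt).clm_apply
        continuousAt_const |>.continuousWithinAt
  have hFTC := intervalIntegral.integral_eq_sub_of_hasDerivAt hderiv
    (hcont.const_smul q.2).intervalIntegrable
  rw [intervalIntegral.integral_smul] at hFTC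
  rw [hFTC]
  simp [hL]

end Division

section Lift

variable {E F G : Type*} [NormedAddCommGroup E] [NormedSpace ℝ E] [NormedAddCommGroup F]
  [NormedSpace ℝ F] [NormedAddCommGroup G] [NormedSpace ℝ G]

/-- `φ` is an analytic germ `(E, 0) → (F, 0)` carrying the ultrafilter `V` to `U`: a chart of a
blow-up of `F`, together with a point of its fibre over `0` to which `U` lifts. A property that is
local on the blow-up is to be checked in one such chart for each ultrafilter `U ≤ 𝓝 0`, which
replaces the compactness of the fibre. -/
structure IsLift (φ : E → F) (V : Ultrafilter E) (U : Ultrafilter F) : Prop where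
  analyticAt : AnalyticAt ℝ φ 0
  map_zero : φ 0 = 0
  le_nhds : ↑V ≤ 𝓝 (0 : E)
  map_eq : V.map φ = U

namespace IsLift

variable {φ : E → F} {V : Ultrafilter E} {U : Ultrafilter F}

theorem tendsto (h : IsLift φ V U) : Tendsto φ (𝓝 0) (𝓝 0) := by
  simpa only [h.map_zero] using h.analyticAt.continuousAt.tendsto

theorem comp_analyticAt (h : IsLift φ V U) {g : F → G} (hg : AnalyticAt ℝ g 0) :
    AnalyticAt ℝ (g ∘ φ) 0 :=
  hg.comp_of_eq h.analyticAt h.map_zero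

protected theorem id (hU : ↑U ≤ 𝓝 (0 : F)) : IsLift id U U :=
  ⟨analyticAt_id, rfl, hU, U.map_id⟩

theorem comp {H : Type*} [NormedAddCommGroup H] [NormedSpace ℝ H] {ψ : H → E} {W : Ultrafilter H}
    (h : IsLift φ V U) (h' : IsLift ψ W V) : IsLift (φ ∘ ψ) W U where
  analyticAt := h'.comp_analyticAt h.analyticAt
  map_zero := by simp [h'.map_zero, h.map_zero]
  le_nhds := h'.le_nhds
  map_eq := by rw [← Ultrafilter.map_map, h'.map_eq, h.map_eq]

theorem of_section {σ : F → E} (hφ : AnalyticAt ℝ φ 0) (hφ0 : φ 0 = 0)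
    (hσ : Tendsto σ U (𝓝 0)) (h : ∀ᶠ y in U, φ (σ y) = y) : IsLift φ (U.map σ) U where
  analyticAt := hφ
  map_zero := hφ0
  le_nhds := hσ
  map_eq := by
    rw [Ultrafilter.map_map, ← Ultrafilter.coe_inj, Ultrafilter.coe_map]
    exact (map_congr h).trans map_id

theorem of_continuousLinearEquiv (e : E ≃L[ℝ] F) (hU : ↑U ≤ 𝓝 (0 : F)) :
    IsLift e (U.map e.symm) U :=
  of_section (e.toContinuousLinearMap.analyticAt 0) e.map_zero
    ((e.symm.map_zero ▸ e.symm.continuous.tendsto 0 : Tendsto e.symm (𝓝 0) (𝓝 0)).mono_left hU)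
    (.of_forall e.apply_symm_apply)

theorem prodMap_id {U : Ultrafilter (F × G)} (h : IsLift φ V (U.map Prod.fst))
    (hU : ↑U ≤ 𝓝 (0 : F × G)) :
    ∃ W : Ultrafilter (E × G), IsLift (Prod.map φ id) W U := by
  have hle : (U : Filter (F × G)) ≤ map (Prod.map φ id) (↑V ×ˢ 𝓝 0) := by
    rw [← prod_map_map_eq', map_id, ← Ultrafilter.coe_map, h.map_eq, le_prod]
    exact ⟨tendsto_map, tendsto_snd.mono_left (nhds_prod_eq (X := F) (Y := G) ▸ hU)⟩
  have hne : NeBot ((↑V ×ˢ 𝓝 (0 : G)) ⊓ comap (Prod.map φ id) (U : Filter (F × G))) := by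
    rw [← map_neBot_iff (Prod.map φ id), Filter.push_pull, inf_eq_right.2 hle]
    infer_instance
  have hW := Ultrafilter.of_le ((↑V ×ˢ 𝓝 (0 : G)) ⊓ comap (Prod.map φ id) (U : Filter (F × G)))
  refine ⟨Ultrafilter.of _, ?_, Prod.ext h.map_zero rfl, hW.trans <| inf_le_left.trans ?_, ?_⟩
  · exact (h.analyticAt.comp_of_eq analyticAt_fst rfl).prod analyticAt_snd
  · exact nhds_prod_eq (x := (0 : E)) (y := (0 : G)) ▸ prod_mono h.le_nhds le_rfl
  · exact Ultrafilter.coe_le_coe.1 (map_le_iff_le_comap.2 (hW.trans inf_le_right))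

end IsLift

end Lift

section Ultrafilter

variable {α : Type*} {U : Ultrafilter α} {f g : α → ℝ}

theorem exists_tendsto_div_of_isBigO (h : f =O[U] g) :
    ∃ c, Tendsto (fun x => f x / g x) U (𝓝 c) := by
  obtain ⟨C, hC⟩ := div_isBoundedUnder_of_isBigO h
  have hmem : ∀ᶠ x in U, f x / g x ∈ Metric.closedBall (0 : ℝ) C := by
    simpa [eventually_map] using hC
  obtain ⟨c, -, hc⟩ := (isCompact_closedBall (0 : ℝ) C).ultrafilter_le_nhds
    (U.map fun x => f x / g x) (le_principal_iff.2 hmem)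
  exact ⟨c, hc⟩

theorem exists_ne_zero_eventually_mul_abs_eq (U : Ultrafilter α) (f : α → ℝ) :
    ∃ s : ℝ, s ≠ 0 ∧ ∀ᶠ x in U, s * |f x| = f x := by
  obtain h | h := U.eventually_or.1 (.of_forall fun x => le_total 0 (f x))
  · exact ⟨1, one_ne_zero, h.mono fun x hx => by rw [one_mul, abs_of_nonneg hx]⟩
  · exact ⟨-1, by simp, h.mono fun x hx => by rw [abs_of_nonpos hx]; ring⟩

end Ultrafilter

section Monomial

theorem frequently_forall_ne_zero {σ : Type*} : ∃ᶠ y in 𝓝 (0 : σ → ℝ), ∀ i, y i ≠ 0 := by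
  have h : Tendsto (fun t : ℝ => fun _ : σ => t) (𝓝[≠] 0) (𝓝 0) :=
    ((continuous_pi fun _ => continuous_id).tendsto' 0 _ rfl).mono_left nhdsWithin_le_nhds
  exact h.frequently
    (Eventually.frequently (eventually_mem_nhdsWithin.mono fun t ht _ => ht))

variable {σ ρ τ : Type*} [Fintype σ] [Fintype ρ] [Fintype τ]

/-- The monomial function `y ↦ y ^ α` with exponent vector `α`. -/
noncomputable def monom (α : σ → ℕ) (y : σ → ℝ) : ℝ := ∏ i, y i ^ α i

theorem monom_zero_exponent (y : σ → ℝ) : monom 0 y = 1 := by simp [monom]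

theorem monom_add (α β : σ → ℕ) (y : σ → ℝ) : monom (α + β) y = monom α y * monom β y := by
  simp only [monom, Pi.add_apply, pow_add, Finset.prod_mul_distrib]

theorem monom_nsmul (k : ℕ) (α : σ → ℕ) (y : σ → ℝ) : monom (k • α) y = monom α y ^ k := by
  simp only [monom, Pi.smul_apply, smul_eq_mul, mul_comm k, pow_mul, Finset.prod_pow]

theorem monom_single [DecidableEq σ] (i : σ) (k : ℕ) (y : σ → ℝ) :
    monom (Pi.single i k) y = y i ^ k := by
  rw [monom, Fintype.prod_eq_single i fun j hj => by simp [hj], Pi.single_eq_same]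

theorem monom_ne_zero (α : σ → ℕ) {y : σ → ℝ} (hy : ∀ i, y i ≠ 0) : monom α y ≠ 0 :=
  Finset.prod_ne_zero_iff.2 fun i _ => pow_ne_zero _ (hy i)

theorem monom_apply_zero {α : σ → ℕ} (hα : α ≠ 0) : monom α (0 : σ → ℝ) = 0 := by
  obtain ⟨i, hi⟩ := Function.ne_iff.1 hα
  exact Finset.prod_eq_zero (Finset.mem_univ i) (zero_pow hi)

theorem analyticAt_apply (i : σ) (y : σ → ℝ) : AnalyticAt ℝ (fun z : σ → ℝ => z i) y :=
  (ContinuousLinearMap.proj (R := ℝ) (φ := fun _ : σ => ℝ) i).analyticAt y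

theorem analyticAt_monom (α : σ → ℕ) (y : σ → ℝ) : AnalyticAt ℝ (monom α) y :=
  Finset.analyticAt_fun_prod _ fun i _ => (analyticAt_apply i y).pow (α i)

/-- `g` is `y ^ α` times an analytic unit near `0`. -/
def HasMonomialForm (α : σ → ℕ) (g : (σ → ℝ) → ℝ) : Prop :=
  ∃ u : (σ → ℝ) → ℝ, AnalyticAt ℝ u 0 ∧ u 0 ≠ 0 ∧ ∀ᶠ y in 𝓝 0, g y = monom α y * u y

/-- The germ at `0` of `g` vanishes or is a monomial times an analytic unit. -/
def IsNormalCrossing (g : (σ → ℝ) → ℝ) : Prop :=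
  g =ᶠ[𝓝 0] 0 ∨ ∃ α, HasMonomialForm α g

namespace HasMonomialForm

variable {α β : σ → ℕ} {f g : (σ → ℝ) → ℝ}

theorem of_unit {u : (σ → ℝ) → ℝ} (hu : AnalyticAt ℝ u 0) (h0 : u 0 ≠ 0) : HasMonomialForm 0 u :=
  ⟨u, hu, h0, .of_forall fun _ => by rw [monom_zero_exponent, one_mul]⟩

protected theorem monom (α : σ → ℕ) : HasMonomialForm α (monom α) :=
  ⟨1, analyticAt_const, one_ne_zero, .of_forall fun _ => (mul_one _).symm⟩

theorem congr (hf : HasMonomialForm α f) (h : g =ᶠ[𝓝 0] f) : HasMonomialForm α g := by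
  obtain ⟨u, hu, hu0, hfu⟩ := hf
  exact ⟨u, hu, hu0, h.trans hfu⟩

theorem mul (hf : HasMonomialForm α f) (hg : HasMonomialForm β g) :
    HasMonomialForm (α + β) fun y => f y * g y := by
  obtain ⟨u, hu, hu0, hfu⟩ := hf
  obtain ⟨v, hv, hv0, hgv⟩ := hg
  refine ⟨fun y => u y * v y, hu.mul hv, mul_ne_zero hu0 hv0, ?_⟩
  filter_upwards [hfu, hgv] with y hfy hgy
  rw [hfy, hgy, monom_add]
  ring

theorem pow (hf : HasMonomialForm α f) (k : ℕ) : HasMonomialForm (k • α) fun y => f y ^ k := by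
  obtain ⟨u, hu, hu0, hfu⟩ := hf
  refine ⟨fun y => u y ^ k, hu.pow k, pow_ne_zero k hu0, hfu.mono fun y hy => ?_⟩
  simp only [hy, monom_nsmul, mul_pow]

theorem prod {ι : Type*} (s : Finset ι) {α : ι → σ → ℕ} {f : ι → (σ → ℝ) → ℝ}
    (hf : ∀ i ∈ s, HasMonomialForm (α i) (f i)) :
    HasMonomialForm (∑ i ∈ s, α i) fun y => ∏ i ∈ s, f i y := by
  classical
  induction s using Finset.induction_on with
  | empty => simpa using of_unit (u := fun _ : σ → ℝ => 1) analyticAt_const one_ne_zero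
  | insert i s hi ih =>
    simp only [Finset.sum_insert hi, Finset.prod_insert hi]
    exact (hf i (s.mem_insert_self i)).mul (ih fun j hj => hf j (Finset.mem_insert_of_mem hj))

theorem exists_eq_mul (hf : HasMonomialForm α f) (hg : HasMonomialForm β g) (h : β ≤ α) :
    ∃ w : (σ → ℝ) → ℝ, AnalyticAt ℝ w 0 ∧ ∀ᶠ y in 𝓝 0, f y = g y * w y := by
  obtain ⟨u, hu, -, hfu⟩ := hf
  obtain ⟨v, hv, hv0, hgv⟩ := hg
  refine ⟨fun y => monom (α - β) y * (u y / v y), (analyticAt_monom _ _).mul (hu.div hv hv0), ?_⟩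
  filter_upwards [hfu, hgv, hv.continuousAt.eventually_ne hv0] with y hfy hgy hvy
  rw [hfy, hgy, ← tsub_add_cancel_of_le h, monom_add, tsub_add_cancel_of_le h]
  field_simp

theorem isNormalCrossing_mul (hf : HasMonomialForm α f) (hg : IsNormalCrossing g) :
    IsNormalCrossing fun y => f y * g y := by
  obtain hg | ⟨β, hg⟩ := hg
  · exact .inl (hg.mono fun y hy => by simp [hy])
  · exact .inr ⟨α + β, hf.mul hg⟩

end HasMonomialForm

theorem IsNormalCrossing.congr {f g : (σ → ℝ) → ℝ} (hf : IsNormalCrossing f) (h : g =ᶠ[𝓝 0] f) :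
    IsNormalCrossing g :=
  hf.imp h.trans fun ⟨α, hα⟩ => ⟨α, hα.congr h⟩

theorem eq_zero_of_eventually_monom_mul_eq_zero {α : σ → ℕ} {b : (σ → ℝ) → ℝ}
    (hb : ContinuousAt b 0) (h : ∀ᶠ y in 𝓝 0, monom α y * b y = 0) : b 0 = 0 := by
  by_contra hb0
  obtain ⟨y, hy, hmul, hby⟩ :=
    (frequently_forall_ne_zero.and_eventually (h.and (hb.eventually_ne hb0))).exists
  exact mul_ne_zero (monom_ne_zero α hy) hby hmul

/-- `φ` pulls back the monomial with exponent `α` to the monomial with exponent `T α`, up to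
analytic units. -/
def IsMonomialMap (T : (σ → ℕ) →+ (ρ → ℕ)) (φ : (ρ → ℝ) → σ → ℝ) : Prop :=
  ∀ α, HasMonomialForm (T α) fun z => monom α (φ z)

namespace IsMonomialMap

variable {T : (σ → ℕ) →+ (ρ → ℕ)} {φ : (ρ → ℝ) → σ → ℝ}

protected theorem id : IsMonomialMap (AddMonoidHom.id (σ → ℕ)) id := HasMonomialForm.monom

theorem of_apply [DecidableEq σ] (h : ∀ i, HasMonomialForm (T (Pi.single i 1)) fun z => φ z i) :
    IsMonomialMap T φ := fun α => by
  have hsum : T α = ∑ i, α i • T (Pi.single i 1) := by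
    simp only [← map_nsmul, ← map_sum, ← Pi.single_smul, smul_eq_mul, mul_one,
      Finset.univ_sum_single]
  rw [hsum]
  exact .prod Finset.univ fun i _ => (h i).pow (α i)

theorem hasMonomialForm_comp {V : Ultrafilter (ρ → ℝ)} {U : Ultrafilter (σ → ℝ)}
    (hT : IsMonomialMap T φ) (hφ : IsLift φ V U) {α : σ → ℕ} {g : (σ → ℝ) → ℝ}
    (hg : HasMonomialForm α g) : HasMonomialForm (T α) fun z => g (φ z) := by
  obtain ⟨u, hu, hu0, hgu⟩ := hg
  rw [← add_zero (T α)]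
  exact ((hT α).mul (.of_unit (hφ.comp_analyticAt hu) (by simpa [hφ.map_zero] using hu0))).congr
    (hφ.tendsto.eventually hgu)

theorem isNormalCrossing_comp {V : Ultrafilter (ρ → ℝ)} {U : Ultrafilter (σ → ℝ)}
    (hT : IsMonomialMap T φ) (hφ : IsLift φ V U) {g : (σ → ℝ) → ℝ} (hg : IsNormalCrossing g) :
    IsNormalCrossing fun z => g (φ z) :=
  hg.imp hφ.tendsto.eventually fun ⟨α, hα⟩ => ⟨T α, hT.hasMonomialForm_comp hφ hα⟩

theorem comp {S : (ρ → ℕ) →+ (τ → ℕ)} {ψ : (τ → ℝ) → ρ → ℝ} {W : Ultrafilter (τ → ℝ)}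
    {V : Ultrafilter (ρ → ℝ)} (hT : IsMonomialMap T φ) (hS : IsMonomialMap S ψ)
    (hψ : IsLift ψ W V) : IsMonomialMap (S.comp T) (φ ∘ ψ) :=
  fun α => hS.hasMonomialForm_comp hψ (hT α)

end IsMonomialMap

end Monomial

section Toric

theorem monotone_addMonoidHom {σ ρ : Type*} (T : (σ → ℕ) →+ (ρ → ℕ)) : Monotone T := fun α β h => by
  rw [← add_tsub_cancel_of_le h, map_add]
  exact le_self_add

theorem tendsto_abs_rpow_inv_natCast {q : ℕ} (hq : q ≠ 0) :
    Tendsto (fun t : ℝ => |t| ^ (q : ℝ)⁻¹) (𝓝 0) (𝓝 0) := by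
  have hq' : (0 : ℝ) < (q : ℝ)⁻¹ := by positivity
  exact (continuous_abs.rpow_const fun _ => .inr hq'.le).tendsto' 0 0
    (by rw [abs_zero, Real.zero_rpow hq'.ne'])

theorem exists_isLift_pow {σ : Type*} [Fintype σ] {D : ℕ} (hD : D ≠ 0)
    {U : Ultrafilter (σ → ℝ)} (hU : ↑U ≤ 𝓝 (0 : σ → ℝ)) :
    ∃ φ V, IsLift φ V U ∧ IsMonomialMap (D • AddMonoidHom.id (σ → ℕ)) φ := by
  classical
  choose s hs0 hs using fun i => exists_ne_zero_eventually_mul_abs_eq U fun y : σ → ℝ => y i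
  refine ⟨fun z i => s i * z i ^ D, _, .of_section (σ := fun y i => |y i| ^ (D : ℝ)⁻¹) ?_ ?_ ?_ ?_,
    .of_apply fun i => ⟨fun _ => s i, analyticAt_const, hs0 i, .of_forall fun z => ?_⟩⟩
  · exact analyticAt_pi_iff.2 fun i => analyticAt_const.mul ((analyticAt_apply i 0).pow D)
  · ext i
    simp [hD]
  · exact tendsto_pi_nhds.2 fun i =>
      (tendsto_abs_rpow_inv_natCast hD).comp (((continuous_apply i).tendsto 0).mono_left hU)
  · filter_upwards [eventually_all.2 hs] with y hy
    ext i
    rw [Real.rpow_inv_natCast_pow (abs_nonneg _) hD, hy i]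
  · rw [AddMonoidHom.nsmul_apply, AddMonoidHom.id_apply, monom_nsmul, monom_single, pow_one,
      mul_comm]

variable {σ : Type*} [DecidableEq σ]

/-- The chart `y_i = (c + z_i) z_j ^ p`, `y_j = s z_j ^ q` of a weighted blow-up of the
codimension-two coordinate plane `y_i = y_j = 0`. -/
def toricChart (i j : σ) (p q : ℕ) (s c : ℝ) (z : σ → ℝ) (k : σ) : ℝ :=
  if k = i then (c + z i) * z j ^ p else if k = j then s * z j ^ q else z k

/-- The action of `toricChart i j p q s c` on exponent vectors, where `b` is the multiplicity of
`z_i` in `c + z_i`: `b = 1` if `c = 0` and `b = 0` otherwise. -/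
def toricExponent (i j : σ) (p q b : ℕ) : (σ → ℕ) →+ (σ → ℕ) where
  toFun α k := if k = i then α i * b else if k = j then α i * p + α j * q else α k
  map_zero' := by
    ext k
    simp
  map_add' α β := by
    ext k
    simp only [Pi.add_apply]
    split_ifs <;> ring

theorem toricExponent_apply (i j : σ) (p q b : ℕ) (α : σ → ℕ) (k : σ) :
    toricExponent i j p q b α k =
      if k = i then α i * b else if k = j then α i * p + α j * q else α k :=
  rfl

theorem toricChart_apply_zero (i j : σ) {p q : ℕ} (hp : p ≠ 0) (hq : q ≠ 0) (s c : ℝ) :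
    toricChart i j p q s c 0 = 0 := by
  ext k
  simp [toricChart, hp, hq]

variable [Fintype σ]

theorem exists_isMonomialMap_toricChart {i j : σ} (hij : i ≠ j) (p q : ℕ) {s : ℝ} (hs : s ≠ 0)
    (c : ℝ) : ∃ b, IsMonomialMap (toricExponent i j p q b) (toricChart i j p q s c) := by
  obtain ⟨b, hb⟩ : ∃ b, HasMonomialForm (Pi.single i b) fun z : σ → ℝ => c + z i := by
    obtain rfl | hc := eq_or_ne c 0
    · exact ⟨1, (HasMonomialForm.monom _).congr (.of_forall fun z => by simp [monom_single])⟩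
    · refine ⟨0, ?_⟩
      rw [Pi.single_zero]
      exact .of_unit (analyticAt_const.add (analyticAt_apply i 0)) (by simpa using hc)
  have hpow (r : ℕ) : HasMonomialForm (Pi.single j r) fun z : σ → ℝ => z j ^ r :=
    (HasMonomialForm.monom _).congr (.of_forall fun z => (monom_single j r z).symm)
  refine ⟨b, .of_apply fun k => ?_⟩
  obtain rfl | hi := eq_or_ne k i
  · have hT : toricExponent k j p q b (Pi.single k 1) = Pi.single k b + Pi.single j p := by
      ext l
      simp only [toricExponent_apply, Pi.add_apply, Pi.single_apply]
      split_ifs <;> simp_all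
    simpa only [hT, toricChart, if_true] using hb.mul (hpow p)
  obtain rfl | hj := eq_or_ne k j
  · have hT : toricExponent i k p q b (Pi.single k 1) = 0 + Pi.single k q := by
      ext l
      simp only [toricExponent_apply, Pi.add_apply, Pi.single_apply]
      split_ifs <;> simp_all
    simpa only [hT, toricChart, if_neg hi, if_true] using
      (HasMonomialForm.of_unit analyticAt_const hs).mul (hpow q)
  · have hT : toricExponent i j p q b (Pi.single k 1) = Pi.single k 1 := by
      ext l
      simp only [toricExponent_apply, Pi.single_apply]
      split_ifs <;> simp_all
    rw [hT]
    exact (HasMonomialForm.monom _).congr (.of_forall fun z => by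
      simp only [toricChart, if_neg hi, if_neg hj, monom_single, pow_one])

theorem analyticAt_toricChart (i j : σ) (p q : ℕ) (s c : ℝ) (z : σ → ℝ) :
    AnalyticAt ℝ (toricChart i j p q s c) z := by
  refine analyticAt_pi_iff.2 fun k => ?_
  simp only [toricChart]
  split_ifs
  · exact (analyticAt_const.add (analyticAt_apply i z)).mul ((analyticAt_apply j z).pow p)
  · exact analyticAt_const.mul ((analyticAt_apply j z).pow q)
  · exact analyticAt_apply k z

theorem exists_isLift_toricChart {i j : σ} (hij : i ≠ j) {p q : ℕ} (hp : p ≠ 0) (hq : q ≠ 0)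
    {U : Ultrafilter (σ → ℝ)} (hU : ↑U ≤ 𝓝 (0 : σ → ℝ))
    (h : ∀ᶠ y : σ → ℝ in U, |y i| ^ q ≤ |y j| ^ p) :
    ∃ s ≠ 0, ∃ c V, IsLift (toricChart i j p q s c) V U := by
  obtain ⟨s, hs0, hs⟩ := exists_ne_zero_eventually_mul_abs_eq U fun y => y j
  set r : (σ → ℝ) → ℝ := fun y => |y j| ^ (q : ℝ)⁻¹
  have hr (y : σ → ℝ) : 0 ≤ r y := Real.rpow_nonneg (abs_nonneg _) _
  have hrq (y : σ → ℝ) : r y ^ q = |y j| := Real.rpow_inv_natCast_pow (abs_nonneg _) hq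
  have hO : (fun y => y i) =O[U] fun y => r y ^ p := by
    refine .of_bound' (h.mono fun y hy => ?_)
    rw [Real.norm_eq_abs, Real.norm_of_nonneg (pow_nonneg (hr y) p)]
    refine le_of_pow_le_pow_left₀ hq (pow_nonneg (hr y) p) ?_
    rwa [pow_right_comm, hrq]
  obtain ⟨c, hc⟩ := exists_tendsto_div_of_isBigO hO
  have happly (k : σ) : Tendsto (fun y : σ → ℝ => y k) U (𝓝 0) :=
    ((continuous_apply k).tendsto 0).mono_left hU
  refine ⟨s, hs0, c, _, .of_section
    (σ := fun y k => if k = i then y i / r y ^ p - c else if k = j then r y else y k)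
    (analyticAt_toricChart i j p q s c 0) (toricChart_apply_zero i j hp hq s c) ?_ ?_⟩
  · refine tendsto_pi_nhds.2 fun k => ?_
    split_ifs
    · simpa using hc.sub_const c
    · exact (tendsto_abs_rpow_inv_natCast hq).comp (happly j)
    · exact happly k
  · filter_upwards [hs, hO.eventually_mul_div_cancel] with y hsy hy
    ext k
    replace hy : y i / r y ^ p * r y ^ p = y i := hy
    simp only [toricChart, if_true, if_neg hij.symm, add_sub_cancel, hrq, hsy, hy]
    split_ifs with hi hj
    · rw [hi]
    · rw [hj]
    · rfl

theorem card_toricExponent_ne_lt {α β : σ → ℕ} {i j : σ} (hi : α i < β i) (hj : β j < α j)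
    (b : ℕ) :
    let T := toricExponent i j (α j - β j) (β i - α i) b
    (Finset.univ.filter fun k => T α k ≠ T β k).card
      < (Finset.univ.filter fun k => α k ≠ β k).card := by
  intro T
  have hij : j ≠ i := by rintro rfl; exact hi.asymm hj
  refine Finset.card_lt_card (Finset.ssubset_iff_of_subset (fun k hk => ?_) |>.2
    ⟨j, by simpa using hj.ne', ?_⟩)
  · rw [Finset.mem_filter_univ] at hk ⊢
    obtain rfl | hki := eq_or_ne k i
    · exact hi.ne
    obtain rfl | hkj := eq_or_ne k j
    · exact hj.ne'
    · simpa only [T, toricExponent_apply, if_neg hki, if_neg hkj] using hk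
  · rw [Finset.mem_filter_univ, not_not]
    simp only [T, toricExponent_apply, if_neg hij, if_true]
    zify [hi.le, hj.le]
    ring

end Toric

section Principalization

variable {σ : Type*} [Fintype σ] {U : Ultrafilter (σ → ℝ)}

theorem exists_isLift_comparable (α β : σ → ℕ) (hU : ↑U ≤ 𝓝 (0 : σ → ℝ)) :
    ∃ (T : (σ → ℕ) →+ (σ → ℕ)) (φ : (σ → ℝ) → σ → ℝ) (V : Ultrafilter (σ → ℝ)),
      IsLift φ V U ∧ IsMonomialMap T φ ∧ (T α ≤ T β ∨ T β ≤ T α) := by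
  classical
  induction hN : (Finset.univ.filter fun k => α k ≠ β k).card using Nat.strong_induction_on
    generalizing α β U with
  | _ N ih =>
  by_cases hαβ : α ≤ β ∨ β ≤ α
  · exact ⟨_, id, U, .id hU, .id, hαβ⟩
  obtain ⟨⟨j, hj⟩, ⟨i, hi⟩⟩ : (∃ j, β j < α j) ∧ ∃ i, α i < β i := by
    simpa [Pi.le_def] using hαβ
  wlog h : ∀ᶠ y : σ → ℝ in U, |y i| ^ (β i - α i) ≤ |y j| ^ (α j - β j) generalizing α β i j
  · obtain ⟨T, φ, V, hφ, hT, hc⟩ := this β α (by simpa only [ne_comm] using hN) (by tauto) i hi j hj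
      ((U.eventually_or.1 (.of_forall fun y => le_total _ _)).resolve_left h)
    exact ⟨T, φ, V, hφ, hT, hc.symm⟩
  have hij : i ≠ j := by rintro rfl; exact hi.asymm hj
  obtain ⟨s, hs, c, V, hφ⟩ := exists_isLift_toricChart hij (Nat.sub_pos_of_lt hj).ne'
    (Nat.sub_pos_of_lt hi).ne' hU h
  obtain ⟨b, hT⟩ := exists_isMonomialMap_toricChart hij (α j - β j) (β i - α i) hs c
  obtain ⟨S, ψ, W, hψ, hS, hc⟩ :=
    ih _ (hN ▸ card_toricExponent_ne_lt hi hj b) _ _ hφ.le_nhds rfl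
  exact ⟨S.comp _, _, W, hφ.comp hψ, hT.comp hS hψ, hc⟩

theorem exists_isLift_forall_le {ι : Type*} {s : Finset ι} (hs : s.Nonempty) (α : ι → σ → ℕ)
    (hU : ↑U ≤ 𝓝 (0 : σ → ℝ)) :
    ∃ (T : (σ → ℕ) →+ (σ → ℕ)) (φ : (σ → ℝ) → σ → ℝ) (V : Ultrafilter (σ → ℝ)),
      IsLift φ V U ∧ IsMonomialMap T φ ∧ ∃ i ∈ s, ∀ j ∈ s, T (α i) ≤ T (α j) := by
  classical
  induction hs using Finset.Nonempty.cons_induction with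
  | singleton i => exact ⟨_, id, U, .id hU, .id, i, by simp⟩
  | cons k s hk _ ih =>
    obtain ⟨T, φ, V, hφ, hT, i, hi, hle⟩ := ih
    obtain ⟨S, ψ, W, hψ, hS, hc⟩ := exists_isLift_comparable (T (α i)) (T (α k)) hφ.le_nhds
    refine ⟨S.comp T, φ ∘ ψ, W, hφ.comp hψ, hT.comp hS hψ, ?_⟩
    have hle' (j) (hj : j ∈ s) : S (T (α i)) ≤ S (T (α j)) := monotone_addMonoidHom S (hle j hj)
    simp only [Finset.mem_cons, exists_eq_or_imp, forall_eq_or_imp]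
    obtain hc | hc := hc
    · exact .inr ⟨i, hi, hc, hle'⟩
    · exact .inl ⟨le_rfl, fun j hj => hc.trans (hle' j hj)⟩

theorem exists_isLift_eq_monom_pow_mul {ι : Type*} [Finite ι] {e : ι → ℕ} (he : ∀ i, e i ≠ 0)
    {a : ι → (σ → ℝ) → ℝ} (ha : ∀ i, IsNormalCrossing (a i)) (hne : ∃ i, ¬ a i =ᶠ[𝓝 0] 0)
    (hU : ↑U ≤ 𝓝 (0 : σ → ℝ)) :
    ∃ (T : (σ → ℕ) →+ (σ → ℕ)) (φ : (σ → ℝ) → σ → ℝ) (V : Ultrafilter (σ → ℝ)),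
      IsLift φ V U ∧ IsMonomialMap T φ ∧ ∃ (γ : σ → ℕ) (b : ι → (σ → ℝ) → ℝ),
        (∀ i, AnalyticAt ℝ (b i) 0) ∧ (∀ i, ∀ᶠ y in 𝓝 0, a i (φ y) = monom γ y ^ e i * b i y) ∧
        ∃ i, b i 0 ≠ 0 := by
  classical
  cases nonempty_fintype ι
  set s : Finset ι := {i | ¬ a i =ᶠ[𝓝 0] 0}
  have hex (i) : ∃ α, i ∈ s → HasMonomialForm α (a i) := by
    obtain h | ⟨α, hα⟩ := ha i
    · exact ⟨0, fun hi => absurd h (by simpa [s] using hi)⟩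
    · exact ⟨α, fun _ => hα⟩
  choose α hα using hex
  set L := ∏ i, e i
  have hL (i) : e i * (L / e i) = L := Nat.mul_div_cancel' (Finset.dvd_prod_of_mem e (by simp))
  obtain ⟨T, φ, V, hφ, hT, i₀, hi₀, hle⟩ :=
    exists_isLift_forall_le (s := s) (by simpa [s, Finset.Nonempty] using hne)
      (fun i => (L / e i) • α i) hU
  obtain ⟨ψ, W, hψ, hS⟩ := exists_isLift_pow (Finset.prod_ne_zero_iff.2 fun i _ => he i) hφ.le_nhds
  have hmon (i) (hi : i ∈ s) : HasMonomialForm (e i • T ((L / e i) • α i))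
      fun y => a i (φ (ψ y)) := by
    rw [← map_nsmul, smul_smul, hL, map_nsmul]
    exact (hT.comp hS hψ).hasMonomialForm_comp (hφ.comp hψ) (hα i hi)
  set γ := T ((L / e i₀) • α i₀)
  have hb (i) : ∃ b : (σ → ℝ) → ℝ, AnalyticAt ℝ b 0 ∧
      (∀ᶠ y in 𝓝 0, a i (φ (ψ y)) = monom γ y ^ e i * b y) ∧ (i = i₀ → b 0 ≠ 0) := by
    simp only [← monom_nsmul]
    by_cases hi : i ∈ s
    · obtain rfl | hi0 := eq_or_ne i i₀
      · obtain ⟨u, hu, hu0, hau⟩ := hmon i hi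
        exact ⟨u, hu, hau, fun _ => hu0⟩
      · obtain ⟨w, hw, haw⟩ :=
          (hmon i hi).exists_eq_mul (.monom (e i • γ)) (nsmul_le_nsmul_right (hle i hi) _)
        exact ⟨w, hw, haw, fun h => absurd h hi0⟩
    · have hai : a i =ᶠ[𝓝 0] 0 := by simpa [s] using hi
      refine ⟨0, analyticAt_const, ?_, fun h => absurd (h ▸ hi₀) hi⟩
      exact ((hφ.comp hψ).tendsto.eventually hai).mono fun y hy => by simpa using hy
  choose b hb hab hb0 using hb
  exact ⟨_, φ ∘ ψ, W, hφ.comp hψ, hT.comp hS hψ, γ, b, hb, hab, i₀, hb0 i₀ rfl⟩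

/-- Some chart in `m` coordinates around a point over `0` of a blow-up of `E`, chosen along `U`,
turns all the germs `f i` into normal crossings simultaneously. -/
def MonomializableAlong {ι E : Type*} [NormedAddCommGroup E] [NormedSpace ℝ E] (m : ℕ)
    (U : Ultrafilter E) (f : ι → E → ℝ) : Prop :=
  ∃ (φ : (Fin m → ℝ) → E) (V : Ultrafilter (Fin m → ℝ)),
    IsLift φ V U ∧ ∀ i, IsNormalCrossing (f i ∘ φ)

/-- Resolution of singularities, in the local form used here, for finite families of analytic germs
at `0 ∈ ℝⁿ`. -/
def Monomializable (n : ℕ) : Prop :=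
  ∀ (ι : Type) [Finite ι] (f : ι → (Fin n → ℝ) → ℝ), (∀ i, AnalyticAt ℝ (f i) 0) →
    ∀ U : Ultrafilter (Fin n → ℝ), ↑U ≤ 𝓝 (0 : Fin n → ℝ) → MonomializableAlong n U f

theorem IsLift.monomializableAlong {ι E F : Type*} [NormedAddCommGroup E] [NormedSpace ℝ E]
    [NormedAddCommGroup F] [NormedSpace ℝ F] {φ : E → F} {V : Ultrafilter E} {U : Ultrafilter F}
    {m : ℕ} {f : ι → F → ℝ} {g : ι → E → ℝ} (hφ : IsLift φ V U) (hg : MonomializableAlong m V g)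
    (hfg : ∀ i, f i ∘ φ =ᶠ[𝓝 0] g i) : MonomializableAlong m U f := by
  obtain ⟨ψ, W, hψ, hgψ⟩ := hg
  exact ⟨φ ∘ ψ, W, hφ.comp hψ, fun i => (hgψ i).congr (hψ.tendsto.eventually (hfg i))⟩

end Principalization

section Taylor

variable {E : Type*} [NormedAddCommGroup E] [NormedSpace ℝ E] {g : E × ℝ → ℝ}

theorem exists_taylor (hg : AnalyticAt ℝ g 0) :
    ∃ u : ℕ → E × ℝ → ℝ, (∀ k, AnalyticAt ℝ (u k) 0) ∧
      ∀ d, ∀ᶠ q in 𝓝 0, g q = ∑ j ∈ Finset.range d, u j (q.1, 0) * q.2 ^ j + q.2 ^ d * u d q := by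
  choose D hD hgD using fun v : {v : E × ℝ → ℝ // AnalyticAt ℝ v 0} =>
    exists_analyticAt_eq_add_smul v.2
  let u (k : ℕ) := (fun v => (⟨D v, hD v⟩ : {v : E × ℝ → ℝ // AnalyticAt ℝ v 0}))^[k] ⟨g, hg⟩
  have hu (k : ℕ) : ∀ᶠ q in 𝓝 0, (u k).1 q = (u k).1 (q.1, 0) + q.2 * (u (k + 1)).1 q := by
    simpa only [u, Function.iterate_succ_apply', smul_eq_mul] using hgD (u k)
  refine ⟨fun k => (u k).1, fun k => (u k).2, fun d => ?_⟩
  induction d with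
  | zero => simp [u]
  | succ d ih =>
    filter_upwards [ih, hu d] with q hq hd
    rw [hq, Finset.sum_range_succ, hd]
    ring

theorem iteratedDeriv_zero_eq_of_taylor {F v : ℝ → ℝ} {d : ℕ} {c : Fin d → ℝ}
    (hv : AnalyticAt ℝ v 0) (hF : ∀ᶠ x in 𝓝 0, F x = ∑ j, c j * x ^ (j : ℕ) + x ^ d * v x)
    (k : Fin d) : iteratedDeriv k F 0 = (k : ℕ).factorial * c k := by
  have hrem : AnalyticAt ℝ (fun x => x ^ d * v x) 0 := (analyticAt_id.pow d).mul hv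
  have hrem0 : iteratedDeriv k (fun x => x ^ d * v x) 0 = 0 := by
    refine (natCast_le_analyticOrderAt_iff_iteratedDeriv_eq_zero hrem).1 ?_ k k.2
    exact (natCast_le_analyticOrderAt hrem).2 ⟨v, hv, by simp⟩
  rw [Filter.EventuallyEq.iteratedDeriv_eq k hF,
    iteratedDeriv_fun_add (AnalyticAt.contDiffAt <| by fun_prop) hrem.contDiffAt, hrem0]
  simp (disch := fun_prop) only [iteratedDeriv_fun_sum, iteratedDeriv_const_mul,
    iteratedDeriv_fun_pow_zero]
  simp [Fin.val_inj, mul_comm]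

theorem analyticAt_iteratedDeriv_prodMk (hg : AnalyticAt ℝ g 0) (k : ℕ) :
    AnalyticAt ℝ (fun p : E × ℝ => iteratedDeriv k (fun t => g (p.1, t)) p.2) 0 := by
  induction k with
  | zero => simpa using hg
  | succ k ih =>
    refine (((ContinuousLinearMap.apply ℝ ℝ ((0, 1) : E × ℝ)).analyticAt _).comp
      ih.fderiv).congr ?_
    filter_upwards [ih.eventually_analyticAt] with p hp
    rw [iteratedDeriv_succ]
    exact (hp.differentiableAt.hasFDerivAt.comp_hasDerivAt p.2
      ((hasDerivAt_const p.2 p.1).prodMk (hasDerivAt_id p.2))).deriv.symm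

/-- The Weierstrass normal form, up to a unit `u` that depends on both variables, of a germ `g` that
is regular of order `d` in the last variable. -/
structure HasRegularForm (d : ℕ) (a : Fin d → E → ℝ) (u g : E × ℝ → ℝ) : Prop where
  analyticAt_coeff : ∀ j, AnalyticAt ℝ (a j) 0
  coeff_zero : ∀ j, a j 0 = 0
  analyticAt_unit : AnalyticAt ℝ u 0
  unit_ne_zero : u 0 ≠ 0
  eventually_eq : ∀ᶠ q in 𝓝 0, g q = ∑ j, a j q.1 * q.2 ^ (j : ℕ) + q.2 ^ d * u q

theorem exists_hasRegularForm {d : ℕ} (hg : AnalyticAt ℝ g 0)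
    (hd : analyticOrderAt (fun t => g (0, t)) 0 = d) : ∃ a u, HasRegularForm d a u g := by
  have hF : AnalyticAt ℝ (fun t => g (0, t)) 0 :=
    hg.comp_of_eq (analyticAt_const.prod analyticAt_id) rfl
  obtain ⟨hlt, hne⟩ := (analyticOrderAt_eq_nat_iff_iteratedDeriv_eq_zero hF).1 hd
  obtain ⟨u, hu, hgu⟩ := exists_taylor hg
  have hcoeff (k : ℕ) : iteratedDeriv k (fun t => g (0, t)) 0 = k.factorial * u k 0 :=
    iteratedDeriv_zero_eq_of_taylor (c := fun j : Fin (k + 1) => u j 0) (k := .last k)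
      (v := fun t => u (k + 1) (0, t))
      ((hu (k + 1)).comp_of_eq (analyticAt_const.prod analyticAt_id) rfl) <| by
        filter_upwards [((Continuous.prodMk_right (0 : E)).tendsto' (0 : ℝ) 0 rfl).eventually
          (hgu (k + 1))] with t ht
        rwa [Finset.sum_range] at ht
  refine ⟨fun j y => u j (y, 0), u d, fun j => ?_, fun j => ?_, hu d, fun h => ?_, ?_⟩
  · exact (hu j).comp_of_eq (analyticAt_id.prod analyticAt_const) rfl
  · exact (mul_eq_zero.1 ((hcoeff j).symm.trans (hlt j j.2))).resolve_left (by positivity)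
  · exact hne (by rw [hcoeff, h, mul_zero])
  · simpa only [Finset.sum_range] using hgu d

theorem HasRegularForm.eventually_iteratedDeriv_eq {d : ℕ} {a : Fin d → E → ℝ} {u : E × ℝ → ℝ}
    (h : HasRegularForm d a u g) (j : Fin d) :
    ∀ᶠ y in 𝓝 0, iteratedDeriv j (fun t => g (y, t)) 0 = (j : ℕ).factorial * a j y := by
  have hslice := (Continuous.prodMk_left (0 : ℝ)).tendsto' (0 : E) (0 : E × ℝ) rfl
  filter_upwards [hslice.eventually h.analyticAt_unit.eventually_analyticAt,
    hslice.eventually h.eventually_eq.eventually_nhds] with y hu hg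
  refine iteratedDeriv_zero_eq_of_taylor (c := fun j => a j y) (v := fun t => u (y, t))
    (hu.comp_of_eq (analyticAt_const.prod analyticAt_id) rfl) ?_ j
  exact ((Continuous.prodMk_right y).tendsto' (0 : ℝ) (y, 0) rfl).eventually hg

variable [CompleteSpace E]

theorem exists_analyticAt_implicit (hg : AnalyticAt ℝ g 0) (h0 : g 0 = 0)
    (h1 : fderiv ℝ g 0 (0, 1) ≠ 0) :
    ∃ η : E → ℝ, AnalyticAt ℝ η 0 ∧ η 0 = 0 ∧ ∀ᶠ y in 𝓝 0, g (y, η y) = 0 := by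
  have hg' : ContDiffAt ℝ ⊤ g (0 : E × ℝ) := hg.contDiffAt
  have hinv : (fderiv ℝ g (0 : E × ℝ) ∘L .inr ℝ E ℝ).IsInvertible := by
    refine ⟨ContinuousLinearEquiv.unitsEquivAut ℝ (Units.mk0 _ h1), ?_⟩
    ext
    simp
  exact ⟨hg'.implicitFunction (by simp) hinv,
    (hg'.contDiffAt_implicitFunction (by simp) hinv).analyticAt,
    hg'.implicitFunction_apply_self (by simp) hinv,
    h0 ▸ hg'.eventually_apply_implicitFunction (by simp) hinv⟩

theorem exists_iteratedDeriv_eq_zero {d : ℕ} (hg : AnalyticAt ℝ g 0)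
    (hd : analyticOrderAt (fun t => g (0, t)) 0 = (d + 1 : ℕ)) :
    ∃ η : E → ℝ, AnalyticAt ℝ η 0 ∧ η 0 = 0 ∧
      ∀ᶠ y in 𝓝 0, iteratedDeriv d (fun t => g (y, t)) (η y) = 0 := by
  have hF : AnalyticAt ℝ (fun t => g (0, t)) 0 :=
    hg.comp_of_eq (analyticAt_const.prod analyticAt_id) rfl
  obtain ⟨hlt, hne⟩ := (analyticOrderAt_eq_nat_iff_iteratedDeriv_eq_zero hF).1 hd
  have hH := analyticAt_iteratedDeriv_prodMk hg d
  refine exists_analyticAt_implicit hH (hlt d d.lt_succ_self) ?_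
  rw [iteratedDeriv_succ] at hne
  convert hne
  exact (hH.differentiableAt.hasFDerivAt.comp_hasDerivAt (0 : ℝ)
    ((hasDerivAt_const 0 (0 : E)).prodMk (hasDerivAt_id 0))).deriv.symm

/-- A Tschirnhausen transformation, along the zeros of the derivative of order `d i₀ - 1` of
`g i₀`. -/
theorem exists_tschirnhausen {ι : Type*} {g : ι → E × ℝ → ℝ} {d : ι → ℕ}
    (hg : ∀ i, AnalyticAt ℝ (g i) 0) (hd : ∀ i, analyticOrderAt (fun t => g i (0, t)) 0 = d i)
    {i₀ : ι} (hi₀ : d i₀ ≠ 0) :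
    ∃ η : E → ℝ, AnalyticAt ℝ η 0 ∧ η 0 = 0 ∧
      ∃ (a : ∀ i, Fin (d i) → E → ℝ) (u : ι → E × ℝ → ℝ),
      (∀ i, HasRegularForm (d i) (a i) (u i) fun q => g i (q.1, q.2 + η q.1)) ∧
      ∀ j : Fin (d i₀), j + 1 = d i₀ → a i₀ j =ᶠ[𝓝 0] 0 := by
  obtain ⟨k, hk⟩ := Nat.exists_eq_succ_of_ne_zero hi₀
  obtain ⟨η, hη, hη0, hηk⟩ := exists_iteratedDeriv_eq_zero (hg i₀) ((hd i₀).trans (by rw [hk]))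
  have hshear : AnalyticAt ℝ (fun q : E × ℝ => (q.1, q.2 + η q.1)) 0 :=
    analyticAt_fst.prod (analyticAt_snd.add (hη.comp_of_eq analyticAt_fst rfl))
  choose a u h using fun i => exists_hasRegularForm (d := d i)
    ((hg i).comp_of_eq hshear (by simp [hη0])) (by simpa [hη0] using hd i)
  refine ⟨η, hη, hη0, a, u, h, fun j hj => ?_⟩
  filter_upwards [(h i₀).eventually_iteratedDeriv_eq j, hηk] with y hy hyk
  have hk' := congrFun (iteratedDeriv_comp_add_const k (fun t => g i₀ (y, t)) (η y)) 0
  rw [zero_add, hyk] at hk'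
  rw [show (j : ℕ) = k by lia, Function.comp_def, hk'] at hy
  exact (mul_eq_zero.1 hy.symm).resolve_left (by positivity)

end Taylor

section Split

variable {n : ℕ}

/-- The coordinates `(y, x)` on `ℝⁿ⁺¹` in which germs are regular in `x`, with `x` the `0`-th
coordinate of the vector. -/
noncomputable def tailHeadEquiv (n : ℕ) : (Fin (n + 1) → ℝ) ≃L[ℝ] (Fin n → ℝ) × ℝ :=
  (Fin.consEquivL ℝ fun _ : Fin (n + 1) => ℝ).symm.trans (.prodComm ℝ ℝ (Fin n → ℝ))

theorem tailHeadEquiv_apply (z : Fin (n + 1) → ℝ) : tailHeadEquiv n z = (Fin.tail z, z 0) := rfl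

theorem monom_cons (k : ℕ) (α : Fin n → ℕ) (z : Fin (n + 1) → ℝ) :
    monom (Fin.cons k α : Fin (n + 1) → ℕ) z = z 0 ^ k * monom α (Fin.tail z) := by
  simp [monom, Fin.prod_univ_succ, Fin.tail]

theorem hasMonomialForm_head :
    HasMonomialForm (Fin.cons 1 0) fun z : Fin (n + 1) → ℝ => (tailHeadEquiv n z).2 :=
  (HasMonomialForm.monom _).congr <| .of_forall fun z => by
    simp [monom_cons, tailHeadEquiv_apply, monom_zero_exponent]

theorem IsNormalCrossing.comp_tail {g : (Fin n → ℝ) → ℝ} (hg : IsNormalCrossing g) :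
    IsNormalCrossing fun z => g (tailHeadEquiv n z).1 := by
  have han : AnalyticAt ℝ (fun z => (tailHeadEquiv n z).1) 0 :=
    analyticAt_fst.comp_of_eq ((tailHeadEquiv n).toContinuousLinearMap.analyticAt 0) rfl
  obtain hg | ⟨α, u, hu, hu0, hgu⟩ := hg
  · exact .inl (hg.comp_tendsto han.continuousAt.tendsto)
  right
  refine ⟨Fin.cons 0 α, _, hu.comp_of_eq han rfl, hu0, ?_⟩
  filter_upwards [han.continuousAt.tendsto.eventually hgu] with z hz
  simpa [monom_cons, tailHeadEquiv_apply] using hz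

theorem exists_isLift_monom_eq_snd_mul {γ : Fin n → ℕ} {U : Ultrafilter ((Fin n → ℝ) × ℝ)}
    (hU : ↑U ≤ 𝓝 (0 : (Fin n → ℝ) × ℝ))
    (hO : ¬ (fun q : (Fin n → ℝ) × ℝ => q.2) =O[U] fun q => monom γ q.1) :
    ∃ (ψ : (Fin (n + 1) → ℝ) → (Fin n → ℝ) × ℝ) (V : Ultrafilter (Fin (n + 1) → ℝ)),
      IsLift ψ V U ∧ (∀ f, IsNormalCrossing f → IsNormalCrossing fun z => f (ψ z).1) ∧
      (∃ β, HasMonomialForm β fun z => (ψ z).2) ∧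
      ∃ w, AnalyticAt ℝ w 0 ∧ w 0 = 0 ∧ ∀ᶠ z in 𝓝 0, monom γ (ψ z).1 = (ψ z).2 * w z := by
  have hsplit := IsLift.of_continuousLinearEquiv (tailHeadEquiv n) hU
  obtain ⟨T, φ, V, hφ, hT, hle⟩ :=
    exists_isLift_comparable (Fin.cons 1 0 : Fin (n + 1) → ℕ) (Fin.cons 0 γ) hsplit.le_nhds
  have hψ := hsplit.comp hφ
  have hx : HasMonomialForm (T (Fin.cons 1 0)) fun z => (tailHeadEquiv n (φ z)).2 :=
    hT.hasMonomialForm_comp hφ hasMonomialForm_head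
  have hm : HasMonomialForm (T (Fin.cons 0 γ)) fun z => monom γ (tailHeadEquiv n (φ z)).1 :=
    (hT _).congr <| .of_forall fun z => by simp [monom_cons, tailHeadEquiv_apply]
  have hnot {w : (Fin (n + 1) → ℝ) → ℝ} (hw : ContinuousAt w 0) :
      ¬ ∀ᶠ z in 𝓝 0, (tailHeadEquiv n (φ z)).2 = monom γ (tailHeadEquiv n (φ z)).1 * w z := by
    intro h
    refine hO ?_
    rw [← hψ.map_eq, Ultrafilter.coe_map, isBigO_map]
    exact (((isBigO_refl _ _).mul (hw.isBigO_one ℝ)).congr' (h.mono fun z hz => hz.symm)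
      (.of_forall fun z => mul_one _)).mono hψ.le_nhds
  refine ⟨_, V, hψ, fun f hf => hT.isNormalCrossing_comp hφ hf.comp_tail, ⟨_, hx⟩, ?_⟩
  obtain hle | hle := hle
  · obtain ⟨w, hw, hmw⟩ := hm.exists_eq_mul hx hle
    refine ⟨w, hw, by_contra fun hw0 => hnot (hw.continuousAt.inv₀ hw0) ?_, hmw⟩
    filter_upwards [hmw, hw.continuousAt.eventually_ne hw0] with z hz hwz
    rw [hz, mul_assoc, Pi.inv_apply, mul_inv_cancel₀ hwz, mul_one]
  · obtain ⟨w, hw, hxw⟩ := hx.exists_eq_mul hm hle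
    exact absurd hxw (hnot hw.continuousAt)

end Split

section RegularForm

variable {E : Type*} [NormedAddCommGroup E] [NormedSpace ℝ E]

theorem HasRegularForm.hasMonomialForm_comp {σ : Type*} [Fintype σ] {d : ℕ} {a : Fin d → E → ℝ}
    {u g : E × ℝ → ℝ} (h : HasRegularForm d a u g) {Φ : (σ → ℝ) → E × ℝ}
    {V : Ultrafilter (σ → ℝ)} {U : Ultrafilter (E × ℝ)} (hΦ : IsLift Φ V U) {β : σ → ℕ}
    (hx : HasMonomialForm β fun z => (Φ z).2) {w : (σ → ℝ) → ℝ} (hw : AnalyticAt ℝ w 0)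
    (hw0 : w 0 = 0) {b : Fin d → (σ → ℝ) → ℝ} (hb : ∀ j, AnalyticAt ℝ (b j) 0)
    (hab : ∀ j, ∀ᶠ z in 𝓝 0, a j (Φ z).1 = ((Φ z).2 * w z) ^ (d - j) * b j z) :
    HasMonomialForm (d • β) fun z => g (Φ z) := by
  have hunit : HasMonomialForm 0 fun z => ∑ j : Fin d, w z ^ (d - (j : ℕ)) * b j z + u (Φ z) := by
    refine .of_unit (.add (Finset.analyticAt_fun_sum _ fun j _ => (hw.pow _).mul (hb j))
      (hΦ.comp_analyticAt h.analyticAt_unit)) ?_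
    have hzero (j : Fin d) : w 0 ^ (d - (j : ℕ)) = 0 := by
      rw [hw0, zero_pow (Nat.sub_ne_zero_of_lt j.2)]
    simpa [hzero, hΦ.map_zero] using h.unit_ne_zero
  rw [← add_zero (d • β)]
  refine ((hx.pow d).mul hunit).congr ?_
  filter_upwards [hΦ.tendsto.eventually h.eventually_eq, eventually_all.2 hab] with z hg ha
  rw [hg, mul_add, Finset.mul_sum]
  congr 1
  refine Finset.sum_congr rfl fun j _ => ?_
  rw [ha, ← pow_sub_mul_pow (Φ z).2 j.2.le]
  ring

theorem HasRegularForm.exists_comp_eq_pow_mul {F : Type*} [NormedAddCommGroup F] [NormedSpace ℝ F]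
    {d : ℕ} {a : Fin d → E → ℝ} {u g : E × ℝ → ℝ} (h : HasRegularForm d a u g) {φ : F → E}
    (hφ : AnalyticAt ℝ φ 0) (hφ0 : φ 0 = 0) {m : F → ℝ} (hm : AnalyticAt ℝ m 0) (hm0 : m 0 = 0)
    {b : Fin d → F → ℝ} (hb : ∀ j, AnalyticAt ℝ (b j) 0)
    (hab : ∀ j, ∀ᶠ y in 𝓝 0, a j (φ y) = m y ^ (d - j) * b j y) (c : ℝ) :
    ∃ G : F × ℝ → ℝ, AnalyticAt ℝ G 0 ∧
      (∀ᶠ q in 𝓝 0, g (φ q.1, m q.1 * (c + q.2)) = m q.1 ^ d * G q) ∧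
      ∀ t, G (0, t) = ∑ j, b j 0 * (c + t) ^ (j : ℕ) + u 0 * (c + t) ^ d := by
  set κ : F × ℝ → E × ℝ := fun q => (φ q.1, m q.1 * (c + q.2))
  have hκ : AnalyticAt ℝ κ 0 :=
    (hφ.comp_of_eq analyticAt_fst rfl).prod
      ((hm.comp_of_eq analyticAt_fst rfl).mul (analyticAt_const.add analyticAt_snd))
  have hκ0 (t : ℝ) : κ (0, t) = 0 := by simp [κ, hφ0, hm0]
  have hct : AnalyticAt ℝ (fun q : F × ℝ => c + q.2) 0 := analyticAt_const.add analyticAt_snd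
  refine ⟨fun q => ∑ j, b j q.1 * (c + q.2) ^ (j : ℕ) + u (κ q) * (c + q.2) ^ d, ?_, ?_, ?_⟩
  · refine .add (Finset.analyticAt_fun_sum _ fun j _ => ?_) ?_
    · exact ((hb j).comp_of_eq analyticAt_fst rfl).mul (hct.pow j)
    · exact (h.analyticAt_unit.comp_of_eq hκ (hκ0 0)).mul (hct.pow d)
  · have hκt : Tendsto κ (𝓝 0) (𝓝 0) := by
      have h := hκ.continuousAt.tendsto
      rwa [show κ 0 = 0 from hκ0 0] at h
    filter_upwards [hκt.eventually h.eventually_eq,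
      continuousAt_fst.tendsto.eventually (eventually_all.2 hab)] with q hg ha
    rw [hg, mul_add, Finset.mul_sum]
    simp only [κ]
    congr 1
    · refine Finset.sum_congr rfl fun j _ => ?_
      rw [ha, ← pow_sub_mul_pow (m q.1) j.2.le, mul_pow]
      ring
    · rw [mul_pow]
      ring
  · simp [hκ0]

end RegularForm

section Order

variable {d : ℕ} {b : Fin d → ℝ} {v c : ℝ}

theorem iteratedDeriv_sum_mul_add_pow (b : Fin d → ℝ) (v c : ℝ) (k : ℕ) :
    iteratedDeriv k (fun t => ∑ j, b j * (c + t) ^ (j : ℕ) + v * (c + t) ^ d) 0 =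
      ∑ j : Fin d, b j * ((j : ℕ).descFactorial k * c ^ (j - k : ℕ)) +
        v * (d.descFactorial k * c ^ (d - k)) := by
  have h := congrFun
    (iteratedDeriv_comp_const_add k (fun x => ∑ j, b j * x ^ (j : ℕ) + v * x ^ d) c) 0
  rw [h]
  simp (disch := fun_prop) only [iteratedDeriv_fun_add, iteratedDeriv_fun_sum,
    iteratedDeriv_const_mul, iteratedDeriv_pow, add_zero]

theorem exists_analyticOrderAt_sum_mul_add_pow_eq (b : Fin d → ℝ) (hv : v ≠ 0) (c : ℝ) :
    ∃ k ≤ d,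
      analyticOrderAt (fun t => ∑ j, b j * (c + t) ^ (j : ℕ) + v * (c + t) ^ d) 0 = k := by
  set F : ℝ → ℝ := fun t => ∑ j, b j * (c + t) ^ (j : ℕ) + v * (c + t) ^ d with hF
  have hd : iteratedDeriv d F 0 ≠ 0 := by
    have hj (j : Fin d) : (j : ℕ).descFactorial d = 0 := Nat.descFactorial_of_lt j.2
    simp [hF, iteratedDeriv_sum_mul_add_pow, hj, hv, Nat.descFactorial_self, Nat.factorial_ne_zero]
  have hex : ∃ k, iteratedDeriv k F 0 ≠ 0 := ⟨d, hd⟩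
  classical
  exact ⟨Nat.find hex, Nat.find_min' hex hd,
    (analyticOrderAt_eq_nat_iff_iteratedDeriv_eq_zero (by fun_prop)).2
      ⟨fun k hk => not_not.1 (Nat.find_min hex hk), Nat.find_spec hex⟩⟩

theorem center_eq_zero_of_analyticOrderAt_eq (hd : d ≠ 0) (hv : v ≠ 0)
    (hb : ∀ j : Fin d, j + 1 = d → b j = 0)
    (h : analyticOrderAt (fun t => ∑ j, b j * (c + t) ^ (j : ℕ) + v * (c + t) ^ d) 0 = d) :
    c = 0 := by
  obtain ⟨k, rfl⟩ := Nat.exists_eq_succ_of_ne_zero hd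
  have hk :=
    ((analyticOrderAt_eq_nat_iff_iteratedDeriv_eq_zero (by fun_prop)).1 h).1 k k.lt_succ_self
  have hsum (j : Fin (k + 1)) : b j * ((j : ℕ).descFactorial k * c ^ (j - k : ℕ)) = 0 := by
    obtain hj | hj := (Nat.lt_succ_iff.1 j.2).lt_or_eq
    · simp [Nat.descFactorial_of_lt hj]
    · simp [hb j (by rw [hj])]
  simpa [iteratedDeriv_sum_mul_add_pow, hsum, hv, Nat.descFactorial_eq_zero_iff_lt] using hk

theorem coeff_eq_zero_of_analyticOrderAt_eq
    (h : analyticOrderAt (fun t => ∑ j, b j * t ^ (j : ℕ) + v * t ^ d) 0 = d) (j : Fin d) :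
    b j = 0 := by
  have hj := ((analyticOrderAt_eq_nat_iff_iteratedDeriv_eq_zero (by fun_prop)).1 h).1 j j.2
  rw [iteratedDeriv_zero_eq_of_taylor (c := b) (v := fun _ => v) analyticAt_const
    (.of_forall fun x => by ring)] at hj
  exact (mul_eq_zero.1 hj).resolve_left (by positivity)

end Order

section Base

variable {E : Type*} [NormedAddCommGroup E] [NormedSpace ℝ E]

theorem exists_isLift_mul_add {m : E → ℝ} (hm : AnalyticAt ℝ m 0) (hm0 : m 0 = 0)
    {U : Ultrafilter (E × ℝ)} (hU : ↑U ≤ 𝓝 (0 : E × ℝ))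
    (hO : (fun q : E × ℝ => q.2) =O[U] fun q => m q.1) :
    ∃ (c : ℝ) (V : Ultrafilter (E × ℝ)), IsLift (fun q => (q.1, m q.1 * (c + q.2))) V U := by
  obtain ⟨c, hc⟩ := exists_tendsto_div_of_isBigO hO
  refine ⟨c, _, .of_section (σ := fun q => (q.1, q.2 / m q.1 - c)) ?_ (by simp [hm0]) ?_ ?_⟩
  · exact analyticAt_fst.prod
      ((hm.comp_of_eq analyticAt_fst rfl).mul (analyticAt_const.add analyticAt_snd))
  · have h0 := (continuous_fst.tendsto' (0 : E × ℝ) 0 rfl).mono_left hU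
    simpa [Prod.zero_eq_mk] using h0.prodMk_nhds (hc.sub_const c)
  · filter_upwards [hO.eventually_mul_div_cancel] with q hq
    exact Prod.ext rfl (by simpa [mul_comm] using hq)

theorem monomializableAlong_mul_of_coeff_eq {m : ℕ} {ι : Type*} {h : ι → E → ℝ}
    {g : ι → E × ℝ → ℝ} {d : ι → ℕ} {a : ∀ i, Fin (d i) → E → ℝ} {u : ι → E × ℝ → ℝ}
    (hg : ∀ i, HasRegularForm (d i) (a i) (u i) (g i)) {Φ : (Fin m → ℝ) → E × ℝ}
    {V : Ultrafilter (Fin m → ℝ)} {U : Ultrafilter (E × ℝ)} (hΦ : IsLift Φ V U)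
    (hh : ∀ i, IsNormalCrossing fun z => h i (Φ z).1) {β : Fin m → ℕ}
    (hx : HasMonomialForm β fun z => (Φ z).2) {w : (Fin m → ℝ) → ℝ} (hw : AnalyticAt ℝ w 0)
    (hw0 : w 0 = 0) {b : ∀ i, Fin (d i) → (Fin m → ℝ) → ℝ} (hb : ∀ i j, AnalyticAt ℝ (b i j) 0)
    (hab : ∀ i j, ∀ᶠ z in 𝓝 0, a i j (Φ z).1 = ((Φ z).2 * w z) ^ (d i - j) * b i j z) :
    MonomializableAlong m U fun i q => h i q.1 * g i q :=
  ⟨Φ, V, hΦ, fun i =>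
    (((hg i).hasMonomialForm_comp hΦ hx hw hw0 (hb i) (hab i)).isNormalCrossing_mul (hh i)).congr
      (.of_forall fun _ => mul_comm _ _)⟩

variable {n : ℕ}

theorem monomializableAlong_mul_of_coeff_eventuallyEq_zero {ι : Type*} {h : ι → E → ℝ}
    {g : ι → E × ℝ → ℝ} {d : ι → ℕ} {a : ∀ i, Fin (d i) → E → ℝ} {u : ι → E × ℝ → ℝ}
    (hg : ∀ i, HasRegularForm (d i) (a i) (u i) (g i)) {φ : (Fin n → ℝ) → E}
    {V : Ultrafilter (Fin n → ℝ)} {U : Ultrafilter (E × ℝ)} (hU : ↑U ≤ 𝓝 (0 : E × ℝ))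
    (hφ : IsLift φ V (U.map Prod.fst)) (hh : ∀ i, IsNormalCrossing (h i ∘ φ))
    (ha : ∀ i j, a i j ∘ φ =ᶠ[𝓝 0] 0) :
    MonomializableAlong (n + 1) U fun i q => h i q.1 * g i q := by
  obtain ⟨W, hW⟩ := hφ.prodMap_id hU
  have hΨ := IsLift.of_continuousLinearEquiv (tailHeadEquiv n) hW.le_nhds
  refine monomializableAlong_mul_of_coeff_eq hg (hW.comp hΨ) (fun i => (hh i).comp_tail)
    hasMonomialForm_head (w := 0) analyticAt_const rfl (b := fun _ _ => 0)
    (fun _ _ => analyticAt_const) fun i j => ?_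
  filter_upwards [(hΨ.tendsto.fst_nhds).eventually (ha i j)] with z hz
  simpa using hz

theorem Monomializable.exists_isLift_coeff_eq (hn : Monomializable n) {ι : Type} [Finite ι]
    {h : ι → (Fin n → ℝ) → ℝ} (hh : ∀ i, AnalyticAt ℝ (h i) 0) {d : ι → ℕ}
    {a : ∀ i, Fin (d i) → (Fin n → ℝ) → ℝ} (ha : ∀ i j, AnalyticAt ℝ (a i j) 0)
    (ha0 : ∀ i j, a i j 0 = 0) {U : Ultrafilter (Fin n → ℝ)} (hU : ↑U ≤ 𝓝 (0 : Fin n → ℝ)) :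
    ∃ (φ : (Fin n → ℝ) → Fin n → ℝ) (V : Ultrafilter (Fin n → ℝ)),
      IsLift φ V U ∧ (∀ i, IsNormalCrossing (h i ∘ φ)) ∧
      ((∀ i j, a i j ∘ φ =ᶠ[𝓝 0] 0) ∨
        ∃ (γ : Fin n → ℕ) (b : ∀ i, Fin (d i) → (Fin n → ℝ) → ℝ),
          γ ≠ 0 ∧ (∀ i j, AnalyticAt ℝ (b i j) 0) ∧
          (∀ i j, ∀ᶠ y in 𝓝 0, a i j (φ y) = monom γ y ^ (d i - j) * b i j y) ∧
          ∃ i j, b i j 0 ≠ 0) := by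
  obtain ⟨φ, V, hφ, hnc⟩ := hn (ι ⊕ Σ i, Fin (d i)) (Sum.elim h fun s => a s.1 s.2)
    (Sum.rec hh fun s => ha s.1 s.2) U hU
  by_cases hzero : ∀ s : Σ i, Fin (d i), a s.1 s.2 ∘ φ =ᶠ[𝓝 0] 0
  · exact ⟨φ, V, hφ, fun i => hnc (.inl i), .inl fun i j => hzero ⟨i, j⟩⟩
  obtain ⟨T, ψ, W, hψ, hT, γ, b, hb, hab, s, hs⟩ :=
    exists_isLift_eq_monom_pow_mul (e := fun s : Σ i, Fin (d i) => d s.1 - s.2)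
      (fun s => Nat.sub_ne_zero_of_lt s.2.2) (fun s => hnc (.inr s)) (not_forall.1 hzero) hφ.le_nhds
  refine ⟨φ ∘ ψ, W, hφ.comp hψ, fun i => hT.isNormalCrossing_comp hψ (hnc (.inl i)),
    .inr ⟨γ, fun i j => b ⟨i, j⟩, ?_, fun i j => hb _, fun i j => hab ⟨i, j⟩, s.1, s.2, hs⟩⟩
  rintro rfl
  have h0 := (hab s).self_of_nhds
  exact hs (by simpa [hψ.map_zero, hφ.map_zero, ha0, monom_zero_exponent] using h0.symm)

end Base

section Regular

variable {n : ℕ} {ι : Type}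

/-- `Monomializable (n + 1)` for families of products `h i * g i` in which `h i` does not depend on
the last variable and `g i` is regular of order `d i` in it. The factors `h i` collect the powers of
the exceptional divisors that are split off while the orders `d i` are being decreased. -/
def RegularMonomializable (n : ℕ) (d : ι → ℕ) : Prop :=
  ∀ (h : ι → (Fin n → ℝ) → ℝ) (g : ι → (Fin n → ℝ) × ℝ → ℝ),
    (∀ i, AnalyticAt ℝ (h i) 0) → (∀ i, AnalyticAt ℝ (g i) 0) →
    (∀ i, analyticOrderAt (fun t => g i (0, t)) 0 = d i) →
    ∀ U : Ultrafilter ((Fin n → ℝ) × ℝ), ↑U ≤ 𝓝 (0 : (Fin n → ℝ) × ℝ) →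
      MonomializableAlong (n + 1) U fun i q => h i q.1 * g i q

theorem exists_analyticOrderAt_lt {d : ι → ℕ} {b : ∀ i, Fin (d i) → ℝ} {v : ι → ℝ}
    (hv : ∀ i, v i ≠ 0) {i₀ : ι} (hi₀ : d i₀ ≠ 0)
    (hb₀ : ∀ j : Fin (d i₀), j + 1 = d i₀ → b i₀ j = 0) (hb : ∃ i j, b i j ≠ 0) (c : ℝ) :
    ∃ d' < d, ∀ i,
      analyticOrderAt (fun t => ∑ j, b i j * (c + t) ^ (j : ℕ) + v i * (c + t) ^ d i) 0 = d' i := by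
  choose d' hle hd' using fun i => exists_analyticOrderAt_sum_mul_add_pow_eq (b i) (hv i) c
  refine ⟨d', lt_of_le_of_ne hle ?_, hd'⟩
  rintro rfl
  obtain rfl := center_eq_zero_of_analyticOrderAt_eq hi₀ (hv i₀) hb₀ (hd' i₀)
  obtain ⟨i, j, hij⟩ := hb
  exact hij (coeff_eq_zero_of_analyticOrderAt_eq (by simpa using hd' i) j)

variable {h : ι → (Fin n → ℝ) → ℝ} {g : ι → (Fin n → ℝ) × ℝ → ℝ} {d : ι → ℕ}
  {a : ∀ i, Fin (d i) → (Fin n → ℝ) → ℝ} {u : ι → (Fin n → ℝ) × ℝ → ℝ}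
  {U : Ultrafilter ((Fin n → ℝ) × ℝ)}

theorem monomializableAlong_mul_of_isBigO (hh : ∀ i, AnalyticAt ℝ (h i) 0)
    (hg : ∀ i, HasRegularForm (d i) (a i) (u i) (g i)) {φ : (Fin n → ℝ) → Fin n → ℝ}
    (hφ : AnalyticAt ℝ φ 0) (hφ0 : φ 0 = 0) {W : Ultrafilter ((Fin n → ℝ) × ℝ)}
    (hW : IsLift (Prod.map φ id) W U) {m : (Fin n → ℝ) → ℝ} (hm : AnalyticAt ℝ m 0) (hm0 : m 0 = 0)
    {b : ∀ i, Fin (d i) → (Fin n → ℝ) → ℝ} (hb : ∀ i j, AnalyticAt ℝ (b i j) 0)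
    (hab : ∀ i j, ∀ᶠ y in 𝓝 0, a i j (φ y) = m y ^ (d i - j) * b i j y)
    (hO : (fun q : (Fin n → ℝ) × ℝ => q.2) =O[W] fun q => m q.1) {i₀ : ι} (hi₀ : d i₀ ≠ 0)
    (hb₀ : ∀ j : Fin (d i₀), j + 1 = d i₀ → b i₀ j 0 = 0) (hne : ∃ i j, b i j 0 ≠ 0)
    (ih : ∀ d' < d, RegularMonomializable n d') :
    MonomializableAlong (n + 1) U fun i q => h i q.1 * g i q := by
  obtain ⟨c, V, hV⟩ := exists_isLift_mul_add hm hm0 hW.le_nhds hO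
  choose G hG hgG hG0 using fun i =>
    (hg i).exists_comp_eq_pow_mul hφ hφ0 hm hm0 (hb i) (hab i) c
  obtain ⟨d', hd', hord⟩ :=
    exists_analyticOrderAt_lt (fun i => (hg i).unit_ne_zero) hi₀ hb₀ hne c
  have hIH := ih d' hd' (fun i y => h i (φ y) * m y ^ d i) G
    (fun i => ((hh i).comp_of_eq hφ hφ0).mul (hm.pow _)) hG
    (fun i => by simpa only [hG0] using hord i) V hV.le_nhds
  refine (hW.comp hV).monomializableAlong hIH fun i => ?_
  filter_upwards [hgG i] with q hq
  simp [hq, mul_assoc]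

theorem monomializableAlong_mul_of_not_isBigO
    (hg : ∀ i, HasRegularForm (d i) (a i) (u i) (g i)) {φ : (Fin n → ℝ) → Fin n → ℝ}
    (hh : ∀ i, IsNormalCrossing (h i ∘ φ)) {W : Ultrafilter ((Fin n → ℝ) × ℝ)}
    (hW : IsLift (Prod.map φ id) W U) {γ : Fin n → ℕ} {b : ∀ i, Fin (d i) → (Fin n → ℝ) → ℝ}
    (hb : ∀ i j, AnalyticAt ℝ (b i j) 0)
    (hab : ∀ i j, ∀ᶠ y in 𝓝 0, a i j (φ y) = monom γ y ^ (d i - j) * b i j y)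
    (hO : ¬ (fun q : (Fin n → ℝ) × ℝ => q.2) =O[W] fun q => monom γ q.1) :
    MonomializableAlong (n + 1) U fun i q => h i q.1 * g i q := by
  obtain ⟨ψ, V, hψ, hnc, ⟨β, hx⟩, w, hw, hw0, hmw⟩ := exists_isLift_monom_eq_snd_mul hW.le_nhds hO
  refine monomializableAlong_mul_of_coeff_eq hg (hW.comp hψ) (fun i => hnc _ (hh i)) hx hw hw0
    (b := fun i j z => b i j (ψ z).1)
    (fun i j => hψ.comp_analyticAt ((hb i j).comp_of_eq analyticAt_fst rfl)) fun i j => ?_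
  filter_upwards [hmw, hψ.tendsto.fst_nhds.eventually (hab i j)] with z hz ha
  simpa [hz] using ha

theorem Monomializable.monomializableAlong_mul_of_hasRegularForm [Finite ι]
    (hn : Monomializable n) (hh : ∀ i, AnalyticAt ℝ (h i) 0)
    (hg : ∀ i, HasRegularForm (d i) (a i) (u i) (g i)) {i₀ : ι} (hi₀ : d i₀ ≠ 0)
    (ha₀ : ∀ j : Fin (d i₀), j + 1 = d i₀ → a i₀ j =ᶠ[𝓝 0] 0)
    (ih : ∀ d' < d, RegularMonomializable n d') (hU : ↑U ≤ 𝓝 (0 : (Fin n → ℝ) × ℝ)) :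
    MonomializableAlong (n + 1) U fun i q => h i q.1 * g i q := by
  have hfst : ↑(U.map Prod.fst) ≤ 𝓝 (0 : Fin n → ℝ) :=
    (continuous_fst.tendsto' (0 : (Fin n → ℝ) × ℝ) 0 rfl).mono_left hU
  obtain ⟨φ, V, hφ, hhφ, hzero | ⟨γ, b, hγ, hb, hab, hne⟩⟩ := hn.exists_isLift_coeff_eq hh
    (fun i => (hg i).analyticAt_coeff) (fun i => (hg i).coeff_zero) hfst
  · exact monomializableAlong_mul_of_coeff_eventuallyEq_zero hg hU hφ hhφ hzero
  obtain ⟨W, hW⟩ := hφ.prodMap_id hU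
  by_cases hO : (fun q : (Fin n → ℝ) × ℝ => q.2) =O[W] fun q => monom γ q.1
  · refine monomializableAlong_mul_of_isBigO hh hg hφ.analyticAt hφ.map_zero hW
      (analyticAt_monom γ 0) (monom_apply_zero hγ) hb hab hO hi₀ (fun j hj => ?_) hne ih
    refine eq_zero_of_eventually_monom_mul_eq_zero (α := (d i₀ - j) • γ)
      (hb i₀ j).continuousAt ?_
    filter_upwards [hab i₀ j, hφ.tendsto.eventually (ha₀ j hj)] with y hy h0
    rw [monom_nsmul, ← hy, h0, Pi.zero_apply]
  · exact monomializableAlong_mul_of_not_isBigO hg hhφ hW hb hab hO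

theorem exists_isLift_shear {E : Type*} [NormedAddCommGroup E] [NormedSpace ℝ E] {η : E → ℝ}
    (hη : AnalyticAt ℝ η 0) (hη0 : η 0 = 0) {U : Ultrafilter (E × ℝ)} (hU : ↑U ≤ 𝓝 (0 : E × ℝ)) :
    ∃ V, IsLift (fun q : E × ℝ => (q.1, q.2 + η q.1)) V U := by
  have han {f : E × ℝ → ℝ} (hf : AnalyticAt ℝ f 0) : AnalyticAt ℝ (fun q => (q.1, f q)) 0 :=
    analyticAt_fst.prod hf
  have hη' : AnalyticAt ℝ (fun q : E × ℝ => η q.1) 0 := hη.comp_of_eq analyticAt_fst rfl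
  have hσ := (han (analyticAt_snd.sub hη')).continuousAt.tendsto.mono_left hU
  exact ⟨_, .of_section (σ := fun q => (q.1, q.2 - η q.1)) (han (analyticAt_snd.add hη'))
    (by simp [hη0]) (by simpa [hη0, Prod.zero_eq_mk] using hσ) (.of_forall fun q => by simp)⟩

theorem Monomializable.regularMonomializable [Finite ι] (hn : Monomializable n) (d : ι → ℕ) :
    RegularMonomializable n d := by
  induction d using WellFoundedLT.induction with | ind d ih
  intro h g hh hg hd U hU
  by_cases hd0 : ∀ i, d i = 0
  · choose a u hreg using fun i => exists_hasRegularForm (hg i) (hd i)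
    obtain ⟨φ, V, hφ, hhφ⟩ := hn ι h hh (U.map Prod.fst)
      ((continuous_fst.tendsto' (0 : (Fin n → ℝ) × ℝ) 0 rfl).mono_left hU)
    exact monomializableAlong_mul_of_coeff_eventuallyEq_zero hreg hU hφ hhφ fun i j =>
      absurd j.2 (by simp [hd0 i])
  · obtain ⟨i₀, hi₀⟩ := not_forall.1 hd0
    obtain ⟨η, hη, hη0, a, u, hreg, ha₀⟩ := exists_tschirnhausen hg hd hi₀
    obtain ⟨V, hV⟩ := exists_isLift_shear hη hη0 hU
    exact hV.monomializableAlong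
      (hn.monomializableAlong_mul_of_hasRegularForm hh hreg hi₀ ha₀ ih hV.le_nhds)
      fun i => .rfl

end Regular

section Germ

variable {E : Type*} [NormedAddCommGroup E] [NormedSpace ℝ E] {f g : E → ℝ}

theorem eventually_eventuallyEq_zero_imp (hf : AnalyticAt ℝ f 0) :
    ∀ᶠ x in 𝓝 0, f =ᶠ[𝓝 x] 0 → f =ᶠ[𝓝 0] 0 := by
  obtain ⟨r, hr, hball⟩ := Metric.eventually_nhds_iff_ball.1 hf.eventually_analyticAt
  filter_upwards [Metric.ball_mem_nhds _ hr] with x hx h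
  have hzero := AnalyticOnNhd.eqOn_zero_of_preconnected_of_eventuallyEq_zero hball
    (convex_ball (0 : E) r).isPreconnected hx h
  exact hzero.eventuallyEq_of_mem (Metric.ball_mem_nhds _ hr)

theorem eventuallyEq_zero_or_of_mul_eq_zero (hf : AnalyticAt ℝ f 0) (hg : AnalyticAt ℝ g 0)
    (h : f * g =ᶠ[𝓝 0] 0) : f =ᶠ[𝓝 0] 0 ∨ g =ᶠ[𝓝 0] 0 := by
  refine or_iff_not_imp_left.2 fun hf0 => ?_
  obtain ⟨x, hfx, han, hx, hgx⟩ := ((not_eventually.1 hf0).and_eventually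
    (hf.eventually_analyticAt.and
      (h.eventually_nhds.and (eventually_eventuallyEq_zero_imp hg)))).exists
  refine hgx ?_
  filter_upwards [hx, han.continuousAt.eventually_ne hfx] with y hy hfy
  exact (mul_eq_zero.1 hy).resolve_left hfy

theorem exists_eventuallyEq_zero_of_prod_eq_zero {ι : Type*} {s : Finset ι} {f : ι → E → ℝ}
    (hf : ∀ i ∈ s, AnalyticAt ℝ (f i) 0) (h : ∏ i ∈ s, f i =ᶠ[𝓝 0] 0) :
    ∃ i ∈ s, f i =ᶠ[𝓝 0] 0 := by
  classical
  induction s using Finset.induction_on with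
  | empty => simpa using h.self_of_nhds
  | insert i s hi ih =>
    rw [Finset.prod_insert hi] at h
    simp only [Finset.forall_mem_insert, Finset.exists_mem_insert] at hf ⊢
    exact (eventuallyEq_zero_or_of_mul_eq_zero hf.1 (Finset.analyticAt_prod _ hf.2) h).imp_right
      (ih hf.2)

theorem eventually_eq_zero_of_eventually_smul_eq_zero (hf : AnalyticAt ℝ f 0) :
    ∀ᶠ v in 𝓝 (0 : E), (∀ᶠ t : ℝ in 𝓝 0, f (t • v) = 0) → f v = 0 := by
  obtain ⟨r, hr, hball⟩ := Metric.eventually_nhds_iff_ball.1 hf.eventually_analyticAt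
  filter_upwards [Metric.ball_mem_nhds (0 : E) hr] with v hv h
  have hconv : Convex ℝ ((fun t : ℝ => t • v) ⁻¹' Metric.ball 0 r) :=
    (convex_ball 0 r).is_linear_preimage (IsLinearMap.isLinearMap_smul' v)
  have han : AnalyticOnNhd ℝ (fun t : ℝ => f (t • v)) ((fun t : ℝ => t • v) ⁻¹' Metric.ball 0 r) :=
    fun t ht => (hball _ ht).comp_of_eq (analyticAt_id.smul analyticAt_const) rfl
  simpa using han.eqOn_zero_of_preconnected_of_eventuallyEq_zero hconv.isPreconnected
    (by simpa using hr) h (x := 1) (by simpa using hv)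

end Germ

section Resolution

variable {n : ℕ} {ι : Type}

theorem exists_direction [Finite ι] {f : ι → (Fin (n + 1) → ℝ) → ℝ}
    (hf : ∀ i, AnalyticAt ℝ (f i) 0) (hne : ∀ i, ¬ f i =ᶠ[𝓝 0] 0) :
    ∃ v : Fin (n + 1) → ℝ, v 0 ≠ 0 ∧ ∀ i, ¬ ∀ᶠ t : ℝ in 𝓝 0, f i (t • v) = 0 := by
  cases nonempty_fintype ι
  have hprod : ¬ (fun x => x 0) * ∏ i, f i =ᶠ[𝓝 0] 0 := fun h => by
    obtain h0 | h := eventuallyEq_zero_or_of_mul_eq_zero (analyticAt_apply 0 0)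
      (Finset.analyticAt_prod _ fun i _ => hf i) h
    · obtain ⟨x, hx, hx0⟩ := (frequently_forall_ne_zero.and_eventually h0).exists
      exact hx 0 hx0
    · obtain ⟨i, -, hi⟩ := exists_eventuallyEq_zero_of_prod_eq_zero (fun i _ => hf i) h
      exact hne i hi
  obtain ⟨v, hv, hrad⟩ := ((not_eventually.1 hprod).and_eventually <| eventually_all.2 fun i =>
    eventually_eq_zero_of_eventually_smul_eq_zero (hf i)).exists
  simp only [Pi.mul_apply, Finset.prod_apply, Pi.zero_apply, mul_eq_zero, not_or,
    Finset.prod_eq_zero_iff, Finset.mem_univ, true_and, not_exists] at hv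
  exact ⟨v, hv.1, fun i hi => hv.2 i (hrad i hi)⟩

theorem exists_isLift_direction {v : Fin (n + 1) → ℝ} (hv : v 0 ≠ 0)
    {U : Ultrafilter (Fin (n + 1) → ℝ)} (hU : ↑U ≤ 𝓝 (0 : Fin (n + 1) → ℝ)) :
    ∃ V, IsLift (fun q : (Fin n → ℝ) × ℝ => (tailHeadEquiv n).symm (q.1, 0) + q.2 • v) V U := by
  refine ⟨_, .of_section
    (σ := fun z => ((tailHeadEquiv n (z - (z 0 / v 0) • v)).1, z 0 / v 0)) ?_ ?_ ?_ ?_⟩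
  · refine .add ?_ (analyticAt_snd.smul analyticAt_const)
    exact ((tailHeadEquiv n).symm.toContinuousLinearMap.analyticAt _).comp
      (analyticAt_fst.prod analyticAt_const)
  · simp [← Prod.zero_eq_mk]
  · refine (Continuous.tendsto' ?_ 0 0 (by simp)).mono_left hU
    fun_prop
  · refine .of_forall fun z => ?_
    have h0 : (tailHeadEquiv n (z - (z 0 / v 0) • v)).2 = 0 := by
      simp [tailHeadEquiv_apply, hv]
    have hsymm : (tailHeadEquiv n).symm ((tailHeadEquiv n (z - (z 0 / v 0) • v)).1, 0) =
        z - (z 0 / v 0) • v := by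
      rw [ContinuousLinearEquiv.symm_apply_eq]
      exact Prod.ext rfl h0.symm
    simp only [hsymm, sub_add_cancel]

theorem Monomializable.monomializableAlong_succ [Finite ι] (hn : Monomializable n)
    {f : ι → (Fin (n + 1) → ℝ) → ℝ} (hf : ∀ i, AnalyticAt ℝ (f i) 0)
    (hne : ∀ i, ¬ f i =ᶠ[𝓝 0] 0) {U : Ultrafilter (Fin (n + 1) → ℝ)}
    (hU : ↑U ≤ 𝓝 (0 : Fin (n + 1) → ℝ)) : MonomializableAlong (n + 1) U f := by
  obtain ⟨v, hv0, hv⟩ := exists_direction hf hne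
  obtain ⟨V, hV⟩ := exists_isLift_direction hv0 hU
  set L := fun q : (Fin n → ℝ) × ℝ => (tailHeadEquiv n).symm (q.1, 0) + q.2 • v
  have hL (t : ℝ) : L (0, t) = t • v := by simp [L, ← Prod.zero_eq_mk]
  have horder (i) : ∃ d : ℕ, analyticOrderAt (fun t => (f i ∘ L) (0, t)) 0 = d := by
    obtain ⟨d, hd⟩ := ENat.ne_top_iff_exists.1 (mt analyticOrderAt_eq_top.1 (hv i))
    exact ⟨d, by simpa [hL] using hd.symm⟩
  choose d hd using horder
  exact hV.monomializableAlong (hn.regularMonomializable d (fun _ _ => 1) (fun i => f i ∘ L)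
    (fun _ => analyticAt_const) (fun i => hV.comp_analyticAt (hf i)) hd V hV.le_nhds)
    fun i => .of_forall fun q => (one_mul _).symm

theorem monomializable (n : ℕ) : Monomializable n := by
  intro ι _ f hf U hU
  induction n generalizing ι with
  | zero =>
    refine ⟨id, U, .id hU, fun i => ?_⟩
    obtain h | h := eq_or_ne (f i 0) 0
    · exact .inl (.of_forall fun y => Subsingleton.elim 0 y ▸ h)
    · exact .inr ⟨0, .of_unit (hf i) h⟩
  | succ n ih =>
    obtain ⟨φ, V, hφ, hnc⟩ := Monomializable.monomializableAlong_succ ih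
      (f := fun i : {i // ¬ f i =ᶠ[𝓝 0] 0} => f i) (fun i => hf i) (fun i => i.2) hU
    refine ⟨φ, V, hφ, fun i => ?_⟩
    by_cases hi : f i =ᶠ[𝓝 0] 0
    · exact .inl (hφ.tendsto.eventually hi)
    · exact hnc ⟨i, hi⟩

end Resolution

section Gradient

variable {σ : Type*} [Fintype σ] {α : σ → ℕ} {g : (σ → ℝ) → ℝ}

theorem monom_add_smul_single [DecidableEq σ] (α : σ → ℕ) (y : σ → ℝ) (i : σ) (t : ℝ) :
    monom α (y + t • Pi.single i (y i)) = (1 + t) ^ α i * monom α y := by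
  simp only [monom]
  rw [← Finset.mul_prod_erase _ _ (Finset.mem_univ i),
    ← Finset.mul_prod_erase _ (fun j => y j ^ α j) (Finset.mem_univ i), ← mul_assoc, ← mul_pow]
  congr 1
  · simp only [Pi.add_apply, Pi.smul_apply, Pi.single_eq_same, smul_eq_mul, add_mul, one_mul]
  · refine Finset.prod_congr rfl fun j hj => ?_
    simp [Finset.ne_of_mem_erase hj]

theorem fderiv_monom_single [DecidableEq σ] (α : σ → ℕ) (y : σ → ℝ) (i : σ) :
    fderiv ℝ (monom α) y (Pi.single i (y i)) = α i * monom α y := by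
  have hline : HasLineDerivAt ℝ (monom α) (α i * monom α y) y (Pi.single i (y i)) := by
    simp only [HasLineDerivAt, monom_add_smul_single]
    simpa using (((hasDerivAt_id (0 : ℝ)).const_add 1).pow (α i)).mul_const (monom α y)
  rw [← (analyticAt_monom α y).differentiableAt.lineDeriv_eq_fderiv, hline.lineDeriv]

theorem HasMonomialForm.monom_isBigO (hg : HasMonomialForm α g) : monom α =O[𝓝 0] g := by
  obtain ⟨u, hu, hu0, hgu⟩ := hg
  have h : (fun y => g y * (u y)⁻¹) =O[𝓝 0] g := by
    simpa using (isBigO_refl g _).mul ((hu.continuousAt.inv₀ hu0).tendsto.isBigO_one ℝ)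
  refine h.congr' ?_ .rfl
  filter_upwards [hgu, hu.continuousAt.eventually_ne hu0] with y hy huy
  rw [hy, mul_assoc, mul_inv_cancel₀ huy, mul_one]

theorem HasMonomialForm.isBigO_mul_norm_fderiv (hg : HasMonomialForm α g) {i : σ} (hi : α i ≠ 0) :
    g =O[𝓝 0] fun y => y i * ‖fderiv ℝ g y‖ := by
  classical
  have hmonom := hg.monom_isBigO
  obtain ⟨u, hu, -, hgu⟩ := hg
  have heuler : ∀ᶠ y in 𝓝 0, monom α y * fderiv ℝ u y (Pi.single i (y i)) + α i * g y =
      fderiv ℝ g y (Pi.single i (y i)) := by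
    filter_upwards [hgu.eventually_nhds, hu.eventually_analyticAt] with y hy huy
    rw [EventuallyEq.fderiv_eq hy,
      fderiv_fun_mul (analyticAt_monom α y).differentiableAt huy.differentiableAt]
    simp only [add_apply, smul_apply, smul_eq_mul, fderiv_monom_single, hy.self_of_nhds]
    ring
  have hto : Tendsto (fun y => fderiv ℝ u y (Pi.single i (y i))) (𝓝 0) (𝓝 0) := by
    have hsingle : ContinuousAt (fun y : σ → ℝ => Pi.single (M := fun _ => ℝ) i (y i)) 0 :=
      ((continuous_single i).comp (continuous_apply i)).continuousAt
    simpa using (hu.fderiv.continuousAt.clm_apply hsingle).tendsto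
  have hsmall : (fun y => monom α y * fderiv ℝ u y (Pi.single i (y i))) =o[𝓝 0]
      fun y => α i * g y :=
    (isLittleO_const_mul_right_iff (by exact_mod_cast hi)).2 <| by
      simpa using hmonom.mul_isLittleO ((isLittleO_one_iff ℝ).2 hto)
  have hbig : g =O[𝓝 0] fun y => fderiv ℝ g y (Pi.single i (y i)) :=
    ((isBigO_self_const_mul (by exact_mod_cast hi) g _).trans hsmall.right_isBigO_add).congr'
      .rfl heuler
  refine hbig.trans (.of_bound' (.of_forall fun y => ?_))
  simpa [Pi.norm_single, mul_comm] using (fderiv ℝ g y).le_opNorm (Pi.single i (y i))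

theorem HasMonomialForm.pow_isBigO_mul_pow_norm_fderiv (hg : HasMonomialForm α g) :
    (fun y => g y ^ ∑ i, α i) =O[𝓝 0] fun y => g y * ‖fderiv ℝ g y‖ ^ ∑ i, α i := by
  classical
  have hfactor (i : σ) :
      (fun y => g y ^ α i) =O[𝓝 0] fun y => (y i * ‖fderiv ℝ g y‖) ^ α i := by
    obtain hi | hi := eq_or_ne (α i) 0
    · simpa only [hi, pow_zero] using isBigO_refl _ _
    · exact (hg.isBigO_mul_norm_fderiv hi).pow (α i)
  have hprod := IsBigO.finsetProd (s := Finset.univ) fun i _ => hfactor i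
  simp only [Finset.prod_pow_eq_pow_sum, mul_pow, Finset.prod_mul_distrib] at hprod
  exact hprod.trans (hg.monom_isBigO.mul (isBigO_refl _ _))

theorem IsNormalCrossing.exists_pow_isBigO (hg : IsNormalCrossing g) :
    ∃ k : ℕ, (fun y => g y ^ k) =O[𝓝 0] fun y => g y * ‖fderiv ℝ g y‖ ^ k := by
  obtain hg | ⟨α, hα⟩ := hg
  · refine ⟨1, (isBigO_zero _ _).congr' ?_ .rfl⟩
    filter_upwards [hg] with y hy
    simp [hy]
  · exact ⟨_, hα.pow_isBigO_mul_pow_norm_fderiv⟩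

end Gradient

section Descent

variable {E F : Type*} [NormedAddCommGroup E] [NormedSpace ℝ E] [NormedAddCommGroup F]
  [NormedSpace ℝ F]

theorem IsLift.pow_isBigO_of_comp [CompleteSpace F] {φ : E → F} {V : Ultrafilter E}
    {U : Ultrafilter F} {f : F → ℝ} {k : ℕ} (hφ : IsLift φ V U) (hf : AnalyticAt ℝ f 0)
    (h : (fun z => f (φ z) ^ k) =O[V] fun z => f (φ z) * ‖fderiv ℝ (f ∘ φ) z‖ ^ k) :
    (fun x => f x ^ k) =O[U] fun x => f x * ‖fderiv ℝ f x‖ ^ k := by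
  have hchain : ∀ᶠ z in V, fderiv ℝ (f ∘ φ) z = (fderiv ℝ f (φ z)).comp (fderiv ℝ φ z) := by
    refine hφ.le_nhds ?_
    filter_upwards [hφ.tendsto.eventually hf.eventually_analyticAt,
      hφ.analyticAt.eventually_analyticAt] with z hfz hφz
    exact fderiv_comp z hfz.differentiableAt hφz.differentiableAt
  have hbound : (fun z => fderiv ℝ φ z) =O[V] fun _ => (1 : ℝ) :=
    (hφ.analyticAt.fderiv.continuousAt.tendsto.isBigO_one ℝ).mono hφ.le_nhds
  have hnorm : (fun z => ‖fderiv ℝ (f ∘ φ) z‖) =O[V] fun z => ‖fderiv ℝ f (φ z)‖ := by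
    have hmul : (fun z => ‖fderiv ℝ f (φ z)‖ * ‖fderiv ℝ φ z‖) =O[V]
        fun z => ‖fderiv ℝ f (φ z)‖ := by
      simpa only [mul_one] using (isBigO_refl _ _).mul hbound.norm_left
    refine (IsBigO.of_bound' ?_).trans hmul
    filter_upwards [hchain] with z hz
    rw [hz, norm_norm, norm_mul, norm_norm, norm_norm]
    exact ContinuousLinearMap.opNorm_comp_le _ _
  rw [← hφ.map_eq, Ultrafilter.coe_map, isBigO_map]
  exact h.trans ((isBigO_refl _ _).mul (hnorm.pow k))

theorem eventually_rpow_le_of_pow_isBigO {ι : Type*} {l : Filter ι} {f D : ι → ℝ} {k : ℕ}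
    (hf : Tendsto f l (𝓝 0)) (hD : ∀ x, 0 ≤ D x) (hk : k ≠ 0)
    (h : (fun x => f x ^ k) =O[l] fun x => f x * D x ^ k) :
    ∀ᶠ x in l, |f x| ^ (k / (k + 1) : ℝ) ≤ D x := by
  obtain ⟨C, hC⟩ := h.bound
  have hsmall : ∀ᶠ x in l, C * |f x| ^ (1 / (k + 1) : ℝ) ≤ 1 := by
    have hto : Tendsto (fun x => C * |f x| ^ (1 / (k + 1) : ℝ)) l (𝓝 0) := by
      have hexp : (0 : ℝ) < 1 / (k + 1) := by positivity
      simpa only [abs_zero, Real.zero_rpow hexp.ne', mul_zero] using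
        (hf.abs.rpow_const (.inr hexp.le)).const_mul C
    exact hto.eventually_le_const one_pos
  filter_upwards [hC, hsmall] with x hx hCx
  have hkβ : (k : ℝ) / (k + 1) ≠ 0 := by positivity
  obtain h0 | hpos := (abs_nonneg (f x)).eq_or_lt
  · rw [← h0, Real.zero_rpow hkβ]
    exact hD x
  refine (pow_le_pow_iff_left₀ (by positivity) (hD x) hk).1 ?_
  refine le_of_mul_le_mul_left ?_ hpos
  calc |f x| * (|f x| ^ (k / (k + 1) : ℝ)) ^ k
      = |f x| ^ k * |f x| ^ (1 / (k + 1) : ℝ) := by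
        rw [← Real.rpow_natCast, ← Real.rpow_natCast, ← Real.rpow_mul hpos.le,
          ← Real.rpow_one_add' hpos.le (by positivity), ← Real.rpow_add hpos]
        congr 1
        field_simp
        ring
    _ ≤ C * (|f x| * D x ^ k) * |f x| ^ (1 / (k + 1) : ℝ) := by
        gcongr
        simpa [abs_of_nonneg (hD x)] using hx
    _ = |f x| * D x ^ k * (C * |f x| ^ (1 / (k + 1) : ℝ)) := by ring
    _ ≤ |f x| * D x ^ k := mul_le_of_le_one_right (by have := hD x; positivity) hCx

end Descent

section Compactness

theorem exists_eventually_of_forall_ultrafilter {α ι : Type*} [Preorder ι] [IsDirectedOrder ι]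
    [Nonempty ι] {l : Filter α} {p : ι → α → Prop} (hp : ∀ x, Monotone (p · x))
    (h : ∀ U : Ultrafilter α, ↑U ≤ l → ∃ i, ∀ᶠ x in U, p i x) : ∃ i, ∀ᶠ x in l, p i x := by
  by_contra! hl
  have hne : NeBot (⨅ i, l ⊓ 𝓟 {x | ¬ p i x}) := by
    refine iInf_neBot_of_directed' (Antitone.directed_ge fun i j hij => ?_) fun i => ?_
    · exact inf_le_inf_left _ (principal_mono.2 fun x => mt (hp x hij))
    · exact frequently_mem_iff_neBot.1 (hl i)
  have hU (i) : ↑(Ultrafilter.of (⨅ i, l ⊓ 𝓟 {x | ¬ p i x})) ≤ l ⊓ 𝓟 {x | ¬ p i x} :=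
    (Ultrafilter.of_le _).trans (iInf_le _ i)
  obtain ⟨i, hi⟩ := h _ ((hU (Classical.arbitrary ι)).trans inf_le_left)
  exact Ultrafilter.eventually_not.1 (le_principal_iff.1 ((hU i).trans inf_le_right)) hi

end Compactness

section Inequality

variable {E : Type*} [NormedAddCommGroup E] [NormedSpace ℝ E] [FiniteDimensional ℝ E] {f : E → ℝ}

theorem exists_pow_isBigO_ultrafilter (hf : AnalyticAt ℝ f 0) {U : Ultrafilter E}
    (hU : ↑U ≤ 𝓝 (0 : E)) :
    ∃ k : ℕ, (fun x => f x ^ k) =O[U] fun x => f x * ‖fderiv ℝ f x‖ ^ k := by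
  have e : (Fin (Module.finrank ℝ E) → ℝ) ≃L[ℝ] E := .ofFinrankEq (by simp)
  have he := IsLift.of_continuousLinearEquiv e hU
  obtain ⟨φ, V, hφ, hnc⟩ := he.monomializableAlong (f := fun _ : Unit => f)
    (monomializable _ Unit (fun _ => f ∘ e) (fun _ => he.comp_analyticAt hf) _ he.le_nhds)
    fun _ => .rfl
  obtain ⟨k, hk⟩ := (hnc ()).exists_pow_isBigO
  have := FiniteDimensional.complete ℝ E
  exact ⟨k, hφ.pow_isBigO_of_comp hf (hk.mono hφ.le_nhds)⟩

theorem exists_eventually_rpow_le_norm_fderiv_ultrafilter (hf : AnalyticAt ℝ f 0) (hf0 : f 0 = 0)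
    {U : Ultrafilter E} (hU : ↑U ≤ 𝓝 (0 : E)) :
    ∃ β ∈ Set.Ioo (0 : ℝ) 1, ∀ᶠ x in U, |f x| ^ β ≤ ‖fderiv ℝ f x‖ := by
  have hto : Tendsto f U (𝓝 0) := (hf0 ▸ hf.continuousAt.tendsto).mono_left hU
  obtain ⟨k, hk⟩ := exists_pow_isBigO_ultrafilter hf hU
  have hk0 : k ≠ 0 := by
    rintro rfl
    have hone : (fun _ : E => (1 : ℝ)) =o[U] fun _ => (1 : ℝ) := by
      simpa only [pow_zero, mul_one] using
        hk.trans_isLittleO (by simpa using (isLittleO_one_iff ℝ).2 hto)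
    exact isLittleO_irrefl (.of_forall fun _ => one_ne_zero) hone
  refine ⟨k / (k + 1), ⟨by positivity, ?_⟩,
    eventually_rpow_le_of_pow_isBigO hto (fun _ => norm_nonneg _) hk0 hk⟩
  exact (div_lt_one (by positivity)).2 (lt_add_one _)

theorem exists_eventually_rpow_le_norm_fderiv (hf : AnalyticAt ℝ f 0) (hf0 : f 0 = 0) :
    ∃ β ∈ Set.Ioo (0 : ℝ) 1, ∀ᶠ x in 𝓝 0, |f x| ^ β ≤ ‖fderiv ℝ f x‖ := by
  have hle1 : ∀ᶠ x in 𝓝 0, |f x| ≤ 1 :=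
    hf.continuousAt.abs.eventually_le_const (by simp [hf0])
  have : Nonempty (Set.Ioo (0 : ℝ) 1) := Set.nonempty_Ioo_subtype one_pos
  have hmono (x : E) : Monotone fun β : Set.Ioo (0 : ℝ) 1 =>
      |f x| ≤ 1 ∧ |f x| ^ (β : ℝ) ≤ ‖fderiv ℝ f x‖ := fun β γ hβγ hx =>
    ⟨hx.1, (Real.rpow_le_rpow_of_exponent_ge' (abs_nonneg _) hx.1 β.2.1.le hβγ).trans hx.2⟩
  obtain ⟨β, hβ⟩ := exists_eventually_of_forall_ultrafilter (l := 𝓝 0) hmono fun U hU => by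
    obtain ⟨β, hβ, hβU⟩ := exists_eventually_rpow_le_norm_fderiv_ultrafilter hf hf0 hU
    exact ⟨⟨β, hβ⟩, (hle1.filter_mono hU).and hβU⟩
  exact ⟨β, β.2, hβ.mono fun x hx => hx.2⟩

theorem mul_le_rpow_of_mul_rpow_le {C a b β p : ℝ} (hC : 0 ≤ C) (ha : 0 ≤ a) (hb : 0 ≤ b)
    (hp : 1 < p) (h : C * a ^ β ≤ b) : C ^ (p - 1) * a ^ ((p - 1) * β) * b ≤ b ^ p := by
  calc C ^ (p - 1) * a ^ ((p - 1) * β) * b = (C * a ^ β) ^ (p - 1) * b := by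
        rw [Real.mul_rpow hC (by positivity), ← Real.rpow_mul ha, mul_comm β]
    _ ≤ b ^ (p - 1) * b := by gcongr
    _ = b ^ p := by rw [← Real.rpow_add_one' hb (by linarith), sub_add_cancel]

end Inequality

end Lojasiewicz

theorem stmt19_general {E : Type*} [NormedAddCommGroup E] [NormedSpace ℝ E]
    [FiniteDimensional ℝ E] {f : E → ℝ} {x₀ : E} (hf : AnalyticAt ℝ f x₀) :
    ∃ V : Set E, IsOpen V ∧ x₀ ∈ V ∧ ∃ C > (0 : ℝ), ∃ β ∈ Set.Ioo (0 : ℝ) 1,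
      (∀ x ∈ V, ‖fderiv ℝ f x‖ ≥ C * |f x - f x₀| ^ β) ∧
      ∀ p : ℝ, 1 < p → ∀ x ∈ V,
        ‖fderiv ℝ f x‖ ^ p ≥
          C ^ (p - 1) * |f x - f x₀| ^ ((p - 1) * β) * ‖fderiv ℝ f x‖ := by
  have hg : AnalyticAt ℝ (fun x => f (x + x₀) - f x₀) 0 :=
    (hf.comp_of_eq (analyticAt_id.add analyticAt_const) (zero_add x₀)).sub analyticAt_const
  obtain ⟨β, hβ, hgβ⟩ := Lojasiewicz.exists_eventually_rpow_le_norm_fderiv hg (by simp)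
  have hfβ : ∀ᶠ x in 𝓝 x₀, 1 * |f x - f x₀| ^ β ≤ ‖fderiv ℝ f x‖ := by
    have hsub : Tendsto (fun x => x - x₀) (𝓝 x₀) (𝓝 0) :=
      (continuous_id.sub continuous_const).tendsto' _ _ (sub_self x₀)
    simpa [fderiv_sub_const, fderiv_comp_add_right] using hsub.eventually hgβ
  obtain ⟨V, hV, hVo, hxV⟩ := eventually_nhds_iff.1 hfβ
  exact ⟨V, hVo, hxV, 1, one_pos, β, hβ, hV, fun p hp x hx =>
    Lojasiewicz.mul_le_rpow_of_mul_rpow_le zero_le_one (abs_nonneg _) (norm_nonneg _) hp (hV x hx)⟩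

/-- Łojasiewicz gradient inequality: if `f` is real-analytic near `0 ∈ ℝⁿ` with `f(0) = 0`,
there exist a neighborhood `V` of `0`, `C > 0` and `β ∈ (0,1)` with
`‖∇f(x)‖ ≥ C |f x|^β` on `V`; consequently for `p > 1`,
`‖∇f(x)‖^p ≥ C^{p-1} |f x|^{(p-1)β} ‖∇f(x)‖` on `V`. -/
theorem stmt19 {n : ℕ} (f : EuclideanSpace ℝ (Fin n) → ℝ)
    (hf : AnalyticAt ℝ f 0) (hf0 : f 0 = 0) :
    ∃ V : Set (EuclideanSpace ℝ (Fin n)), IsOpen V ∧ (0 : EuclideanSpace ℝ (Fin n)) ∈ V ∧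
      ∃ C > (0:ℝ), ∃ β ∈ Set.Ioo (0:ℝ) 1,
        (∀ x ∈ V, ‖fderiv ℝ f x‖ ≥ C * |f x| ^ β) ∧
        ∀ p : ℝ, 1 < p → ∀ x ∈ V,
          ‖fderiv ℝ f x‖ ^ p
            ≥ C ^ (p - 1) * |f x| ^ ((p - 1) * β) * ‖fderiv ℝ f x‖ := by
  simpa only [hf0, sub_zero] using stmt19_general hf
end
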